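/- arXiv:1403.7342 — 2 statements merged into one kernel-verified Lean document; each statement's English description precedes it below -/
import Mathlib

section
/- Let x ∈ ℚ_P and let N ∈ ℕ. Then there exist β, γ ∈ P⁻¹ℤ with γ > 0 and ℓ(γ) ≤ N such that d(γ·x, ι(β)) ≤ M/N, where M = max{p_1, …, p_r} and γ·x denotes coordinatewise multiplication of x by (the image of) γ. -/
open MeasureTheory Filter Set

noncomputable section

/-- Borel measurable structure on `ℚ_[q]`. -/
instance (q : ℕ) [Fact q.Prime] : MeasurableSpace ℚ_[q] := borel _
instance (q : ℕ) [Fact q.Prime] : BorelSpace ℚ_[q] := ⟨rfl⟩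

/-- The normalized Haar measure on `ℚ_[q]`, giving the unit ball `ℤ_[q]` measure 1. -/
def padicHaar (q : ℕ) [Fact q.Prime] : Measure ℚ_[q] :=
  Measure.addHaarMeasure
    ⟨⟨Metric.closedBall 0 1, isCompact_closedBall 0 1⟩,
      ⟨0, mem_interior_iff_mem_nhds.2 (Metric.closedBall_mem_nhds 0 one_pos)⟩⟩

variable (r : ℕ) (p : Fin r → ℕ) [∀ i, Fact (p i).Prime]

/-- The space `ℚ_P = ℝ × ℚ_{p_1} × ⋯ × ℚ_{p_r}`. -/
abbrev QP : Type := ℝ × ((i : Fin r) → ℚ_[p i])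

/-- `P⁻¹ℤ = { n p_1^{ν_1} ⋯ p_r^{ν_r} : n, ν_i ∈ ℤ }`, as a set of rationals. -/
def PinvZ : Set ℚ :=
  {q : ℚ | ∃ (n : ℤ) (ν : Fin r → ℤ), q = (n : ℚ) * ∏ i, (p i : ℚ) ^ (ν i)}

/-- The diagonal embedding `ι : ℚ → ℚ_P`. -/
def iota (q : ℚ) : QP r p := ((q : ℝ), fun i => (q : ℚ_[p i]))

/-- Coordinatewise multiplication of `x ∈ ℚ_P` by a rational number `γ`. -/
def smulQ (γ : ℚ) (x : QP r p) : QP r p :=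
  ((γ : ℝ) * x.1, fun i => (γ : ℚ_[p i]) * x.2 i)

/-- The distance `d(x,y) = max_{p ∈ P} |x_p - y_p|_p` on `ℚ_P`. -/
def dP (x y : QP r p) : ℝ :=
  max |x.1 - y.1| (⨆ i, ‖x.2 i - y.2 i‖)

/-- The level `ℓ(γ) = max_{p ∈ P} |γ|_p` of a rational number `γ`. -/
def lev (γ : ℚ) : ℝ :=
  max |(γ : ℝ)| (⨆ i, ‖(γ : ℚ_[p i])‖)

/-- `L(γ) = max_{p ∈ P} (|γ|_∞ |γ|_{p_1} ⋯ |γ|_{p_r}) / |γ|_p` (which equals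
`max_{p ∈ P} n/|γ|_p` for `γ = n p_1^{ν_1} ⋯ p_r^{ν_r}` with `n ∈ ℕ` coprime to the `p i`). -/
def LP (γ : ℚ) : ℝ :=
  max ((|(γ : ℝ)| * ∏ i, ‖(γ : ℚ_[p i])‖) / |(γ : ℝ)|)
    (⨆ i, (|(γ : ℝ)| * ∏ j, ‖(γ : ℚ_[p j])‖) / ‖(γ : ℚ_[p i])‖)

/-- The fundamental domain `ℤ_P = [0,1) × ℤ_{p_1} × ⋯ × ℤ_{p_r}`. -/
def ZP : Set (QP r p) :=
  {x : QP r p | x.1 ∈ Set.Ico (0 : ℝ) 1 ∧ ∀ i, ‖x.2 i‖ ≤ 1}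

/-- The measure `λ` on `ℚ_P`: the product of Lebesgue measure on `ℝ` and the
normalized Haar measures on the `ℚ_{p_i}`. -/
def lamP : Measure (QP r p) :=
  (volume : Measure ℝ).prod (Measure.pi fun i => padicHaar (p i))

/-- Two elements of `P⁻¹ℤ` are coprime if they admit decompositions
`β = m p_1^{μ_1} ⋯ p_r^{μ_r}`, `γ = n p_1^{ν_1} ⋯ p_r^{ν_r}` with `m, n` coprime to all the
`p i` and `gcd(m,n) = 1`. -/
def CoprimePair (β γ : ℚ) : Prop :=
  ∃ (m n : ℤ) (μ ν : Fin r → ℤ),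
    β = (m : ℚ) * ∏ i, (p i : ℚ) ^ (μ i) ∧
    γ = (n : ℚ) * ∏ i, (p i : ℚ) ^ (ν i) ∧
    (∀ i, ¬ ((p i : ℤ) ∣ m)) ∧ (∀ i, ¬ ((p i : ℤ) ∣ n)) ∧ IsCoprime m n

/-- For nonzero `γ = n p_1^{ν_1} ⋯ p_r^{ν_r} ∈ P⁻¹ℤ` with `n ∈ ℕ` coprime to the `p i`,
`unitPart γ = n`: the positive integer obtained from `γ` by removing all powers of the `p i`. -/
def unitPart (γ : ℚ) : ℕ :=
  (γ.num.natAbs * γ.den) / ∏ i, (p i) ^ ((γ.num.natAbs * γ.den).factorization (p i))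

/-- The summand `φ(n) ψ(γ)^{r+1} / n`, where `γ = n p_1^{ν_1} ⋯ p_r^{ν_r}` with `n ∈ ℕ`
coprime to the `p i` and `φ` is Euler's totient function. -/
def dsWeight (ψ : ℚ → ℝ) (γ : ℚ) : ℝ :=
  (Nat.totient (unitPart r p γ) : ℝ) * ψ γ ^ (r + 1) / (unitPart r p γ : ℝ)

/-- The set `𝒜(ψ)` of `x ∈ ℤ_P` such that `d(γ·x, ι(β)) < ψ(γ)` for infinitely many coprime
pairs `β, γ ∈ P⁻¹ℤ`. -/
def Apsi (ψ : ℚ → ℝ) : Set (QP r p) :=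
  {x : QP r p | x ∈ ZP r p ∧
    {bg : ℚ × ℚ | bg.1 ∈ PinvZ r p ∧ bg.2 ∈ PinvZ r p ∧ CoprimePair r p bg.1 bg.2 ∧
      dP r p (smulQ r p bg.2 x) (iota r p bg.1) < ψ bg.2}.Infinite}

/-- The set `ℰ(ψ)` of `x ∈ ℤ_P` such that `d(γ·x, ι(β)) ≤ ψ(γ)` for infinitely many coprime
pairs `β, γ ∈ P⁻¹ℤ`. -/
def Epsi (ψ : ℚ → ℝ) : Set (QP r p) :=
  {x : QP r p | x ∈ ZP r p ∧
    {bg : ℚ × ℚ | bg.1 ∈ PinvZ r p ∧ bg.2 ∈ PinvZ r p ∧ CoprimePair r p bg.1 bg.2 ∧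
      dP r p (smulQ r p bg.2 x) (iota r p bg.1) ≤ ψ bg.2}.Infinite}

/-- The union of boxes
`⋃_{a=1, (a,m)=1}^{m} B_∞(a/m, ρ/(m p_1^{μ_1} ⋯ p_r^{μ_r})) × ∏_i B_{p_i}(a/m, p_i^{μ_i} ρ)`,
associated to `β = m p_1^{μ_1} ⋯ p_r^{μ_r}` and radius parameter `ρ = ψ(β)`. -/
def Abox (m : ℕ) (μ : Fin r → ℤ) (ρ : ℝ) : Set (QP r p) :=
  ⋃ a ∈ Finset.filter (fun a => Nat.Coprime a m) (Finset.Icc 1 m),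
    {x : QP r p |
      x.1 ∈ Metric.ball ((a : ℝ) / (m : ℝ)) (ρ / ((m : ℝ) * ∏ i, (p i : ℝ) ^ (μ i))) ∧
      ∀ i, x.2 i ∈ Metric.ball ((((a : ℚ) / (m : ℚ)) : ℚ_[p i])) ((p i : ℝ) ^ (μ i) * ρ)}

/-- A box in `ℚ_P`: a product of a ball from each of the constituent spaces. -/
def IsBox (S : Set (QP r p)) : Prop :=
  ∃ (c : ℝ) (ρ : ℝ) (cp : (i : Fin r) → ℚ_[p i]) (ρp : Fin r → ℝ),
    S = {x : QP r p | x.1 ∈ Metric.ball c ρ ∧ ∀ i, x.2 i ∈ Metric.ball (cp i) (ρp i)}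

end

/-!
Two facts about `P⁻¹ℤ` carry the argument. It is a ring, and every `y ∈ ∏ ℚ_{p_i}` is congruent
to an element of `P⁻¹ℤ` modulo `∏ ℤ_{p_i}`: subtracting the `p_j`-adic fractional part of `y_j`
for every `j` moves `y` into `∏ ℤ_{p_i}`, since this part is a `p_i`-adic integer at all `i ≠ j`.
Every `y ∈ ℚ_P` is therefore integral at the finite places after translation by `P⁻¹ℤ`, so that
the classical theorem of Dirichlet at the real place alone yields an integer multiplier `g`. The
product formula lets one trade size between the places: for monomials `D = ∏ p_i ^ k_i` and
`E = ∏ p_i ^ l_i`, applying this to `x / (D E)` and multiplying the error by `E` gives the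
multiplier `γ = g / D`.
-/

theorem exists_int_int_abs_mul_sub_lt (ξ : ℝ) {Q : ℝ} (hQ : 1 ≤ Q) :
    ∃ c g : ℤ, 0 < g ∧ (g : ℝ) ≤ Q ∧ |g * ξ - c| < 1 / Q := by
  obtain ⟨c, g, g_pos, g_le, error_le⟩ :=
    Real.exists_int_int_abs_mul_sub_le ξ (Nat.floor_pos.mpr hQ)
  have Q_pos : 0 < Q := one_pos.trans_le hQ
  refine ⟨c, g, g_pos, ?_, error_le.trans_lt ?_⟩
  · calc (g : ℝ) ≤ ⌊Q⌋₊ := mod_cast g_le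
      _ ≤ Q := Nat.floor_le Q_pos.le
  · exact one_div_lt_one_div_of_lt Q_pos (Nat.lt_floor_add_one Q)

theorem zpow_neg_log_le_div {q : ℕ} (hq : 1 < q) {T : ℝ} (hT : 0 < T) :
    (q : ℝ) ^ (-Int.log q T) ≤ q / T := by
  have q_pos : (0 : ℝ) < q := mod_cast one_pos.trans hq
  rw [zpow_neg, inv_le_iff_one_le_mul₀ (by positivity), div_mul_eq_mul_div, one_le_div hT,
    ← zpow_one_add₀ q_pos.ne', add_comm]
  exact (Int.lt_zpow_succ_log_self hq T).le

theorem exists_norm_sub_natCast_div_pow_le_one {q : ℕ} [Fact q.Prime] (y : ℚ_[q]) :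
    ∃ n m : ℕ, ‖y - n / (q : ℚ_[q]) ^ m‖ ≤ 1 := by
  have one_lt_q : (1 : ℝ) < q := mod_cast (Fact.out : q.Prime).one_lt
  have q_ne_zero : (q : ℚ_[q]) ≠ 0 := mod_cast (Fact.out : q.Prime).ne_zero
  obtain ⟨m, norm_lt⟩ := pow_unbounded_of_one_lt ‖y‖ one_lt_q
  have norm_q_pow : ‖(q : ℚ_[q]) ^ m‖ = ((q : ℝ) ^ m)⁻¹ := by rw [norm_pow, Padic.norm_p, inv_pow]
  have q_pow_pos : (0 : ℝ) < (q : ℝ) ^ m := by positivity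
  obtain ⟨z, z_eq⟩ : ∃ z : ℤ_[q], (z : ℚ_[q]) = (q : ℚ_[q]) ^ m * y := by
    refine ⟨⟨(q : ℚ_[q]) ^ m * y, ?_⟩, rfl⟩
    rw [norm_mul, norm_q_pow, inv_mul_le_one₀ q_pow_pos]
    exact norm_lt.le
  obtain ⟨n, dist_lt⟩ := PadicInt.denseRange_natCast.exists_dist_lt z (inv_pos.mpr q_pow_pos)
  have norm_sub_lt : ‖(q : ℚ_[q]) ^ m * y - n‖ < ((q : ℝ) ^ m)⁻¹ := by
    rwa [dist_eq_norm, PadicInt.norm_def, PadicInt.coe_sub, PadicInt.coe_natCast, z_eq] at dist_lt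
  refine ⟨n, m, ?_⟩
  rw [show y - n / (q : ℚ_[q]) ^ m = ((q : ℚ_[q]) ^ m * y - n) / (q : ℚ_[q]) ^ m by field_simp,
    norm_div, norm_q_pow]
  exact div_le_one_of_le₀ norm_sub_lt.le (by positivity)

theorem norm_natCast_eq_one_of_prime_of_ne {q q' : ℕ} [Fact q.Prime] [Fact q'.Prime]
    (hne : q ≠ q') : ‖(q' : ℚ_[q])‖ = 1 := by
  rwa [Padic.norm_natCast_eq_one_iff, Nat.coprime_primes Fact.out Fact.out]

section PrimeMonomial

variable {ι : Type*} [Fintype ι] {p : ι → ℕ}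

variable (p) in
/-- The monomial `∏ p_i ^ k_i`, a positive unit of `P⁻¹ℤ` whose `p_i`-adic sizes are
prescribed by the integer exponents `k`. -/
def primeMonomial (k : ι → ℤ) : ℚ := ∏ i, (p i : ℚ) ^ k i

theorem primeMonomial_pos [∀ i, NeZero (p i)] (k : ι → ℤ) : 0 < primeMonomial p k :=
  Finset.prod_pos fun i _ => zpow_pos (mod_cast NeZero.pos (p i)) _

theorem one_le_primeMonomial [∀ i, NeZero (p i)] {k : ι → ℤ} (hk : 0 ≤ k) :
    1 ≤ primeMonomial p k :=
  Finset.one_le_prod fun i _ => one_le_zpow₀ (mod_cast NeZero.one_le) (hk i)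

theorem norm_primeMonomial [∀ i, Fact (p i).Prime] (hinj : Function.Injective p)
    (k : ι → ℤ) (i : ι) :
    ‖(primeMonomial p k : ℚ_[p i])‖ = (p i : ℝ) ^ (-k i) := by
  push_cast [primeMonomial]
  rw [norm_prod, Fintype.prod_eq_single i fun j hji => by
      rw [norm_zpow, norm_natCast_eq_one_of_prime_of_ne (hinj.ne hji.symm), one_zpow],
    Padic.norm_p_zpow]

end PrimeMonomial

section PinvZ

variable {r : ℕ} {p : Fin r → ℕ} [∀ i, NeZero (p i)]

theorem mem_PinvZ_iff {q : ℚ} :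
    q ∈ PinvZ r p ↔ ∃ (n : ℤ) (m : ℕ), q * ((∏ i, p i : ℕ) : ℚ) ^ m = n := by
  have p_ne_zero (i : Fin r) : (p i : ℚ) ≠ 0 := mod_cast NeZero.ne (p i)
  constructor
  · rintro ⟨n, ν, rfl⟩
    let m := Finset.univ.sup fun i => (-ν i).toNat
    have exponent_eq (i : Fin r) : ν i + m = (ν i + m).toNat := by
      have : (-ν i).toNat ≤ m := Finset.le_sup (f := fun i => (-ν i).toNat) (Finset.mem_univ i)
      omega
    refine ⟨n * ∏ i, (p i : ℤ) ^ (ν i + m).toNat, m, ?_⟩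
    push_cast
    rw [mul_assoc, ← Finset.prod_pow, ← Finset.prod_mul_distrib]
    congr! 2 with i
    rw [← zpow_natCast, ← zpow_add₀ (p_ne_zero i), exponent_eq, zpow_natCast, Int.toNat_natCast]
  · rintro ⟨n, m, h⟩
    refine ⟨n, fun _ => -m, ?_⟩
    push_cast at h
    have : ∏ i, (p i : ℚ) ≠ 0 := Finset.prod_ne_zero_iff.mpr fun i _ => p_ne_zero i
    rw [Finset.prod_zpow, ← h, zpow_neg, zpow_natCast, mul_inv_cancel_right₀ (pow_ne_zero m this)]

variable (r p) in
/-- The ring `P⁻¹ℤ = ℤ[1/p_1, …, 1/p_r]`, that is, the set `PinvZ r p` as a subring of `ℚ`. -/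
def PinvZ.subring : Subring ℚ where
  carrier := PinvZ r p
  zero_mem' := ⟨0, 0, by simp⟩
  one_mem' := ⟨1, 0, by simp⟩
  neg_mem' := by
    rintro _ ⟨n, ν, rfl⟩
    exact ⟨-n, ν, by push_cast; ring⟩
  add_mem' := by
    intro a b ha hb
    obtain ⟨n, m, ha⟩ := mem_PinvZ_iff.mp ha
    obtain ⟨n', m', hb⟩ := mem_PinvZ_iff.mp hb
    refine mem_PinvZ_iff.mpr ⟨n * (∏ i, p i : ℕ) ^ m' + n' * (∏ i, p i : ℕ) ^ m, m + m', ?_⟩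
    push_cast at ha hb ⊢
    rw [← ha, ← hb]
    ring
  mul_mem' := by
    intro a b ha hb
    obtain ⟨n, m, ha⟩ := mem_PinvZ_iff.mp ha
    obtain ⟨n', m', hb⟩ := mem_PinvZ_iff.mp hb
    refine mem_PinvZ_iff.mpr ⟨n * n', m + m', ?_⟩
    rw [Int.cast_mul, ← ha, ← hb]
    ring

theorem PinvZ.primeMonomial_mem (k : Fin r → ℤ) : primeMonomial p k ∈ PinvZ.subring r p :=
  ⟨1, k, by rw [Int.cast_one, one_mul, primeMonomial]⟩

theorem PinvZ.inv_pow_mem (i : Fin r) (m : ℕ) : ((p i : ℚ) ^ m)⁻¹ ∈ PinvZ.subring r p := by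
  convert! primeMonomial_mem (p := p) (Pi.single i (-m : ℤ))
  rw [primeMonomial,
    Fintype.prod_eq_single i fun j hji => by rw [Pi.single_eq_of_ne hji, zpow_zero],
    Pi.single_eq_same, zpow_neg, zpow_natCast]

end PinvZ

section Dirichlet

variable {r : ℕ} {p : Fin r → ℕ} [∀ i, Fact (p i).Prime]

theorem exists_mem_PinvZ_forall_norm_sub_le_one (hinj : Function.Injective p)
    (y : ∀ i, ℚ_[p i]) : ∃ b ∈ PinvZ.subring r p, ∀ i, ‖y i - (b : ℚ_[p i])‖ ≤ 1 := by
  choose n m fractional_part using fun i => exists_norm_sub_natCast_div_pow_le_one (y i)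
  let a (j : Fin r) : ℚ := n j / (p j : ℚ) ^ m j
  have integral_of_ne {i j : Fin r} (hij : i ≠ j) : (a j : ℚ_[p i]) ∈ PadicInt.subring (p i) := by
    rw [PadicInt.mem_subring_iff]
    push_cast [a]
    rw [norm_div, norm_pow, norm_natCast_eq_one_of_prime_of_ne (hinj.ne hij), one_pow,
      div_one]
    exact IsUltrametricDist.norm_natCast_le_one ℚ_[p i] (n j)
  refine ⟨∑ j, a j, sum_mem fun j _ =>
    mul_mem (natCast_mem _ (n j)) (PinvZ.inv_pow_mem j (m j)), fun i => ?_⟩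
  have sub_sum_eq : y i - (∑ j, a j : ℚ) =
      (y i - (a i : ℚ_[p i])) - ∑ j ∈ Finset.univ.erase i, (a j : ℚ_[p i]) := by
    rw [sub_sub, Finset.add_sum_erase _ (fun j => (a j : ℚ_[p i])) (Finset.mem_univ i),
      Rat.cast_sum]
  have integral_at_i : y i - (a i : ℚ_[p i]) ∈ PadicInt.subring (p i) := by
    simpa [a] using fractional_part i
  rw [sub_sum_eq, ← PadicInt.mem_subring_iff]
  exact sub_mem integral_at_i
    (sum_mem fun j hj => integral_of_ne (Finset.ne_of_mem_erase hj).symm)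

theorem exists_int_mul_sub_PinvZ (hinj : Function.Injective p) (y : QP r p) {Q : ℝ}
    (hQ : 1 ≤ Q) :
    ∃ g : ℤ, 0 < g ∧ (g : ℝ) ≤ Q ∧ ∃ β ∈ PinvZ.subring r p,
      |g * y.1 - β| < 1 / Q ∧ ∀ i, ‖g * y.2 i - (β : ℚ_[p i])‖ ≤ 1 := by
  obtain ⟨b, b_mem, norm_sub_le⟩ := exists_mem_PinvZ_forall_norm_sub_le_one hinj y.2
  obtain ⟨c, g, g_pos, g_le, error_lt⟩ := exists_int_int_abs_mul_sub_lt (y.1 - b) hQ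
  refine ⟨g, g_pos, g_le, g * b + c,
    add_mem (mul_mem (intCast_mem _ g) b_mem) (intCast_mem _ c), ?_, fun i => ?_⟩
  · convert! error_lt using 2
    push_cast
    ring
  · have error_eq : g * y.2 i - ((g * b + c : ℚ) : ℚ_[p i]) = g * (y.2 i - b) - c := by
      push_cast
      ring
    rw [error_eq, ← PadicInt.mem_subring_iff]
    exact sub_mem (mul_mem (intCast_mem _ g) (norm_sub_le i)) (intCast_mem _ c)

theorem weighted_diagonal_dirichlet (hinj : Function.Injective p) (x : QP r p)
    (k l : Fin r → ℤ) {T : ℝ} (hT : 1 ≤ T * primeMonomial p k) :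
    ∃ β ∈ PinvZ r p, ∃ γ ∈ PinvZ r p, 0 < γ ∧
      (γ : ℝ) ≤ T ∧ (∀ i, ‖(γ : ℚ_[p i])‖ ≤ (p i : ℝ) ^ k i) ∧
      |γ * x.1 - β| < primeMonomial p l / (T * primeMonomial p k) ∧
      ∀ i, ‖γ * x.2 i - (β : ℚ_[p i])‖ ≤ (p i : ℝ) ^ (-l i) := by
  let D := primeMonomial p k
  let E := primeMonomial p l
  have D_pos : 0 < D := primeMonomial_pos k
  have E_pos : 0 < E := primeMonomial_pos l
  obtain ⟨g, g_pos, g_le, β, β_mem, real_error, padic_error⟩ :=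
    exists_int_mul_sub_PinvZ hinj (smulQ r p (D * E)⁻¹ x) hT
  have rescale {K : Type} [Field K] [CharZero K] (t : K) :
      ((g / D : ℚ) : K) * t - ((E * β : ℚ) : K) = E * (g * (((D * E)⁻¹ : ℚ) * t) - β) := by
    have : (D : K) ≠ 0 := mod_cast D_pos.ne'
    have : (E : K) ≠ 0 := mod_cast E_pos.ne'
    push_cast
    field_simp
  refine ⟨E * β, mul_mem (PinvZ.primeMonomial_mem l) β_mem, g / D, ⟨g, -k, ?_⟩,
    div_pos (mod_cast g_pos) D_pos, ?_, fun i => ?_, ?_, fun i => ?_⟩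
  · simp only [D, primeMonomial, div_eq_mul_inv, Pi.neg_apply, zpow_neg, Finset.prod_inv_distrib]
  · push_cast
    exact (div_le_iff₀ (mod_cast D_pos)).mpr g_le
  · push_cast
    rw [norm_div, norm_primeMonomial hinj, zpow_neg, div_inv_eq_mul]
    exact mul_le_of_le_one_left (by positivity) (Padic.norm_int_le_one g)
  · have E_pos' : (0 : ℝ) < E := mod_cast E_pos
    rw [rescale, abs_mul, abs_of_pos E_pos', ← mul_one_div]
    exact mul_lt_mul_of_pos_left real_error E_pos'
  · rw [rescale, norm_mul, norm_primeMonomial hinj]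
    exact mul_le_of_le_one_right (by positivity) (padic_error i)

theorem diagonal_dirichlet_general (r : ℕ) (hr : 0 < r) (p : Fin r → ℕ)
    [∀ i, Fact (p i).Prime] (hinj : Function.Injective p)
    (x : QP r p) (T : ℝ) (hT : 1 ≤ T) :
    ∃ β ∈ PinvZ r p, ∃ γ ∈ PinvZ r p, 0 < γ ∧ lev r p γ ≤ T ∧
      dP r p (smulQ r p γ x) (iota r p β) ≤ ((Finset.univ.sup p : ℕ) : ℝ) / T := by
  have T_pos : 0 < T := one_pos.trans_le hT
  have one_lt_p (i : Fin r) : 1 < p i := (Fact.out : (p i).Prime).one_lt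
  have p_le_sup (i : Fin r) : p i ≤ Finset.univ.sup p := Finset.le_sup (Finset.mem_univ i)
  have one_le_sup : 1 ≤ Finset.univ.sup p := (one_lt_p ⟨0, hr⟩).le.trans (p_le_sup ⟨0, hr⟩)
  let k (i : Fin r) : ℤ := Int.log (p i) T
  have one_le_monomial : (1 : ℝ) ≤ primeMonomial p k := mod_cast
    one_le_primeMonomial fun i => by simp [k, Int.log_of_one_le_right _ hT]
  obtain ⟨β, β_mem, γ, γ_mem, γ_pos, real_level, padic_level, real_error, padic_error⟩ :=
    weighted_diagonal_dirichlet hinj x k k (one_le_mul_of_one_le_of_one_le hT one_le_monomial)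
  refine ⟨β, β_mem, γ, γ_mem, γ_pos, max_le ?_ (Real.iSup_le (fun i => ?_) T_pos.le),
    max_le ?_ (Real.iSup_le (fun i => ?_) (by positivity))⟩
  · rwa [abs_of_pos (mod_cast γ_pos)]
  · exact (padic_level i).trans (Int.zpow_log_le_self (one_lt_p i) T_pos)
  · rw [div_mul_cancel_right₀ (one_pos.trans_le one_le_monomial).ne'] at real_error
    calc |γ * x.1 - β| ≤ T⁻¹ := real_error.le
      _ ≤ (Finset.univ.sup p : ℕ) / T := by
        rw [← one_div]
        gcongr
        exact mod_cast one_le_sup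
  · calc ‖γ * x.2 i - (β : ℚ_[p i])‖ ≤ (p i : ℝ) ^ (-k i) := padic_error i
      _ ≤ p i / T := zpow_neg_log_le_div (one_lt_p i) T_pos
      _ ≤ (Finset.univ.sup p : ℕ) / T := by
        gcongr
        exact p_le_sup i

end Dirichlet

/-- **Dirichlet's theorem in the diagonal setting.**
For any `x ∈ ℚ_P` and `N ∈ ℕ`, there exist `β, γ ∈ P⁻¹ℤ` with `γ > 0` and `ℓ(γ) ≤ N`
such that `d(γ·x, ι(β)) ≤ M/N`, where `M = max {p_1, …, p_r}`. -/
theorem diagonal_dirichlet (r : ℕ) (hr : 0 < r) (p : Fin r → ℕ)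
    [∀ i, Fact (p i).Prime] (hinj : Function.Injective p)
    (x : QP r p) (N : ℕ) (hN : 0 < N) :
    ∃ β ∈ PinvZ r p, ∃ γ ∈ PinvZ r p, 0 < γ ∧ lev r p γ ≤ (N : ℝ) ∧
      dP r p (smulQ r p γ x) (iota r p β) ≤ ((Finset.univ.sup p : ℕ) : ℝ) / (N : ℝ) :=
  diagonal_dirichlet_general r hr p hinj x N (mod_cast hN)
end

section
/- Let ψ : P⁻¹ℤ → ℝ_{≥0} satisfy ψ(γ) ≤ 1/(2 L(γ)) for all γ. If Σ_{γ ∈ P⁻¹ℤ} φ(n) ψ(γ)^{r+1} / n = ∞ (where γ = n p_1^{ν_1} ⋯ p_r^{ν_r} and φ is Euler's totient function) and limsup_{N → ∞} ( Σ_{ℓ(γ) ≤ N} φ(n) ψ(γ)^{r+1} / n ) / ( Σ_{ℓ(γ) ≤ N} ψ(γ)^{r+1} ) > 0, then the set 𝒜(ψ) = { x ∈ ℤ_P : d(γ·x, ι(β)) < ψ(γ) for infinitely many coprime pairs β, γ ∈ P⁻¹ℤ } has measure λ(𝒜(ψ)) = 1. -/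
open MeasureTheory Filter Set

/-!
Dividing by `γ`, the set `𝒜(ψ)` contains the limsup of the sets `ℤ_P ∩ A γ`, where `A γ` is an
`ι(P⁻¹ℤ)`-periodic union of boxes centred at the reduced fractions `a / n`. Along a suitable
sequence of `γ` this limsup is shown to have positive measure, and then full measure.

*Zero–one law.* Let `E` be the limsup of the `A γ`, and suppose that a prime `q` outside `P` divides
none of the `n`. Multiplication by `q ^ k` induces a measure-preserving map of `ℚ_P / ι(P⁻¹ℤ)` and
sends reduced fractions to reduced fractions with the same denominator, so by Cassels' lemma (a
constant dilation of the radii does not change a limsup of shrinking balls up to null sets) `E` is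
almost invariant under it. Hence `E` is almost invariant under the translations by `ι(q⁻ᵏ P⁻¹ℤ)`,
which are dense in `ℚ_P`, and is therefore null or conull.

*Positivity.* When `φ(n) ≥ c n`, the measure of `ℤ_P ∩ A γ` is at least a constant multiple of
`ψ(γ)^(r+1)`. Counting the pairs of fractions `a / n ≠ b / n'` whose boxes meet bounds the overlap
of `A γ` and `A γ'` by a constant multiple of the product of these masses; the pairs
`a / n = b / n'` occur only for `n = n'`, and their contribution decays geometrically in the
difference of the exponents `ν`. The divergence Borel–Cantelli lemma then applies.

*Selection.* The limsup hypothesis allows one to discard all `γ` with `φ(n) < c n` while keeping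
the sum of `ψ(γ)^(r+1)` divergent. If `φ(n) ≥ c n`, then `n` cannot be divisible by all primes of a
large finite set, so a pigeonhole argument provides `q`. For each `n` the `γ` with that `n` have
finite total mass, so finitely many of them may be kept and `n` tends to infinity.
-/

namespace DuffinSchaeffer

open Topology Pointwise
open scoped ENNReal

section ErgodicTranslations

variable {G : Type*} [AddCommGroup G] [TopologicalSpace G] [IsTopologicalAddGroup G]
  [LocallyCompactSpace G] [T2Space G] [MeasurableSpace G] [BorelSpace G]
  {μ : Measure G} [μ.IsAddLeftInvariant] [IsFiniteMeasureOnCompacts μ] [μ.InnerRegular]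
  {E : Set G}

/- Were a compact `K ⊆ E` of positive measure carried into `Eᶜ` by `g`, then for `d` close to `g`
stabilising `E` the set `(g - d) + K` would be a.e. disjoint from `K`, although `K` is almost
invariant under small translations. -/
lemma measure_preimage_add_compl_inter_eq_zero (hE : MeasurableSet E)
    (hd : Dense {g : G | (g + ·) ⁻¹' E =ᵐ[μ] E}) (g : G) :
    μ ((g + ·) ⁻¹' Eᶜ ∩ E) = 0 := by
  by_contra hne
  obtain ⟨K, hKs, hK, hK0⟩ := MeasurableSet.exists_lt_isCompact
    (((continuous_const_add g).measurable hE.compl).inter hE) (pos_iff_ne_zero.2 hne)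
  have hsmall : ∀ᶠ h in 𝓝 (0 : G), μ ((h +ᵥ K) \ K) < μ K :=
    (tendsto_measure_vadd_sdiff_isCompact_isClosed hK hK.isClosed).eventually (gt_mem_nhds hK0)
  have hsub : Tendsto (fun d : G => g - d) (𝓝 g) (𝓝 0) := by
    simpa using (tendsto_const_nhds (x := g) (f := 𝓝 g)).sub tendsto_id
  obtain ⟨d, hdE, hdK⟩ := hd.inter_nhds_nonempty (hsub.eventually hsmall)
  have hinter : μ (((g - d) +ᵥ K) ∩ K) = 0 := by
    refine measure_mono_null ?_ (ae_iff.1 (eventuallyEq_set.1 hdE))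
    rintro _ ⟨⟨k, hk, rfl⟩, hy⟩ hiff
    have hmem := hiff.2 (hKs hy).2
    simp only [mem_preimage, vadd_eq_add] at hmem
    rw [show d + (g - d + k) = g + k by abel] at hmem
    exact (hKs hk).1 hmem
  have hdK : μ (((g - d) +ᵥ K) \ K) < μ K := hdK
  rw [measure_sdiff_null' hinter, measure_vadd] at hdK
  exact lt_irrefl _ hdK

lemma eventuallyConst_of_dense_translations [SFinite μ] [MeasurableAdd₂ G]
    (hE : MeasurableSet E) (hd : Dense {g : G | (g + ·) ⁻¹' E =ᵐ[μ] E}) :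
    EventuallyConst E (ae μ) := by
  have hnull := measure_preimage_add_compl_inter_eq_zero hE hd
  refine aeconst_of_forall_preimage_vadd_ae_eq G hE.nullMeasurableSet fun g => ?_
  refine (ae_le_set.2 ?_).antisymm (ae_le_set.2 ?_)
  · have h := hnull (-g)
    rw [← measure_preimage_add μ g] at h
    convert h using 2
    ext x
    simp [and_comm]
  · convert hnull g using 2
    ext x
    simp [and_comm]

end ErgodicTranslations

section PadicBalls

variable (q : ℕ) [hq : Fact q.Prime]

instance : (padicHaar q).IsAddHaarMeasure := by
  unfold padicHaar; infer_instance

lemma padicHaar_closedBall_one : padicHaar q (Metric.closedBall 0 1) = 1 :=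
  Measure.addHaarMeasure_self

lemma padic_closedBall_one_eq_biUnion (k : ℕ) :
    Metric.closedBall (0 : ℚ_[q]) 1 =
      ⋃ j ∈ Finset.range (q ^ k), Metric.closedBall (j : ℚ_[q]) ((q : ℝ) ^ (-(k : ℤ))) := by
  have hle : (q : ℝ) ^ (-(k : ℤ)) ≤ 1 := by
    rw [zpow_neg, zpow_natCast]
    exact inv_le_one_of_one_le₀ (one_le_pow₀ (by exact_mod_cast hq.out.one_lt.le))
  apply subset_antisymm
  · intro x hx
    have hx : ‖x‖ ≤ 1 := by simpa using hx
    have happr := (PadicInt.norm_le_pow_iff_mem_span_pow _ _).2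
      (PadicInt.appr_spec k (⟨x, hx⟩ : ℤ_[q]))
    refine mem_iUnion₂.2 ⟨PadicInt.appr ⟨x, hx⟩ k, Finset.mem_range.2 (PadicInt.appr_lt _ _), ?_⟩
    rw [mem_closedBall_iff_norm]
    exact happr
  · refine iUnion₂_subset fun j _ => ?_
    have hj : (j : ℚ_[q]) ∈ Metric.closedBall (0 : ℚ_[q]) 1 := by
      simpa using Padic.norm_int_le_one (p := q) (j : ℤ)
    rw [IsUltrametricDist.closedBall_eq_of_mem hj]
    exact Metric.closedBall_subset_closedBall hle

lemma padic_closedBall_natCast_pairwiseDisjoint (k : ℕ) :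
    (Finset.range (q ^ k) : Set ℕ).PairwiseDisjoint
      fun j : ℕ => Metric.closedBall (j : ℚ_[q]) ((q : ℝ) ^ (-(k : ℤ))) := by
  intro i hi j hj hne
  refine (IsUltrametricDist.closedBall_eq_or_disjoint _ _ _).resolve_left fun heq => hne ?_
  have hmem : (i : ℚ_[q]) ∈ Metric.closedBall (j : ℚ_[q]) ((q : ℝ) ^ (-(k : ℤ))) :=
    heq ▸ Metric.mem_closedBall_self (by positivity)
  have hdvd : ((q : ℤ) ^ k) ∣ (i : ℤ) - j := by
    rw [← Padic.norm_int_le_pow_iff_dvd]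
    simpa only [Int.cast_sub, Int.cast_natCast, mem_closedBall_iff_norm] using hmem
  simp only [Finset.coe_range, mem_Iio] at hi hj
  have hi' : (i : ℤ) < (q : ℤ) ^ k := by exact_mod_cast hi
  have hj' : (j : ℤ) < (q : ℤ) ^ k := by exact_mod_cast hj
  have := Int.eq_zero_of_abs_lt_dvd hdvd (abs_lt.2 ⟨by omega, by omega⟩)
  omega

lemma padicHaar_closedBall (x : ℚ_[q]) (k : ℕ) :
    padicHaar q (Metric.closedBall x ((q : ℝ) ^ (-(k : ℤ)))) = ((q : ℝ≥0∞) ^ k)⁻¹ := by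
  have htranslate (y : ℚ_[q]) : padicHaar q (Metric.closedBall y ((q : ℝ) ^ (-(k : ℤ)))) =
      padicHaar q (Metric.closedBall 0 ((q : ℝ) ^ (-(k : ℤ)))) := by
    rw [← measure_preimage_add (padicHaar q) y, preimage_add_closedBall, sub_self]
  have htotal := padicHaar_closedBall_one q
  rw [padic_closedBall_one_eq_biUnion q k,
    measure_biUnion_finset (padic_closedBall_natCast_pairwiseDisjoint q k)
      fun j _ => Metric.isClosed_closedBall.measurableSet,
    Finset.sum_congr rfl fun (j : ℕ) _ => htranslate j, Finset.sum_const, Finset.card_range,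
    nsmul_eq_mul, Nat.cast_pow, mul_comm] at htotal
  rw [htranslate]
  exact ENNReal.eq_inv_of_mul_eq_one_left htotal

lemma padicHaar_ball_bounds (x : ℚ_[q]) {δ : ℝ} (h0 : 0 < δ) (h1 : δ ≤ 1) :
    ENNReal.ofReal (δ / q) ≤ padicHaar q (Metric.ball x δ) ∧
      padicHaar q (Metric.ball x δ) ≤ ENNReal.ofReal δ := by
  have hq1 : (1 : ℝ) < q := by exact_mod_cast hq.out.one_lt
  have hq0 : (0 : ℝ) < q := by linarith
  obtain ⟨k, hk1, hk2⟩ := exists_nat_pow_near_of_lt_one h0 h1 (inv_pos.2 hq0)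
    (inv_lt_one_of_one_lt₀ hq1)
  have hball : Metric.ball x δ = Metric.closedBall x ((q : ℝ) ^ (-((k + 1 : ℕ) : ℤ))) := by
    ext y
    rw [mem_ball_iff_norm, mem_closedBall_iff_norm]
    constructor
    · intro hy
      have hlt : ‖y - x‖ < (q : ℝ) ^ (-(k : ℤ)) := hy.trans_le (hk2.trans_eq (by simp))
      rw [Padic.norm_lt_pow_iff_norm_le_pow_sub_one] at hlt
      exact hlt.trans_eq (by congr 1; push_cast; ring)
    · intro hy
      exact hy.trans_lt (lt_of_eq_of_lt (by rw [zpow_neg, zpow_natCast, inv_pow]) hk1)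
  have hmeasure : padicHaar q (Metric.ball x δ) = ENNReal.ofReal (((q : ℝ)⁻¹) ^ (k + 1)) := by
    rw [hball, padicHaar_closedBall, inv_pow, ENNReal.ofReal_inv_of_pos (by positivity),
      ENNReal.ofReal_pow hq0.le, ENNReal.ofReal_natCast]
  rw [hmeasure]
  refine ⟨ENNReal.ofReal_le_ofReal ?_, ENNReal.ofReal_le_ofReal hk1.le⟩
  rw [pow_succ, div_eq_mul_inv]
  gcongr

end PadicBalls

section Boxes

variable {r : ℕ} {p : Fin r → ℕ} [∀ i, Fact (p i).Prime]

instance : (lamP r p).IsAddHaarMeasure := by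
  unfold lamP; infer_instance

/-- The box with centre `c`, real radius `δ` and `p_i`-adic radii `η i`. -/
def openBox (c : QP r p) (δ : ℝ) (η : Fin r → ℝ) : Set (QP r p) :=
  Metric.ball c.1 δ ×ˢ univ.pi fun i => Metric.ball (c.2 i) (η i)

lemma mem_openBox {c x : QP r p} {δ : ℝ} {η : Fin r → ℝ} :
    x ∈ openBox c δ η ↔ |x.1 - c.1| < δ ∧ ∀ i, ‖x.2 i - c.2 i‖ < η i := by
  simp [openBox, mem_prod, dist_eq_norm]

lemma isOpen_openBox (c : QP r p) (δ : ℝ) (η : Fin r → ℝ) : IsOpen (openBox c δ η) :=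
  Metric.isOpen_ball.prod (isOpen_set_pi finite_univ fun _ _ => Metric.isOpen_ball)

lemma add_mem_openBox_add {c x : QP r p} {δ : ℝ} {η : Fin r → ℝ} (v : QP r p) :
    x + v ∈ openBox (c + v) δ η ↔ x ∈ openBox c δ η := by
  simp [mem_openBox]

lemma lamP_openBox_bounds (c : QP r p) {δ : ℝ} {η : Fin r → ℝ} (hδ : 0 < δ) (hη0 : ∀ i, 0 < η i)
    (hη1 : ∀ i, η i ≤ 1) :
    ENNReal.ofReal ((2 * δ * ∏ i, η i) / ∏ i, (p i : ℝ)) ≤ lamP r p (openBox c δ η) ∧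
      lamP r p (openBox c δ η) ≤ ENNReal.ofReal (2 * δ * ∏ i, η i) := by
  rw [openBox, lamP, Measure.prod_prod, Measure.pi_pi, Real.volume_ball]
  constructor
  · rw [mul_div_assoc, ENNReal.ofReal_mul (by positivity), ← Finset.prod_div_distrib,
      ENNReal.ofReal_prod_of_nonneg fun i _ => div_nonneg (hη0 i).le (Nat.cast_nonneg _)]
    gcongr with i
    exact (padicHaar_ball_bounds (p i) (c.2 i) (hη0 i) (hη1 i)).1
  · rw [ENNReal.ofReal_mul (p := 2 * δ) (by positivity),
      ENNReal.ofReal_prod_of_nonneg fun i _ => (hη0 i).le]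
    gcongr with i
    exact (padicHaar_ball_bounds (p i) (c.2 i) (hη0 i) (hη1 i)).2

variable (r p) in
/-- The slab `[a, b) × ℤ_{p_1} × ⋯ × ℤ_{p_r}`; for integers `a ≤ b` it consists of `b - a`
translates of `ZP`. -/
def slab (a b : ℝ) : Set (QP r p) :=
  Ico a b ×ˢ univ.pi fun i => Metric.closedBall (0 : ℚ_[p i]) 1

lemma mem_slab {a b : ℝ} {x : QP r p} :
    x ∈ slab r p a b ↔ x.1 ∈ Ico a b ∧ ∀ i, ‖x.2 i‖ ≤ 1 := by
  simp [slab, mem_prod]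

lemma slab_zero_one : slab r p 0 1 = ZP r p :=
  Set.ext fun _ => mem_slab

lemma measurableSet_slab (a b : ℝ) : MeasurableSet (slab r p a b) :=
  measurableSet_Ico.prod (MeasurableSet.univ_pi fun _ => Metric.isClosed_closedBall.measurableSet)

lemma lamP_slab (a b : ℝ) : lamP r p (slab r p a b) = ENNReal.ofReal (b - a) := by
  rw [slab, lamP, Measure.prod_prod, Measure.pi_pi, Real.volume_Ico]
  simp [padicHaar_closedBall_one]

lemma measurableSet_ZP : MeasurableSet (ZP r p) :=
  slab_zero_one (p := p) ▸ measurableSet_slab 0 1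

lemma lamP_ZP : lamP r p (ZP r p) = 1 := by
  rw [← slab_zero_one, lamP_slab, sub_zero, ENNReal.ofReal_one]

end Boxes

section Scaling

variable {r : ℕ} {p : Fin r → ℕ} [∀ i, Fact (p i).Prime]

lemma iota_add (a b : ℚ) : iota r p (a + b) = iota r p a + iota r p b := by
  ext i <;> simp [iota]

lemma norm_natCast_eq_one {q : ℕ} [hq : Fact q.Prime] {n : ℕ} (h : ¬ q ∣ n) :
    ‖(n : ℚ_[q])‖ = 1 :=
  Padic.norm_natCast_eq_one_iff.2 ((Nat.Prime.coprime_iff_not_dvd hq.out).2 h)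

lemma continuous_smulQ (a : ℚ) : Continuous (smulQ r p a) := by
  unfold smulQ; fun_prop

lemma smulQ_smulQ (a b : ℚ) (x : QP r p) : smulQ r p a (smulQ r p b x) = smulQ r p (a * b) x := by
  ext i <;> simp [smulQ, mul_assoc]

lemma one_smulQ (x : QP r p) : smulQ r p 1 x = x := by
  ext i <;> simp [smulQ]

/-- Multiplication by a nonzero rational number, as a topological automorphism of `ℚ_P`. -/
noncomputable def smulEquiv {a : ℚ} (ha : a ≠ 0) : QP r p ≃ₜ+ QP r p where
  toFun := smulQ r p a
  invFun := smulQ r p a⁻¹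
  left_inv x := by rw [smulQ_smulQ, inv_mul_cancel₀ ha, one_smulQ]
  right_inv x := by rw [smulQ_smulQ, mul_inv_cancel₀ ha, one_smulQ]
  map_add' x y := by ext i <;> simp [smulQ, mul_add]
  continuous_toFun := continuous_smulQ a
  continuous_invFun := continuous_smulQ a⁻¹

lemma smulQ_preimage_slab {Q : ℕ} (hQ : Q ≠ 0) (hp : ∀ i, ¬ p i ∣ Q) (a b : ℝ) :
    smulQ r p Q ⁻¹' slab r p (Q * a) (Q * b) = slab r p a b := by
  have hQ0 : (0 : ℝ) < Q := by exact_mod_cast Nat.pos_of_ne_zero hQ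
  ext x
  simp only [mem_preimage, mem_slab, smulQ, Rat.cast_natCast, norm_mul,
    norm_natCast_eq_one (hp _), one_mul, mem_Ico, mul_le_mul_iff_right₀ hQ0,
    mul_lt_mul_iff_right₀ hQ0]

lemma lamP_smulQ_preimage {Q : ℕ} (hQ : Q ≠ 0) (hp : ∀ i, ¬ p i ∣ Q) (A : Set (QP r p)) :
    Q * lamP r p (smulQ r p Q ⁻¹' A) = lamP r p A := by
  set T : QP r p ≃ₜ+ QP r p := smulEquiv (Nat.cast_ne_zero.2 hQ)
  have hscale (B : Set (QP r p)) :
      addEquivAddHaarChar T • lamP r p (smulQ r p Q ⁻¹' B) = lamP r p B :=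
    addEquivAddHaarChar_smul_preimage (lamP r p) T
  have hchar : (addEquivAddHaarChar T : ℝ≥0∞) = Q := by
    have h := hscale (slab r p (Q * 0) (Q * 1))
    rwa [smulQ_preimage_slab hQ hp, lamP_slab, lamP_slab, ENNReal.smul_def, smul_eq_mul,
      sub_zero, mul_one, mul_zero, sub_zero, ENNReal.ofReal_one, mul_one,
      ENNReal.ofReal_natCast] at h
  rw [← hscale A, ENNReal.smul_def, smul_eq_mul, hchar]

lemma add_iota_intCast_mem_slab {a b : ℝ} {x : QP r p} (j : ℤ) :
    x + iota r p j ∈ slab r p (a + j) (b + j) ↔ x ∈ slab r p a b := by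
  have hj (i : Fin r) : ((j : ℚ) : ℚ_[p i]) ∈ Metric.closedBall 0 1 := by
    simpa using Padic.norm_int_le_one (p := p i) j
  have hpadic (i : Fin r) : ‖x.2 i + ((j : ℚ) : ℚ_[p i])‖ ≤ 1 ↔ ‖x.2 i‖ ≤ 1 := by
    rw [← mem_closedBall_zero_iff, IsUltrametricDist.closedBall_eq_of_mem (hj i),
      mem_closedBall_iff_norm, add_sub_cancel_right]
  simp only [mem_slab, iota, Prod.fst_add, Prod.snd_add, Pi.add_apply, hpadic, mem_Ico,
    Rat.cast_intCast (α := ℝ), add_le_add_iff_right, add_lt_add_iff_right]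

lemma lamP_unit_slab_inter {F : Set (QP r p)}
    (hF : ∀ (j : ℤ) (x : QP r p), x + iota r p j ∈ F ↔ x ∈ F) (j : ℤ) :
    lamP r p (slab r p j (j + 1) ∩ F) = lamP r p (ZP r p ∩ F) := by
  rw [← measure_preimage_add_right (lamP r p) (iota r p j)]
  congr 1
  ext x
  have h := add_iota_intCast_mem_slab (a := 0) (b := 1) (x := x) j
  rw [zero_add, add_comm 1, slab_zero_one] at h
  rw [mem_preimage, mem_inter_iff, mem_inter_iff, hF, h]

lemma lamP_slab_natCast_inter {F : Set (QP r p)}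
    (hF : ∀ (j : ℤ) (x : QP r p), x + iota r p j ∈ F ↔ x ∈ F) (hFm : MeasurableSet F) (Q : ℕ) :
    lamP r p (slab r p 0 Q ∩ F) = Q * lamP r p (ZP r p ∩ F) := by
  induction Q with
  | zero => simp [slab]
  | succ Q ih =>
    have hsplit : slab r p 0 (Q + 1 : ℕ) = slab r p 0 Q ∪ slab r p Q (Q + 1) := by
      rw [slab, slab, slab, ← union_prod, Ico_union_Ico_eq_Ico Q.cast_nonneg (by linarith),
        Nat.cast_add_one]
    have hdisj : Disjoint (slab r p 0 Q ∩ F) (slab r p Q (Q + 1) ∩ F) := by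
      refine disjoint_left.2 fun x hx hx' => ?_
      exact (mem_slab.1 hx.1).1.2.not_ge (mem_slab.1 hx'.1).1.1
    have hunit := lamP_unit_slab_inter hF Q
    rw [Int.cast_natCast] at hunit
    rw [hsplit, union_inter_distrib_right,
      measure_union hdisj ((measurableSet_slab _ _).inter hFm), ih, hunit, Nat.cast_add_one,
      add_mul, one_mul]

lemma lamP_ZP_inter_smulQ_preimage {F : Set (QP r p)}
    (hF : ∀ (j : ℤ) (x : QP r p), x + iota r p j ∈ F ↔ x ∈ F) {Q : ℕ} (hQ : Q ≠ 0)
    (hp : ∀ i, ¬ p i ∣ Q) (hFm : MeasurableSet F) :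
    lamP r p (ZP r p ∩ smulQ r p Q ⁻¹' F) = lamP r p (ZP r p ∩ F) := by
  have hslab := smulQ_preimage_slab hQ hp 0 1
  rw [mul_zero, mul_one, slab_zero_one] at hslab
  have h := lamP_smulQ_preimage hQ hp (slab r p 0 Q ∩ F)
  rw [preimage_inter, hslab, lamP_slab_natCast_inter hF hFm] at h
  exact (ENNReal.mul_right_inj (Nat.cast_ne_zero.2 hQ) (ENNReal.natCast_ne_top Q)).1 h

end Scaling

section PinvZ

/-- The product `p_1 ⋯ p_r`, for which `P⁻¹ℤ = ℤ[1 / (p_1 ⋯ p_r)]`. -/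
def primeProd {r : ℕ} (p : Fin r → ℕ) : ℕ := ∏ i, p i

variable {r : ℕ} {p : Fin r → ℕ}

lemma prime_dvd_primeProd (i : Fin r) : p i ∣ primeProd p :=
  Finset.dvd_prod_of_mem p (Finset.mem_univ i)

lemma intCast_mem_PinvZ (j : ℤ) : (j : ℚ) ∈ PinvZ r p :=
  ⟨j, 0, by simp⟩

variable [hp : ∀ i, Fact (p i).Prime]

lemma primeProd_pos : 0 < primeProd p :=
  Finset.prod_pos fun i _ => (hp i).out.pos

lemma norm_primeProd_pos (i : Fin r) : 0 < ‖(primeProd p : ℚ_[p i])‖ :=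
  norm_pos_iff.2 (Nat.cast_ne_zero.2 primeProd_pos.ne')

lemma norm_primeProd_lt_one (i : Fin r) : ‖(primeProd p : ℚ_[p i])‖ < 1 :=
  Padic.norm_natCast_lt_one_iff.2 (prime_dvd_primeProd i)

lemma mem_PinvZ_iff {v : ℚ} :
    v ∈ PinvZ r p ↔ ∃ (l : ℤ) (K : ℕ), v * (primeProd p : ℚ) ^ K = l := by
  have hp0 (i : Fin r) : (p i : ℚ) ≠ 0 := Nat.cast_ne_zero.2 (hp i).out.ne_zero
  have hD0 : (primeProd p : ℚ) ≠ 0 := Nat.cast_ne_zero.2 primeProd_pos.ne'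
  have hpow (K : ℕ) : (primeProd p : ℚ) ^ K = ∏ i, (p i : ℚ) ^ (K : ℤ) := by
    simp [primeProd, Finset.prod_pow]
  constructor
  · rintro ⟨n, ν, rfl⟩
    set K : ℕ := ∑ i, (ν i).natAbs
    have hK (i : Fin r) : 0 ≤ ν i + K := by
      have : (ν i).natAbs ≤ K :=
        Finset.single_le_sum (f := fun i => (ν i).natAbs) (fun _ _ => Nat.zero_le _)
          (Finset.mem_univ i)
      omega
    refine ⟨n * ∏ i, (p i : ℤ) ^ (ν i + K).toNat, K, ?_⟩
    push_cast
    rw [hpow, mul_assoc, ← Finset.prod_mul_distrib]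
    congr 1
    refine Finset.prod_congr rfl fun i _ => ?_
    rw [← zpow_add₀ (hp0 i), ← zpow_natCast, Int.toNat_of_nonneg (hK i)]
  · rintro ⟨l, K, hl⟩
    refine ⟨l, fun _ => -K, ?_⟩
    simp only [zpow_neg]
    rw [Finset.prod_inv_distrib, ← hpow, ← hl, mul_inv_cancel_right₀ (pow_ne_zero K hD0)]

lemma add_mem_PinvZ {v w : ℚ} (hv : v ∈ PinvZ r p) (hw : w ∈ PinvZ r p) : v + w ∈ PinvZ r p := by
  obtain ⟨l, K, hl⟩ := mem_PinvZ_iff.1 hv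
  obtain ⟨m, J, hm⟩ := mem_PinvZ_iff.1 hw
  refine mem_PinvZ_iff.2 ⟨l * primeProd p ^ J + m * primeProd p ^ K, K + J, ?_⟩
  push_cast
  rw [← hl, ← hm]
  ring

lemma mul_mem_PinvZ {v w : ℚ} (hv : v ∈ PinvZ r p) (hw : w ∈ PinvZ r p) : v * w ∈ PinvZ r p := by
  obtain ⟨l, K, hl⟩ := mem_PinvZ_iff.1 hv
  obtain ⟨m, J, hm⟩ := mem_PinvZ_iff.1 hw
  refine mem_PinvZ_iff.2 ⟨l * m, K + J, ?_⟩
  push_cast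
  rw [← hl, ← hm]
  ring

lemma neg_mem_PinvZ {v : ℚ} (hv : v ∈ PinvZ r p) : -v ∈ PinvZ r p := by
  simpa using mul_mem_PinvZ (intCast_mem_PinvZ (-1)) hv

lemma exists_eq_intCast_of_mem_PinvZ {v : ℚ} (hv : v ∈ PinvZ r p)
    (hnorm : ∀ i, ‖(v : ℚ_[p i])‖ ≤ 1) : ∃ j : ℤ, v = j := by
  obtain ⟨l, K, hl⟩ := mem_PinvZ_iff.1 hv
  have hdvd : v.den ∣ primeProd p ^ K := by
    have hv0 : (v.den : ℚ) ≠ 0 := Nat.cast_ne_zero.2 v.den_ne_zero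
    have hmul : v.num * (primeProd p : ℤ) ^ K = l * v.den := by
      rw [← Rat.num_div_den v, div_mul_eq_mul_div, div_eq_iff hv0] at hl
      exact_mod_cast hl
    have hcop : IsCoprime (v.den : ℤ) v.num :=
      (Int.isCoprime_iff_nat_coprime.2 (by simpa using v.reduced)).symm
    exact_mod_cast hcop.dvd_of_dvd_mul_left (Dvd.intro_left l hmul.symm)
  suffices hone : v.den = 1 from ⟨v.num, (Rat.den_eq_one_iff v).1 hone |>.symm⟩
  refine Nat.Coprime.eq_one_of_dvd (Nat.Coprime.pow_right K ?_) hdvd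
  refine Nat.Coprime.prod_right fun i _ => ?_
  have hunit := PadicInt.isUnit_iff.1 (PadicInt.isUnit_den v (hnorm i))
  rw [PadicInt.norm_natCast_eq_one_iff] at hunit
  exact hunit.symm

end PinvZ

section Density

variable {r : ℕ} {p : Fin r → ℕ} [hp : ∀ i, Fact (p i).Prime]

lemma exists_natCast_norm_sub_le (hinj : Function.Injective p) (x : ∀ i, ℤ_[p i]) (M : ℕ) :
    ∃ l : ℕ, ∀ i, ‖x i - l‖ ≤ (p i : ℝ) ^ (-(M : ℤ)) := by
  obtain ⟨l, hl⟩ := Nat.chineseRemainderOfFinset (fun i => PadicInt.appr (x i) M)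
    (fun i => p i ^ M) Finset.univ (fun i _ => pow_ne_zero _ (hp i).out.ne_zero)
    (fun i _ j _ hij => Nat.Coprime.pow _ _
      ((Nat.coprime_primes (hp i).out (hp j).out).2 (hinj.ne hij)))
  refine ⟨l, fun i => ?_⟩
  have hmod : ‖((PadicInt.appr (x i) M : ℤ_[p i]) - l)‖ ≤ (p i : ℝ) ^ (-(M : ℤ)) := by
    have hdvd := Nat.modEq_iff_dvd.1 (hl i (Finset.mem_univ i))
    rw [Nat.cast_pow] at hdvd
    have hle := PadicInt.norm_int_le_pow_iff_dvd.2 hdvd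
    rwa [Int.cast_sub, Int.cast_natCast, Int.cast_natCast] at hle
  have happr := (PadicInt.norm_le_pow_iff_mem_span_pow _ _).2 (PadicInt.appr_spec M (x i))
  rw [← sub_add_sub_cancel _ (PadicInt.appr (x i) M : ℤ_[p i])]
  exact (PadicInt.nonarchimedean _ _).trans (max_le happr hmod)

lemma exists_pow_primeProd_lt {ε : Fin r → ℝ} (hε : ∀ i, 0 < ε i) :
    ∃ K : ℕ, ∀ i, ‖(primeProd p : ℚ_[p i])‖ ^ K < ε i := by
  refine (eventually_all.2 fun i => ?_ : ∀ᶠ K : ℕ in atTop, ∀ i, _).exists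
  exact (tendsto_pow_atTop_nhds_zero_of_lt_one (norm_nonneg _)
    (norm_primeProd_lt_one i)).eventually (gt_mem_nhds (hε i))

lemma exists_mem_PinvZ_norm_sub_lt (hinj : Function.Injective p) (y : ∀ i, ℚ_[p i]) {ε : ℝ}
    (hε : 0 < ε) : ∃ v ∈ PinvZ r p, ∀ i, ‖y i - (v : ℚ_[p i])‖ < ε := by
  have hinv (i : Fin r) : 0 < (‖y i‖ + 1)⁻¹ := by positivity
  obtain ⟨K, hK⟩ := exists_pow_primeProd_lt (p := p) hinv
  have hint (i : Fin r) : ‖(primeProd p : ℚ_[p i]) ^ K * y i‖ ≤ 1 := by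
    rw [norm_mul, norm_pow]
    calc _ ≤ (‖y i‖ + 1)⁻¹ * (‖y i‖ + 1) := by gcongr; exacts [(hK i).le, by linarith]
      _ = 1 := inv_mul_cancel₀ (by positivity)
  have hM : ∀ᶠ M : ℕ in atTop,
      ∀ i, (p i : ℝ) ^ (-(M : ℤ)) < ε * ‖(primeProd p : ℚ_[p i]) ^ K‖ := by
    refine eventually_all.2 fun i => ?_
    have hp1 : (1 : ℝ) < p i := by exact_mod_cast (hp i).out.one_lt
    have hpos := norm_primeProd_pos (p := p) i
    simp_rw [zpow_neg, zpow_natCast, ← inv_pow, norm_pow]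
    exact (tendsto_pow_atTop_nhds_zero_of_lt_one (by positivity)
      (inv_lt_one_of_one_lt₀ hp1)).eventually (gt_mem_nhds (by positivity))
  obtain ⟨M, hM⟩ := hM.exists
  obtain ⟨l, hl⟩ := exists_natCast_norm_sub_le hinj (fun i => ⟨_, hint i⟩) M
  have hD0 : (primeProd p : ℚ) ^ K ≠ 0 := pow_ne_zero K (Nat.cast_ne_zero.2 primeProd_pos.ne')
  refine ⟨l / (primeProd p : ℚ) ^ K,
    mem_PinvZ_iff.2 ⟨l, K, by rw [div_mul_cancel₀ _ hD0, Int.cast_natCast]⟩, fun i => ?_⟩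
  have hDi : (primeProd p : ℚ_[p i]) ^ K ≠ 0 :=
    pow_ne_zero K (norm_pos_iff.1 (norm_primeProd_pos i))
  have hclose : ‖(primeProd p : ℚ_[p i]) ^ K * y i - l‖ < ε * ‖(primeProd p : ℚ_[p i]) ^ K‖ :=
    (hl i).trans_lt (hM i)
  have hfactor : (primeProd p : ℚ_[p i]) ^ K * y i - l =
      (y i - ((l / (primeProd p : ℚ) ^ K : ℚ) : ℚ_[p i])) * (primeProd p : ℚ_[p i]) ^ K := by
    push_cast
    field_simp
  rw [hfactor, norm_mul] at hclose
  exact lt_of_mul_lt_mul_right hclose (norm_nonneg _)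

lemma exists_add_iota_mem_ZP (hinj : Function.Injective p) (y : QP r p) :
    ∃ v ∈ PinvZ r p, y + iota r p v ∈ ZP r p := by
  obtain ⟨w, hw, hyw⟩ := exists_mem_PinvZ_norm_sub_lt hinj y.2 one_pos
  set f : ℤ := ⌊y.1 - w⌋
  refine ⟨-w - f, ?_, ?_, fun i => ?_⟩
  · rw [sub_eq_add_neg]
    exact add_mem_PinvZ (neg_mem_PinvZ hw) (neg_mem_PinvZ (intCast_mem_PinvZ f))
  · have hfract : (y + iota r p (-w - f)).1 = Int.fract (y.1 - w) := by
      simp only [Prod.fst_add, iota, Int.fract, f]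
      push_cast
      ring
    rw [hfract]
    exact ⟨Int.fract_nonneg _, Int.fract_lt_one _⟩
  · have hsplit : (y + iota r p (-w - f)).2 i = (y.2 i - w) + ((-f : ℤ) : ℚ_[p i]) := by
      simp only [Prod.snd_add, Pi.add_apply, iota]
      push_cast
      ring
    rw [hsplit]
    exact (Padic.nonarchimedean _ _).trans (max_le (hyw i).le (Padic.norm_int_le_one _))

lemma exists_pow_primeProd_div_pow_lt {q : ℕ} (hq : 1 < q) (hqp : ∀ i, ¬ p i ∣ q) {ε : ℝ}
    (hε : 0 < ε) :
    ∃ M k : ℕ, (((primeProd p : ℚ) ^ M / (q : ℚ) ^ k : ℚ) : ℝ) < ε ∧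
      ∀ i, ‖(((primeProd p : ℚ) ^ M / (q : ℚ) ^ k : ℚ) : ℚ_[p i])‖ < ε := by
  obtain ⟨M, hM⟩ := exists_pow_primeProd_lt (p := p) fun _ => hε
  have hq1 : (1 : ℝ) < q := by exact_mod_cast hq
  obtain ⟨k, hk⟩ : ∃ k : ℕ, (primeProd p : ℝ) ^ M / (q : ℝ) ^ k < ε :=
    (((tendsto_pow_atTop_atTop_of_one_lt hq1).const_div_atTop _).eventually
      (gt_mem_nhds hε)).exists
  refine ⟨M, k, by push_cast; exact hk, fun i => ?_⟩
  push_cast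
  rw [norm_div, norm_pow, norm_pow, norm_natCast_eq_one (hqp i), one_pow, div_one]
  exact hM i

/- The `p_i`-adic coordinates are matched by some `w ∈ P⁻¹ℤ`; adding a multiple of
`s = (p_1 ⋯ p_r)^M / q^k`, small at every `p_i` and at `∞`, then corrects the real coordinate. -/
lemma dense_iota_PinvZ_div_pow (hinj : Function.Injective p) {q : ℕ} (hq : 1 < q)
    (hqp : ∀ i, ¬ p i ∣ q) :
    Dense {g : QP r p | ∃ v ∈ PinvZ r p, ∃ k : ℕ, g = iota r p (v / (q : ℚ) ^ k)} := by
  refine Metric.dense_iff.2 fun y ε hε => ?_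
  obtain ⟨w, hw, hyw⟩ := exists_mem_PinvZ_norm_sub_lt hinj y.2 hε
  obtain ⟨M, k, hreal_lt, hpadic_lt⟩ := exists_pow_primeProd_div_pow_lt (p := p) hq hqp hε
  set s : ℚ := (primeProd p : ℚ) ^ M / (q : ℚ) ^ k with hs
  have hD0 : (0 : ℚ) < primeProd p := Nat.cast_pos.2 primeProd_pos
  have hq0 : (0 : ℚ) < q := Nat.cast_pos.2 (by omega)
  have hs0 : (0 : ℝ) < s := Rat.cast_pos.2 (by positivity)
  set j : ℤ := ⌊(y.1 - w) / s⌋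
  refine ⟨iota r p (w + j * s), ?_, w * (q ^ k : ℤ) + (j : ℤ) * (primeProd p ^ M : ℤ), ?_, k, ?_⟩
  · rw [Metric.mem_ball, dist_comm, Prod.dist_eq, max_lt_iff, dist_pi_lt_iff hε]
    refine ⟨?_, fun i => ?_⟩
    · have hreal : y.1 - (iota r p (w + j * s)).1 = y.1 - w - j * s := by
        simp only [iota]
        push_cast
        ring
      rw [Real.dist_eq, hreal, abs_of_nonneg (Int.sub_floor_div_mul_nonneg _ hs0)]
      exact (Int.sub_floor_div_mul_lt _ hs0).trans hreal_lt
    · have hpadic : y.2 i - (iota r p (w + j * s)).2 i =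
          (y.2 i - w) + ((-j : ℤ) : ℚ_[p i]) * (s : ℚ_[p i]) := by
        simp only [iota]
        push_cast
        ring
      rw [dist_eq_norm, hpadic]
      refine (Padic.nonarchimedean _ _).trans_lt (max_lt (hyw i) ?_)
      rw [norm_mul]
      exact (mul_le_of_le_one_left (norm_nonneg _) (Padic.norm_int_le_one _)).trans_lt
        (hpadic_lt i)
  · exact add_mem_PinvZ (mul_mem_PinvZ hw (mod_cast intCast_mem_PinvZ (q ^ k)))
      (mul_mem_PinvZ (intCast_mem_PinvZ j) (mod_cast intCast_mem_PinvZ (primeProd p ^ M)))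
  · congr 1
    rw [hs]
    push_cast
    field_simp

end Density

section ApproxUnion

/-- The rationals `b ≡ a / n` modulo `P⁻¹ℤ` with `a` prime to `n`: the numbers by which a point
is approximated at the denominator `n`. -/
def reducedFractions (r : ℕ) (p : Fin r → ℕ) (n : ℕ) : Set ℚ :=
  {b | ∃ a : ℤ, IsCoprime a n ∧ b - a / n ∈ PinvZ r p}

variable {r : ℕ} {p : Fin r → ℕ} [hp : ∀ i, Fact (p i).Prime]

lemma add_mem_reducedFractions {n : ℕ} {b v : ℚ} (hb : b ∈ reducedFractions r p n)
    (hv : v ∈ PinvZ r p) : b + v ∈ reducedFractions r p n := by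
  obtain ⟨a, ha, hba⟩ := hb
  exact ⟨a, ha, by simpa only [sub_add_eq_add_sub] using add_mem_PinvZ hba hv⟩

lemma natCast_mul_mem_reducedFractions {n Q : ℕ} (hQ : Q.Coprime n) {b : ℚ}
    (hb : b ∈ reducedFractions r p n) : Q * b ∈ reducedFractions r p n := by
  obtain ⟨a, ha, hba⟩ := hb
  refine ⟨Q * a, IsCoprime.mul_left (Nat.isCoprime_iff_coprime.2 hQ) ha, ?_⟩
  have hmul := mul_mem_PinvZ (intCast_mem_PinvZ Q) hba
  rwa [mul_sub, ← mul_div_assoc, ← Int.cast_mul, Int.cast_natCast] at hmul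

/-- The points of `ℚ_P` whose real coordinate is within `δ`, and whose `p_i`-adic coordinates are
within `η i`, of a common reduced fraction of denominator `n`. -/
def approxUnion (p : Fin r → ℕ) [∀ i, Fact (p i).Prime] (n : ℕ) (δ : ℝ) (η : Fin r → ℝ) :
    Set (QP r p) :=
  ⋃ b ∈ reducedFractions r p n, openBox (iota r p b) δ η

/-- The set of points lying in `approxUnion p (n k) (δ k) (η k)` for infinitely many `k`. -/
def approxLimsup (p : Fin r → ℕ) [∀ i, Fact (p i).Prime] (n : ℕ → ℕ) (δ : ℕ → ℝ)
    (η : ℕ → Fin r → ℝ) : Set (QP r p) :=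
  limsup (fun k => approxUnion p (n k) (δ k) (η k)) atTop

/-- Invariance of a subset of `ℚ_P` under translations by `ι(P⁻¹ℤ)`. -/
def PinvZInvariant (E : Set (QP r p)) : Prop :=
  ∀ v ∈ PinvZ r p, ∀ x, x + iota r p v ∈ E ↔ x ∈ E

variable {n : ℕ} {δ : ℝ} {η : Fin r → ℝ} {x : QP r p}

lemma mem_approxUnion :
    x ∈ approxUnion p n δ η ↔ ∃ b ∈ reducedFractions r p n, x ∈ openBox (iota r p b) δ η := by
  simp only [approxUnion, mem_iUnion, exists_prop]

lemma measurableSet_approxUnion : MeasurableSet (approxUnion p n δ η) :=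
  (isOpen_biUnion fun _ _ => isOpen_openBox _ _ _).measurableSet

lemma add_iota_mem_approxUnion {v : ℚ} (hv : v ∈ PinvZ r p) (hx : x ∈ approxUnion p n δ η) :
    x + iota r p v ∈ approxUnion p n δ η := by
  obtain ⟨b, hb, hxb⟩ := mem_approxUnion.1 hx
  refine mem_approxUnion.2 ⟨b + v, add_mem_reducedFractions hb hv, ?_⟩
  rw [iota_add]
  exact (add_mem_openBox_add _).2 hxb

lemma smulQ_mem_approxUnion {Q : ℕ} (hQ : Q ≠ 0) (hQp : ∀ i, ¬ p i ∣ Q) (hQn : Q.Coprime n)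
    (hx : x ∈ approxUnion p n δ η) : smulQ r p Q x ∈ approxUnion p n (Q * δ) η := by
  obtain ⟨b, hb, hxb⟩ := mem_approxUnion.1 hx
  obtain ⟨hreal, hpadic⟩ := mem_openBox.1 hxb
  refine mem_approxUnion.2 ⟨Q * b, natCast_mul_mem_reducedFractions hQn hb, mem_openBox.2 ⟨?_, ?_⟩⟩
  · have hQ0 : (0 : ℝ) < Q := Nat.cast_pos.2 (Nat.pos_of_ne_zero hQ)
    simp only [smulQ, iota, Rat.cast_mul, Rat.cast_natCast]
    rw [← mul_sub, abs_mul, Nat.abs_cast]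
    exact mul_lt_mul_of_pos_left hreal hQ0
  · intro i
    simp only [smulQ, iota, Rat.cast_mul, Rat.cast_natCast]
    rw [← mul_sub, norm_mul, norm_natCast_eq_one (hQp i), one_mul]
    exact hpadic i

variable {n : ℕ → ℕ} {δ : ℕ → ℝ} {η : ℕ → Fin r → ℝ}

lemma mem_approxLimsup :
    x ∈ approxLimsup p n δ η ↔ ∃ᶠ k in atTop, x ∈ approxUnion p (n k) (δ k) (η k) := by
  rw [approxLimsup, mem_limsup_iff_frequently_mem]

lemma measurableSet_approxLimsup : MeasurableSet (approxLimsup p n δ η) :=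
  .measurableSet_limsup fun _ => measurableSet_approxUnion

lemma pinvZInvariant_approxLimsup : PinvZInvariant (approxLimsup p n δ η) := by
  intro v hv x
  simp only [mem_approxLimsup]
  refine ⟨fun h => h.mono fun k hk => ?_,
    fun h => h.mono fun k hk => add_iota_mem_approxUnion hv hk⟩
  have hback := add_iota_mem_approxUnion (neg_mem_PinvZ hv) hk
  have hzero : iota r p 0 = 0 := by ext <;> simp [iota]
  rwa [add_assoc, ← iota_add, add_neg_cancel, hzero, add_zero] at hback

/- By Fubini this reduces to the real coordinate, where it is Cassels' lemma on the insensitivity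
of limsup sets of thickenings to a constant dilation of the radii. -/
lemma approxLimsup_const_mul_sdiff_null (hδ : Tendsto δ atTop (𝓝 0)) {C : ℝ} (hC : 0 < C) :
    lamP r p (approxLimsup p n (fun k => C * δ k) η \ approxLimsup p n δ η) = 0 := by
  have hmeas : MeasurableSet (approxLimsup p n (fun k => C * δ k) η \ approxLimsup p n δ η) :=
    measurableSet_approxLimsup.diff measurableSet_approxLimsup
  rw [lamP, Measure.prod_apply_symm hmeas,
    lintegral_eq_zero_iff' (measurable_measure_prodMk_right hmeas).aemeasurable]
  refine ae_of_all _ fun z => ?_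
  set s : ℕ → Set ℝ := fun k =>
    {t | ∃ b ∈ reducedFractions r p (n k), t = b ∧ ∀ i, ‖z i - (b : ℚ_[p i])‖ < η k i} with hs
  have hfiber (δ' : ℕ → ℝ) : (fun t : ℝ => ((t, z) : QP r p)) ⁻¹' approxLimsup p n δ' η =
      limsup (fun k => Metric.thickening (δ' k) (s k)) atTop := by
    ext t
    rw [mem_preimage, mem_approxLimsup, mem_limsup_iff_frequently_mem]
    refine frequently_congr (Eventually.of_forall fun k => ?_)
    simp only [mem_approxUnion, mem_openBox, Metric.mem_thickening_iff, Real.dist_eq, hs, iota]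
    constructor
    · rintro ⟨b, hb, hreal, hpadic⟩
      exact ⟨b, ⟨b, hb, rfl, hpadic⟩, hreal⟩
    · rintro ⟨_, ⟨b, hb, rfl, hpadic⟩, hreal⟩
      exact ⟨b, hb, hreal, hpadic⟩
  have hcassels := blimsup_thickening_mul_ae_eq (volume : Measure ℝ) (fun _ => True) s hC δ hδ
  simp only [blimsup_true, ← hfiber] at hcassels
  exact ae_le_set.1 hcassels.le

lemma approxLimsup_ae_le_smulQ_preimage (hδ : Tendsto δ atTop (𝓝 0)) {Q : ℕ} (hQ : Q ≠ 0)
    (hQp : ∀ i, ¬ p i ∣ Q) (hQn : ∀ k, Q.Coprime (n k)) :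
    approxLimsup p n δ η ≤ᵐ[lamP r p] smulQ r p Q ⁻¹' approxLimsup p n δ η := by
  have hQ0 : (0 : ℝ) < Q := Nat.cast_pos.2 (Nat.pos_of_ne_zero hQ)
  have hnull : lamP r p (smulQ r p Q ⁻¹'
      (approxLimsup p n (fun k => Q * δ k) η \ approxLimsup p n δ η)) = 0 := by
    have hscale := lamP_smulQ_preimage hQ hQp
      (approxLimsup p n (fun k => Q * δ k) η \ approxLimsup p n δ η)
    rw [approxLimsup_const_mul_sdiff_null hδ hQ0] at hscale
    exact (mul_eq_zero.1 hscale).resolve_left (Nat.cast_ne_zero.2 hQ)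
  have hsub : approxLimsup p n δ η ⊆ smulQ r p Q ⁻¹' approxLimsup p n (fun k => Q * δ k) η :=
    fun x hx => mem_approxLimsup.2 ((mem_approxLimsup.1 hx).mono fun k hk =>
      smulQ_mem_approxUnion hQ hQp (hQn k) hk)
  exact ae_le_set.2 (measure_mono_null (sdiff_subset_sdiff_left hsub) hnull)

end ApproxUnion

section ZeroOne

variable {r : ℕ} {p : Fin r → ℕ} [hp : ∀ i, Fact (p i).Prime] {E : Set (QP r p)}

lemma smulQ_add_iota (a b : ℚ) (x : QP r p) :
    smulQ r p a (x + iota r p b) = smulQ r p a x + iota r p (a * b) := by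
  ext <;> simp [smulQ, iota, mul_add]

lemma PinvZInvariant.measure_eq_zero (hinj : Function.Injective p) (hE : PinvZInvariant E)
    (h0 : lamP r p (ZP r p ∩ E) = 0) : lamP r p E = 0 := by
  have hcover : E ⊆ ⋃ v : ℚ, (fun x => x + iota r p v) ⁻¹' (ZP r p ∩ E) := fun y hy => by
    obtain ⟨v, hv, hyv⟩ := exists_add_iota_mem_ZP hinj y
    exact mem_iUnion.2 ⟨v, hyv, (hE v hv y).2 hy⟩
  refine measure_mono_null hcover (measure_iUnion_null fun v => ?_)
  rw [measure_preimage_add_right, h0]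

lemma PinvZInvariant.ae_eq_smulQ_preimage (hinj : Function.Injective p) (hE : PinvZInvariant E)
    (hEm : MeasurableSet E) {Q : ℕ} (hQ : Q ≠ 0) (hQp : ∀ i, ¬ p i ∣ Q)
    (hle : E ≤ᵐ[lamP r p] smulQ r p Q ⁻¹' E) : E =ᵐ[lamP r p] smulQ r p Q ⁻¹' E := by
  refine hle.antisymm (ae_le_set.2 ?_)
  have hinv : PinvZInvariant (smulQ r p Q ⁻¹' E \ E) := fun v hv x => by
    have hQv : (Q : ℚ) * v ∈ PinvZ r p := mul_mem_PinvZ (intCast_mem_PinvZ Q) hv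
    rw [Set.mem_sdiff, Set.mem_sdiff, mem_preimage, mem_preimage, smulQ_add_iota, hE v hv, hE _ hQv]
  refine hinv.measure_eq_zero hinj ?_
  have hmeas : lamP r p (ZP r p ∩ smulQ r p Q ⁻¹' E) = lamP r p (ZP r p ∩ E) :=
    lamP_ZP_inter_smulQ_preimage (fun j => hE j (intCast_mem_PinvZ j)) hQ hQp hEm
  have hfin : lamP r p (ZP r p ∩ smulQ r p Q ⁻¹' E) ≠ ⊤ :=
    ne_top_of_le_ne_top (by simp [lamP_ZP]) (measure_mono inter_subset_left)
  have heq : (ZP r p ∩ E : Set _) =ᵐ[lamP r p] (ZP r p ∩ smulQ r p Q ⁻¹' E : Set _) :=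
    ae_eq_of_ae_subset_of_measure_ge ((EventuallyLE.refl _ _).inter hle) hmeas.le
      (measurableSet_ZP.inter hEm).nullMeasurableSet hfin
  rw [inter_sdiff_distrib_left]
  exact ae_le_set.1 heq.symm.le

lemma PinvZInvariant.measure_ZP_inter_eq_one (hinj : Function.Injective p) (hE : PinvZInvariant E)
    (hEm : MeasurableSet E) {q : ℕ} (hq : 1 < q) (hqp : ∀ i, ¬ p i ∣ q)
    (hle : ∀ k : ℕ, E ≤ᵐ[lamP r p] smulQ r p (q ^ k : ℕ) ⁻¹' E)
    (hpos : lamP r p (ZP r p ∩ E) ≠ 0) : lamP r p (ZP r p ∩ E) = 1 := by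
  have hq0 : (q : ℚ) ≠ 0 := Nat.cast_ne_zero.2 (by omega)
  have hpow (k : ℕ) : E =ᵐ[lamP r p] smulQ r p (q ^ k : ℕ) ⁻¹' E :=
    hE.ae_eq_smulQ_preimage hinj hEm (pow_ne_zero k (by omega))
      (fun i h => hqp i ((hp i).out.dvd_of_dvd_pow h)) (hle k)
  have hconst : EventuallyConst E (ae (lamP r p)) := by
    refine eventuallyConst_of_dense_translations hEm
      ((dense_iota_PinvZ_div_pow hinj hq hqp).mono ?_)
    rintro _ ⟨v, hv, k, rfl⟩
    set g := iota r p (v / (q : ℚ) ^ k)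
    have hfix : (g + ·) ⁻¹' (smulQ r p (q ^ k : ℕ) ⁻¹' E) = smulQ r p (q ^ k : ℕ) ⁻¹' E := by
      ext x
      have hcancel : ((q ^ k : ℕ) : ℚ) * (v / (q : ℚ) ^ k) = v := by
        rw [Nat.cast_pow, mul_div_cancel₀ _ (pow_ne_zero k hq0)]
      rw [mem_preimage, mem_preimage, mem_preimage, add_comm, smulQ_add_iota, hcancel, hE v hv]
    have htrans := (quasiMeasurePreserving_add_left (lamP r p) g).preimage_ae_eq (hpow k)
    rw [hfix] at htrans
    exact htrans.trans (hpow k).symm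
  rcases eventuallyConst_set'.1 hconst with hempty | huniv
  · exact absurd (measure_mono_null inter_subset_right (ae_eq_empty.1 hempty)) hpos
  · have hfull := (ae_eq_refl (μ := lamP r p) (ZP r p)).inter huniv
    rw [inter_univ] at hfull
    rw [measure_congr hfull, lamP_ZP]

theorem lamP_ZP_inter_approxLimsup_eq_one (hinj : Function.Injective p) {n : ℕ → ℕ} {δ : ℕ → ℝ}
    {η : ℕ → Fin r → ℝ} (hδ : Tendsto δ atTop (𝓝 0)) {q : ℕ} (hq : q.Prime)
    (hqp : ∀ i, q ≠ p i) (hqn : ∀ k, ¬ q ∣ n k)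
    (hpos : lamP r p (ZP r p ∩ approxLimsup p n δ η) ≠ 0) :
    lamP r p (ZP r p ∩ approxLimsup p n δ η) = 1 := by
  have hqp' (i : Fin r) : ¬ p i ∣ q := fun h =>
    hqp i ((Nat.prime_dvd_prime_iff_eq (hp i).out hq).1 h).symm
  refine pinvZInvariant_approxLimsup.measure_ZP_inter_eq_one hinj measurableSet_approxLimsup
    hq.one_lt hqp' (fun k => ?_) hpos
  exact approxLimsup_ae_le_smulQ_preimage hδ (pow_ne_zero k hq.ne_zero)
    (fun i h => hqp' i ((hp i).out.dvd_of_dvd_pow h))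
    (fun j => Nat.Coprime.pow_left k ((hq.coprime_iff_not_dvd).2 (hqn j)))

end ZeroOne

section LocalStructure

/-- The residues modulo `n` prime to `n`, represented in `{0, …, n - 1}`. -/
def reducedResidues (n : ℕ) : Finset ℕ := {a ∈ Finset.range n | n.Coprime a}

lemma card_reducedResidues (n : ℕ) : (reducedResidues n).card = n.totient := rfl

lemma mem_reducedResidues {n a : ℕ} : a ∈ reducedResidues n ↔ a < n ∧ n.Coprime a := by
  simp [reducedResidues]

/-- The conditions on a denominator and on radii under which, inside `ℤ_P`, the set `approxUnion`
is a disjoint union of `φ(n)` boxes, one for each `a / n` in lowest terms. -/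
structure IsAdmissible {r : ℕ} (p : Fin r → ℕ) (n : ℕ) (δ : ℝ) (η : Fin r → ℝ) : Prop where
  not_dvd : ∀ i, ¬ p i ∣ n
  two_le : 2 ≤ n
  radius_pos : 0 < δ
  padicRadius_pos : ∀ i, 0 < η i
  radius_le : δ ≤ 1 / (2 * n)
  padicRadius_le_one : ∀ i, η i ≤ 1

namespace IsAdmissible

variable {r : ℕ} {p : Fin r → ℕ} {n : ℕ} {δ : ℝ} {η : Fin r → ℝ}

lemma denom_pos (h : IsAdmissible p n δ η) : (0 : ℝ) < n :=
  Nat.cast_pos.2 (zero_lt_two.trans_le h.two_le)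

lemma abs_mul_sub_lt (h : IsAdmissible p n δ η) {t a : ℝ} (ht : |t - a / n| < δ) :
    |n * t - a| < 1 / 2 := by
  have hn := h.denom_pos
  calc |n * t - a| = n * |t - a / n| := by
        rw [← abs_of_pos hn, ← abs_mul, abs_of_pos hn, mul_sub, mul_div_cancel₀ _ hn.ne']
    _ < n * (1 / (2 * n)) := by gcongr; exact ht.trans_le h.radius_le
    _ = 1 / 2 := by field_simp

lemma mem_reducedResidues_of_abs_sub_lt (h : IsAdmissible p n δ η) {t : ℝ} (ht : t ∈ Ico 0 1)
    {a : ℤ} (ha : IsCoprime a n) (hta : |t - a / n| < δ) : ∃ b ∈ reducedResidues n, a = b := by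
  have hn := h.denom_pos
  have hn2 := h.two_le
  obtain ⟨hlow, hupp⟩ := abs_lt.1 (h.abs_mul_sub_lt hta)
  have hnt0 : 0 ≤ n * t := mul_nonneg hn.le ht.1
  have hnt1 : n * t < n := mul_lt_of_lt_one_right hn ht.2
  have ha0 : -1 < a := by exact_mod_cast (by linarith : (-1 : ℝ) < a)
  have han : a < n + 1 := by exact_mod_cast (by linarith : (a : ℝ) < n + 1)
  have hane : a ≠ n := by
    rintro rfl
    rw [isCoprime_self, Int.isUnit_iff] at ha
    omega
  lift a to ℕ using by omega
  exact ⟨a, mem_reducedResidues.2 ⟨by omega, (Nat.isCoprime_iff_coprime.1 ha).symm⟩, rfl⟩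

lemma mem_Ico_of_abs_sub_lt (h : IsAdmissible p n δ η) {t : ℝ} {a : ℕ}
    (ha : a ∈ reducedResidues n) (hta : |t - a / n| < δ) : t ∈ Ico 0 1 := by
  have hn := h.denom_pos
  have hn2 := h.two_le
  obtain ⟨han, hcop⟩ := mem_reducedResidues.1 ha
  have ha0 : a ≠ 0 := by
    rintro rfl
    rw [Nat.coprime_zero_right] at hcop
    omega
  have ha1 : (1 : ℝ) ≤ a := by exact_mod_cast Nat.one_le_iff_ne_zero.2 ha0
  have han1 : (a : ℝ) + 1 ≤ n := by exact_mod_cast han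
  obtain ⟨hlow, hupp⟩ := abs_lt.1 (h.abs_mul_sub_lt hta)
  exact ⟨(pos_of_mul_pos_right (by linarith : 0 < n * t) hn.le).le,
    (mul_lt_iff_lt_one_right hn).1 (by linarith)⟩

end IsAdmissible

variable {r : ℕ} {p : Fin r → ℕ} [hp : ∀ i, Fact (p i).Prime] {n n' : ℕ} {δ δ' : ℝ}
  {η η' : Fin r → ℝ}

lemma norm_intCast_div_natCast_le_one {q : ℕ} [Fact q.Prime] {n : ℕ} (hn : ¬ q ∣ n) (a : ℤ) :
    ‖(a : ℚ_[q]) / n‖ ≤ 1 := by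
  rw [norm_div, norm_natCast_eq_one hn, div_one]
  exact Padic.norm_int_le_one a

lemma exists_eq_div_of_mem_reducedFractions (hn : ∀ i, ¬ p i ∣ n) (hn0 : n ≠ 0) {b : ℚ}
    (hb : b ∈ reducedFractions r p n) (hb1 : ∀ i, ‖(b : ℚ_[p i])‖ ≤ 1) :
    ∃ a : ℤ, IsCoprime a n ∧ b = a / n := by
  obtain ⟨a, ha, hba⟩ := hb
  obtain ⟨j, hj⟩ := exists_eq_intCast_of_mem_PinvZ hba fun i => by
    push_cast
    rw [sub_eq_add_neg]
    refine (Padic.nonarchimedean _ _).trans (max_le (hb1 i) ?_)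
    rw [norm_neg]
    exact norm_intCast_div_natCast_le_one (hn i) a
  refine ⟨a + j * n, (IsCoprime.add_mul_right_left_iff).2 ha, ?_⟩
  have hnQ : (n : ℚ) ≠ 0 := Nat.cast_ne_zero.2 hn0
  push_cast
  rw [add_div, mul_div_cancel_right₀ _ hnQ, ← hj]
  ring

lemma mem_openBox_div {a : ℕ} {x : QP r p} :
    x ∈ openBox (iota r p (a / n : ℚ)) δ η ↔
      |x.1 - a / n| < δ ∧ ∀ i, ‖x.2 i - (a : ℚ_[p i]) / n‖ < η i := by
  simp only [mem_openBox, iota, Rat.cast_div, Rat.cast_natCast]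

namespace IsAdmissible

lemma ZP_inter_approxUnion (h : IsAdmissible p n δ η) :
    ZP r p ∩ approxUnion p n δ η =
      ⋃ a ∈ reducedResidues n, openBox (iota r p (a / n : ℚ)) δ η := by
  have hn0 : n ≠ 0 := by have := h.two_le; omega
  ext x
  simp only [mem_inter_iff, mem_approxUnion, mem_iUnion, exists_prop]
  constructor
  · rintro ⟨⟨hx0, hx1⟩, b, hb, hxb⟩
    obtain ⟨a, ha, rfl⟩ := exists_eq_div_of_mem_reducedFractions h.not_dvd hn0 hb fun i => by
      have hclose := ((mem_openBox.1 hxb).2 i).le.trans (h.padicRadius_le_one i)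
      have hmax := Padic.nonarchimedean (x.2 i) (-(x.2 i - (b : ℚ_[p i])))
      rw [norm_neg, neg_sub, add_sub_cancel] at hmax
      exact hmax.trans (max_le (hx1 i) hclose)
    have hreal := (mem_openBox.1 hxb).1
    simp only [iota, Rat.cast_div, Rat.cast_intCast, Rat.cast_natCast] at hreal
    obtain ⟨c, hc, rfl⟩ := h.mem_reducedResidues_of_abs_sub_lt hx0 ha hreal
    exact ⟨c, hc, by simpa only [Int.cast_natCast] using hxb⟩
  · rintro ⟨a, ha, hxa⟩
    obtain ⟨hreal, hpadic⟩ := mem_openBox_div.1 hxa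
    refine ⟨⟨h.mem_Ico_of_abs_sub_lt ha hreal, fun i => ?_⟩, (a : ℚ) / n, ⟨a, ?_, ?_⟩, hxa⟩
    · rw [← sub_add_cancel (x.2 i) ((a : ℚ_[p i]) / n)]
      refine (Padic.nonarchimedean _ _).trans (max_le ?_ ?_)
      · exact (hpadic i).le.trans (h.padicRadius_le_one i)
      · simpa only [Int.cast_natCast] using
          norm_intCast_div_natCast_le_one (h.not_dvd i) (a : ℤ)
    · exact Nat.isCoprime_iff_coprime.2 (mem_reducedResidues.1 ha).2.symm
    · simpa using intCast_mem_PinvZ 0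

lemma pairwiseDisjoint_openBox (h : IsAdmissible p n δ η) :
    (reducedResidues n : Set ℕ).PairwiseDisjoint
      fun a => openBox (iota r p (a / n : ℚ)) δ η := by
  intro a _ b _ hab
  refine disjoint_left.2 fun x hxa hxb => hab ?_
  obtain ⟨hal, hau⟩ := abs_lt.1 (h.abs_mul_sub_lt (mem_openBox_div.1 hxa).1)
  obtain ⟨hbl, hbu⟩ := abs_lt.1 (h.abs_mul_sub_lt (mem_openBox_div.1 hxb).1)
  have hlt : a < b + 1 := by exact_mod_cast (by linarith : (a : ℝ) < b + 1)
  have hgt : b < a + 1 := by exact_mod_cast (by linarith : (b : ℝ) < a + 1)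
  omega

lemma le_lamP_ZP_inter_approxUnion (h : IsAdmissible p n δ η) :
    ENNReal.ofReal (n.totient * ((2 * δ * ∏ i, η i) / ∏ i, (p i : ℝ))) ≤
      lamP r p (ZP r p ∩ approxUnion p n δ η) := by
  rw [h.ZP_inter_approxUnion, measure_biUnion_finset h.pairwiseDisjoint_openBox
      fun a _ => (isOpen_openBox _ _ _).measurableSet,
    ENNReal.ofReal_mul (Nat.cast_nonneg _), ENNReal.ofReal_natCast, ← card_reducedResidues,
    ← nsmul_eq_mul]
  exact Finset.card_nsmul_le_sum _ _ _ fun a _ =>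
    (lamP_openBox_bounds _ h.radius_pos h.padicRadius_pos h.padicRadius_le_one).1

lemma lamP_openBox_inter_le (h : IsAdmissible p n δ η) (h' : IsAdmissible p n' δ' η')
    (c c' : QP r p) :
    lamP r p (openBox c δ η ∩ openBox c' δ' η') ≤
      ENNReal.ofReal (2 * min δ δ' * ∏ i, min (η i) (η' i)) := by
  set d : QP r p := ⟨if δ ≤ δ' then c.1 else c'.1, fun i => if η i ≤ η' i then c.2 i else c'.2 i⟩
  have hsub : openBox c δ η ∩ openBox c' δ' η' ⊆
      openBox d (min δ δ') fun i => min (η i) (η' i) := by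
    rintro x ⟨hx, hx'⟩
    rw [mem_openBox] at hx hx' ⊢
    simp only [d, min_def]
    exact ⟨by split_ifs; exacts [hx.1, hx'.1],
      fun i => by split_ifs; exacts [hx.2 i, hx'.2 i]⟩
  refine (measure_mono hsub).trans (lamP_openBox_bounds d ?_ (fun i => ?_) fun i => ?_).2
  · exact lt_min h.radius_pos h'.radius_pos
  · exact lt_min (h.padicRadius_pos i) (h'.padicRadius_pos i)
  · exact (min_le_left _ _).trans (h.padicRadius_le_one i)

end IsAdmissible

end LocalStructure

section PairCounting

lemma eq_and_eq_of_crossDiff_eq {n n' a b c d : ℕ} (hn : 0 < n)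
    (h : (a : ℤ) * n' - b * n = c * n' - d * n)
    (hdiv : a / (n / n.gcd n') = c / (n / n.gcd n')) : a = c ∧ b = d := by
  have hmod : c * n' ≡ a * n' [MOD n] := by
    refine Nat.modEq_iff_dvd.2 ⟨b - d, ?_⟩
    push_cast
    linarith
  have hac : a = c := by
    rw [← Nat.div_add_mod a (n / n.gcd n'), ← Nat.div_add_mod c (n / n.gcd n'), hdiv,
      (hmod.cancel_right_div_gcd hn).symm]
  subst hac
  have hbd : (b : ℤ) * n = d * n := by linarith
  exact ⟨rfl, Nat.eq_of_mul_eq_mul_right hn (by exact_mod_cast hbd)⟩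

lemma ediv_mem_erase_Icc_floor {m : ℕ} (hm : 0 < m) {d : ℤ} {R : ℝ} (hdvd : (m : ℤ) ∣ d)
    (hd : d ≠ 0) (hR : |(d : ℝ)| < R) :
    d / m ∈ (Finset.Icc (-(⌊R / m⌋₊ : ℤ)) ⌊R / m⌋₊).erase 0 := by
  obtain ⟨j, rfl⟩ := hdvd
  have hm' : (0 : ℝ) < m := Nat.cast_pos.2 hm
  have hj : j.natAbs ≤ ⌊R / m⌋₊ := by
    refine Nat.le_floor ?_
    rw [Nat.cast_natAbs, Int.cast_abs, le_div_iff₀ hm', mul_comm, ← abs_of_pos hm', ← abs_mul]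
    exact_mod_cast hR.le
  rw [Int.mul_ediv_cancel_left _ (Nat.cast_ne_zero.2 hm.ne'), Finset.mem_erase, Finset.mem_Icc]
  exact ⟨right_ne_zero_of_mul hd, by omega⟩

/- A pair is determined by the multiple `a n' - b n` of `gcd (n, n') Q` together with the quotient
of `a` by `n / gcd (n, n')`, which takes at most `gcd (n, n')` values. -/
lemma card_crossDiff_le {n n' Q : ℕ} (hn : 0 < n) (hQ : 0 < Q) (hQn : Q.Coprime n) {R : ℝ}
    (hR : 0 ≤ R) (T : Finset (ℕ × ℕ)) (hlt : ∀ ab ∈ T, ab.1 < n)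
    (hne : ∀ ab ∈ T, (ab.1 : ℤ) * n' - ab.2 * n ≠ 0)
    (hsmall : ∀ ab ∈ T, |(((ab.1 : ℤ) * n' - ab.2 * n : ℤ) : ℝ)| < R)
    (hdvd : ∀ ab ∈ T, (Q : ℤ) ∣ (ab.1 : ℤ) * n' - ab.2 * n) :
    (T.card : ℝ) ≤ 2 * R / Q := by
  set g := n.gcd n'
  have hg : 0 < g := Nat.gcd_pos_of_pos_left _ hn
  have hgn : (g : ℤ) ∣ n := Int.natCast_dvd_natCast.2 (Nat.gcd_dvd_left n n')
  have hgn' : (g : ℤ) ∣ n' := Int.natCast_dvd_natCast.2 (Nat.gcd_dvd_right n n')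
  have hgQdvd (ab) (hab : ab ∈ T) : ((g * Q : ℕ) : ℤ) ∣ (ab.1 : ℤ) * n' - ab.2 * n := by
    rw [Nat.cast_mul]
    refine IsCoprime.mul_dvd ?_ ((hgn'.mul_left _).sub (hgn.mul_left _)) (hdvd ab hab)
    exact Nat.isCoprime_iff_coprime.2 (hQn.coprime_dvd_right (Nat.gcd_dvd_left n n')).symm
  set M : ℕ := ⌊R / (g * Q : ℕ)⌋₊
  set f : ℕ × ℕ → ℤ × ℕ := fun ab => (((ab.1 : ℤ) * n' - ab.2 * n) / (g * Q : ℕ), ab.1 / (n / g))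
  have hmaps : MapsTo f T (((Finset.Icc (-(M : ℤ)) M).erase 0 ×ˢ Finset.range g : Finset _)) := by
    intro ab hab
    have hquot : ab.1 / (n / g) < g := Nat.div_lt_of_lt_mul <| by
      rw [Nat.div_mul_cancel (Nat.gcd_dvd_left n n')]
      exact hlt ab hab
    exact Finset.mem_coe.2 (Finset.mk_mem_product (ediv_mem_erase_Icc_floor (by positivity)
      (hgQdvd ab hab) (hne ab hab) (hsmall ab hab)) (Finset.mem_range.2 hquot))
  have hinj : InjOn f T := by
    intro ab hab cd hcd h
    obtain ⟨hdiff, hquot⟩ := Prod.mk.inj h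
    obtain ⟨hac, hbd⟩ := eq_and_eq_of_crossDiff_eq hn
      ((Int.ediv_left_inj (hgQdvd ab hab) (hgQdvd cd hcd)).1 hdiff) hquot
    exact Prod.ext hac hbd
  have hcard := Finset.card_le_card_of_injOn f hmaps hinj
  rw [Finset.card_product, Finset.card_range, Finset.card_erase_of_mem (by simp),
    Int.card_Icc] at hcard
  have hMg : T.card ≤ 2 * M * g := hcard.trans (Nat.mul_le_mul_right _ (by omega))
  calc (T.card : ℝ) ≤ 2 * M * g := by exact_mod_cast hMg
    _ ≤ 2 * (R / (g * Q : ℕ)) * g := by gcongr; exact Nat.floor_le (by positivity)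
    _ = 2 * R / Q := by push_cast; field_simp

lemma eq_of_crossDiff_eq_zero {n n' a b : ℕ} (hn : 0 < n) (ha : a ∈ reducedResidues n)
    (hb : b ∈ reducedResidues n') (h : (a : ℤ) * n' - b * n = 0) : n = n' ∧ a = b := by
  have hmul : a * n' = b * n := by exact_mod_cast sub_eq_zero.1 h
  have hdvd : n ∣ n' :=
    (mem_reducedResidues.1 ha).2.dvd_of_dvd_mul_left ⟨b, hmul.trans (mul_comm _ _)⟩
  have hdvd' : n' ∣ n :=
    (mem_reducedResidues.1 hb).2.dvd_of_dvd_mul_left ⟨a, hmul.symm.trans (mul_comm _ _)⟩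
  obtain rfl := Nat.dvd_antisymm hdvd hdvd'
  exact ⟨rfl, Nat.eq_of_mul_eq_mul_right hn hmul⟩

end PairCounting

section PadicDivisibility

lemma exists_pow_dvd_of_norm_lt (q : ℕ) [hq : Fact q.Prime] {Δ : ℝ} (hΔ : 0 < Δ) :
    ∃ e : ℕ, Δ⁻¹ ≤ (q : ℝ) ^ e ∧ ∀ d : ℤ, ‖(d : ℚ_[q])‖ < Δ → (q : ℤ) ^ e ∣ d := by
  classical
  have hq1 : (1 : ℝ) < q := by exact_mod_cast hq.out.one_lt
  have hex : ∃ e : ℕ, Δ⁻¹ ≤ (q : ℝ) ^ e := (pow_unbounded_of_one_lt _ hq1).imp fun _ => le_of_lt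
  refine ⟨Nat.find hex, Nat.find_spec hex, fun d hd => ?_⟩
  rcases h : Nat.find hex with _ | e
  · simp
  · have hlt : (q : ℝ) ^ e < Δ⁻¹ := not_le.1 (Nat.find_min hex (by omega))
    rw [← Padic.norm_int_le_pow_iff_dvd, Padic.norm_le_pow_iff_norm_lt_pow_add_one]
    refine hd.trans (((lt_inv_comm₀ (by positivity) hΔ).1 hlt).trans_eq ?_)
    rw [Nat.cast_add_one, neg_add_rev, neg_add_cancel_comm, zpow_neg, zpow_natCast]

variable {r : ℕ} {p : Fin r → ℕ} [hp : ∀ i, Fact (p i).Prime]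

lemma exists_prod_pow_dvd_of_norm_lt (hinj : Function.Injective p) {Δ : Fin r → ℝ}
    (hΔ : ∀ i, 0 < Δ i) :
    ∃ e : Fin r → ℕ, (∏ i, Δ i)⁻¹ ≤ ((∏ i, p i ^ e i : ℕ) : ℝ) ∧
      ∀ d : ℤ, (∀ i, ‖(d : ℚ_[p i])‖ < Δ i) → ((∏ i, p i ^ e i : ℕ) : ℤ) ∣ d := by
  choose e hlow hdvd using fun i => exists_pow_dvd_of_norm_lt (p i) (hΔ i)
  refine ⟨e, ?_, fun d hd => ?_⟩
  · push_cast
    rw [← Finset.prod_inv_distrib]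
    exact Finset.prod_le_prod (fun i _ => inv_nonneg.2 (hΔ i).le) fun i _ => hlow i
  · push_cast
    refine Finset.prod_dvd_of_coprime (fun i _ j _ hij => IsCoprime.pow ?_)
      fun i _ => hdvd i d (hd i)
    exact Nat.isCoprime_iff_coprime.2
      ((Nat.coprime_primes (hp i).out (hp j).out).2 (hinj.ne hij))

end PadicDivisibility

section Overlap

variable {r : ℕ} {p : Fin r → ℕ} [hp : ∀ i, Fact (p i).Prime] {n n' : ℕ} {δ δ' : ℝ}
  {η η' : Fin r → ℝ}

open Classical in
/-- The pairs `(a, b)` of numerators for which the boxes around `a / n` and `b / n'` meet. -/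
noncomputable def overlapPairs (p : Fin r → ℕ) [∀ i, Fact (p i).Prime]
    (n : ℕ) (δ : ℝ) (η : Fin r → ℝ)
    (n' : ℕ) (δ' : ℝ) (η' : Fin r → ℝ) : Finset (ℕ × ℕ) :=
  {ab ∈ reducedResidues n ×ˢ reducedResidues n' |
    (openBox (iota r p (ab.1 / n : ℚ)) δ η ∩
      openBox (iota r p (ab.2 / n' : ℚ)) δ' η').Nonempty}

lemma mem_overlapPairs {ab : ℕ × ℕ} :
    ab ∈ overlapPairs p n δ η n' δ' η' ↔
      (ab.1 ∈ reducedResidues n ∧ ab.2 ∈ reducedResidues n') ∧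
        (openBox (iota r p (ab.1 / n : ℚ)) δ η ∩
          openBox (iota r p (ab.2 / n' : ℚ)) δ' η').Nonempty := by
  simp only [overlapPairs, Finset.mem_filter, Finset.mem_product]

lemma card_overlapPairs_diag_le (hn : 0 < n) :
    (({ab ∈ overlapPairs p n δ η n' δ' η' | ¬ (ab.1 : ℤ) * n' - ab.2 * n ≠ 0}).card : ℝ) ≤
      if n = n' then (n : ℝ) else 0 := by
  set T := {ab ∈ overlapPairs p n δ η n' δ' η' | ¬ (ab.1 : ℤ) * n' - ab.2 * n ≠ 0}
  have hmem (ab) (hab : ab ∈ T) : ab.1 < n ∧ n = n' ∧ ab.1 = ab.2 := by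
    obtain ⟨hpair, hzero⟩ := Finset.mem_filter.1 hab
    obtain ⟨⟨ha, hb⟩, -⟩ := mem_overlapPairs.1 hpair
    exact ⟨(mem_reducedResidues.1 ha).1, eq_of_crossDiff_eq_zero hn ha hb (not_not.1 hzero)⟩
  split_ifs with hnn
  · have hcard : T.card ≤ (Finset.range n).card := by
      refine Finset.card_le_card_of_injOn Prod.fst
        (fun ab hab => Finset.mem_coe.2 (Finset.mem_range.2 (hmem ab hab).1)) ?_
      intro ab hab cd hcd hfst
      exact Prod.ext hfst (((hmem ab hab).2.2.symm.trans hfst).trans (hmem cd hcd).2.2)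
    rw [Finset.card_range] at hcard
    exact_mod_cast hcard
  · have hempty : T = ∅ := Finset.eq_empty_of_forall_notMem fun ab hab => hnn (hmem ab hab).2.1
    rw [hempty, Finset.card_empty, Nat.cast_zero]

namespace IsAdmissible

lemma lamP_inter_le_card_overlapPairs (h : IsAdmissible p n δ η) (h' : IsAdmissible p n' δ' η') :
    lamP r p ((ZP r p ∩ approxUnion p n δ η) ∩ (ZP r p ∩ approxUnion p n' δ' η')) ≤
      ENNReal.ofReal ((overlapPairs p n δ η n' δ' η').card *
        (2 * min δ δ' * ∏ i, min (η i) (η' i))) := by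
  rw [h.ZP_inter_approxUnion, h'.ZP_inter_approxUnion]
  set T := overlapPairs p n δ η n' δ' η'
  set B : ℕ × ℕ → Set (QP r p) := fun ab =>
    openBox (iota r p (ab.1 / n : ℚ)) δ η ∩ openBox (iota r p (ab.2 / n' : ℚ)) δ' η'
  calc _ ≤ lamP r p (⋃ ab ∈ T, B ab) := by
        refine measure_mono ?_
        rintro x ⟨hx, hx'⟩
        simp only [mem_iUnion, exists_prop] at hx hx' ⊢
        obtain ⟨a, ha, hxa⟩ := hx
        obtain ⟨b, hb, hxb⟩ := hx'
        exact ⟨(a, b), mem_overlapPairs.2 ⟨⟨ha, hb⟩, x, hxa, hxb⟩, hxa, hxb⟩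
    _ ≤ ∑ ab ∈ T, lamP r p (B ab) := measure_biUnion_finset_le _ _
    _ ≤ ∑ _ab ∈ T, ENNReal.ofReal (2 * min δ δ' * ∏ i, min (η i) (η' i)) :=
        Finset.sum_le_sum fun ab _ => h.lamP_openBox_inter_le h' _ _
    _ = _ := by
        rw [Finset.sum_const, nsmul_eq_mul, ENNReal.ofReal_mul (Nat.cast_nonneg _),
          ENNReal.ofReal_natCast]

lemma abs_crossDiff_lt (h : IsAdmissible p n δ η) (h' : IsAdmissible p n' δ' η') {ab : ℕ × ℕ}
    (hab : ab ∈ overlapPairs p n δ η n' δ' η') :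
    |(((ab.1 : ℤ) * n' - ab.2 * n : ℤ) : ℝ)| < 2 * max δ δ' * (n * n') := by
  obtain ⟨-, x, hxa, hxb⟩ := mem_overlapPairs.1 hab
  have hn := h.denom_pos
  have hn' := h'.denom_pos
  have hfactor : (((ab.1 : ℤ) * n' - ab.2 * n : ℤ) : ℝ) =
      ((x.1 - ab.2 / n') - (x.1 - ab.1 / n)) * (n * n') := by
    push_cast
    field_simp
    ring
  rw [hfactor, abs_mul, abs_of_pos (mul_pos hn hn')]
  refine mul_lt_mul_of_pos_right ?_ (mul_pos hn hn')
  calc _ ≤ |x.1 - ab.2 / n'| + |x.1 - ab.1 / n| := abs_sub _ _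
    _ < max δ δ' + max δ δ' := add_lt_add
        ((mem_openBox_div.1 hxb).1.trans_le (le_max_right _ _))
        ((mem_openBox_div.1 hxa).1.trans_le (le_max_left _ _))
    _ = 2 * max δ δ' := (two_mul _).symm

lemma norm_crossDiff_lt (h : IsAdmissible p n δ η) (h' : IsAdmissible p n' δ' η') {ab : ℕ × ℕ}
    (hab : ab ∈ overlapPairs p n δ η n' δ' η') (i : Fin r) :
    ‖(((ab.1 : ℤ) * n' - ab.2 * n : ℤ) : ℚ_[p i])‖ < max (η i) (η' i) := by
  obtain ⟨-, x, hxa, hxb⟩ := mem_overlapPairs.1 hab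
  have hn : (n : ℚ_[p i]) ≠ 0 := Nat.cast_ne_zero.2 (by have := h.two_le; omega)
  have hn' : (n' : ℚ_[p i]) ≠ 0 := Nat.cast_ne_zero.2 (by have := h'.two_le; omega)
  have hfactor : (((ab.1 : ℤ) * n' - ab.2 * n : ℤ) : ℚ_[p i]) =
      ((x.2 i - (ab.2 : ℚ_[p i]) / n') + -(x.2 i - (ab.1 : ℚ_[p i]) / n)) * (n * n') := by
    push_cast
    field_simp
    ring
  rw [hfactor, norm_mul, norm_mul, norm_natCast_eq_one (h.not_dvd i),
    norm_natCast_eq_one (h'.not_dvd i), mul_one, mul_one]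
  refine (Padic.nonarchimedean _ _).trans_lt (max_lt ?_ ?_)
  · exact lt_max_of_lt_right ((mem_openBox_div.1 hxb).2 i)
  · rw [norm_neg]
    exact lt_max_of_lt_left ((mem_openBox_div.1 hxa).2 i)

lemma card_overlapPairs_offDiag_le (hinj : Function.Injective p) (h : IsAdmissible p n δ η)
    (h' : IsAdmissible p n' δ' η') :
    (({ab ∈ overlapPairs p n δ η n' δ' η' | (ab.1 : ℤ) * n' - ab.2 * n ≠ 0}).card : ℝ) ≤
      4 * (max δ δ' * ∏ i, max (η i) (η' i)) * (n * n') := by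
  have hΔ (i : Fin r) : 0 < max (η i) (η' i) := lt_max_of_lt_left (h.padicRadius_pos i)
  obtain ⟨e, hlow, hdvd⟩ := exists_prod_pow_dvd_of_norm_lt hinj hΔ
  set Q : ℕ := ∏ i, p i ^ e i
  have hδ : 0 < max δ δ' := lt_max_of_lt_left h.radius_pos
  have hQ : 0 < Q := Finset.prod_pos fun i _ => pow_pos (hp i).out.pos _
  have hQn : Q.Coprime n := Nat.Coprime.prod_left fun i _ =>
    Nat.Coprime.pow_left _ ((hp i).out.coprime_iff_not_dvd.2 (h.not_dvd i))
  refine (card_crossDiff_le (by have := h.two_le; omega) hQ hQn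
    (R := 2 * max δ δ' * (n * n')) (by positivity) _ (fun ab hab => ?_)
    (fun ab hab => (Finset.mem_filter.1 hab).2)
    (fun ab hab => h.abs_crossDiff_lt h' (Finset.mem_filter.1 hab).1)
    fun ab hab => hdvd _ (h.norm_crossDiff_lt h' (Finset.mem_filter.1 hab).1)).trans ?_
  · exact (mem_reducedResidues.1 (mem_overlapPairs.1 (Finset.mem_filter.1 hab).1).1.1).1
  · calc 2 * (2 * max δ δ' * (n * n')) / Q
        = 4 * max δ δ' * (n * n') * (Q : ℝ)⁻¹ := by ring
      _ ≤ 4 * max δ δ' * (n * n') * ∏ i, max (η i) (η' i) := by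
          gcongr
          exact inv_le_of_inv_le₀ (Finset.prod_pos fun i _ => hΔ i) hlow
      _ = _ := by ring

/- The pairs with `a / n ≠ b / n'` contribute at most a constant times the product of the total
volumes, since `max x y * min x y = x * y` at every place. -/
theorem lamP_inter_le (hinj : Function.Injective p) (h : IsAdmissible p n δ η)
    (h' : IsAdmissible p n' δ' η') :
    lamP r p ((ZP r p ∩ approxUnion p n δ η) ∩ (ZP r p ∩ approxUnion p n' δ' η')) ≤
      ENNReal.ofReal (8 * ((n * (δ * ∏ i, η i)) * (n' * (δ' * ∏ i, η' i))) +
        if n = n' then 2 * (n * (min δ δ' * ∏ i, min (η i) (η' i))) else 0) := by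
  refine (h.lamP_inter_le_card_overlapPairs h').trans (ENNReal.ofReal_le_ofReal ?_)
  have hvol : 0 ≤ 2 * min δ δ' * ∏ i, min (η i) (η' i) :=
    mul_nonneg (mul_nonneg zero_le_two (lt_min h.radius_pos h'.radius_pos).le)
      (Finset.prod_nonneg fun i _ => (lt_min (h.padicRadius_pos i) (h'.padicRadius_pos i)).le)
  have hprod : (∏ i, max (η i) (η' i)) * ∏ i, min (η i) (η' i) = (∏ i, η i) * ∏ i, η' i := by
    simp only [← Finset.prod_mul_distrib, max_mul_min]
  rw [← Finset.card_filter_add_card_filter_not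
    (fun ab : ℕ × ℕ => (ab.1 : ℤ) * n' - ab.2 * n ≠ 0), Nat.cast_add, add_mul]
  refine add_le_add ?_ ?_
  · calc _ ≤ 4 * (max δ δ' * ∏ i, max (η i) (η' i)) * (n * n') *
          (2 * min δ δ' * ∏ i, min (η i) (η' i)) :=
          mul_le_mul_of_nonneg_right (h.card_overlapPairs_offDiag_le hinj h') hvol
      _ = 8 * (max δ δ' * min δ δ') *
          ((∏ i, max (η i) (η' i)) * ∏ i, min (η i) (η' i)) * (n * n') := by ring
      _ = _ := by rw [hprod, max_mul_min]; ring
  · have hn : 0 < n := by have := h.two_le; omega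
    refine (mul_le_mul_of_nonneg_right (card_overlapPairs_diag_le hn) hvol).trans_eq ?_
    split_ifs <;> ring

end IsAdmissible

end Overlap

section SecondMoment

lemma sq_indicator_sub_sum_indicator {Ω ι : Type*} (F : Finset ι) (B : ι → Set Ω) (t : ℝ)
    (x : Ω) :
    (t * (⋃ k ∈ F, B k).indicator 1 x - ∑ k ∈ F, (B k).indicator (1 : Ω → ℝ) x) ^ 2 =
      t ^ 2 * (⋃ k ∈ F, B k).indicator 1 x - 2 * t * ∑ k ∈ F, (B k).indicator (1 : Ω → ℝ) x +
        ∑ k ∈ F, ∑ l ∈ F, (B k ∩ B l).indicator (1 : Ω → ℝ) x := by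
  have hsq : ∑ k ∈ F, ∑ l ∈ F, (B k ∩ B l).indicator (1 : Ω → ℝ) x =
      (∑ k ∈ F, (B k).indicator (1 : Ω → ℝ) x) ^ 2 := by
    simp only [sq, Finset.sum_mul_sum, inter_indicator_one, Pi.mul_apply]
  rw [hsq]
  by_cases hx : x ∈ ⋃ k ∈ F, B k
  · rw [indicator_of_mem hx, Pi.one_apply]
    ring
  · have hzero : ∑ k ∈ F, (B k).indicator (1 : Ω → ℝ) x = 0 := Finset.sum_eq_zero fun k hk =>
      indicator_of_notMem (fun h => hx (mem_iUnion₂_of_mem hk h)) _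
    rw [hzero, indicator_of_notMem hx]
    ring

variable {Ω : Type*} [MeasurableSpace Ω] (μ : Measure Ω) [IsFiniteMeasure μ]

/- Expand `0 ≤ ∫ (f - t 1_U) ^ 2`, where `f` counts the sets `B k` and `U` is their union, and take
the discriminant in `t`. -/
lemma sq_sum_measureReal_le {ι : Type*} (F : Finset ι) {B : ι → Set Ω}
    (hB : ∀ k, MeasurableSet (B k)) :
    (∑ k ∈ F, μ.real (B k)) ^ 2 ≤
      μ.real (⋃ k ∈ F, B k) * ∑ k ∈ F, ∑ l ∈ F, μ.real (B k ∩ B l) := by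
  set U := ⋃ k ∈ F, B k
  have hU : MeasurableSet U := Finset.measurableSet_biUnion _ fun k _ => hB k
  have hint {S : Set Ω} (hS : MeasurableSet S) : Integrable (S.indicator (1 : Ω → ℝ)) μ :=
    (integrable_const (1 : ℝ)).indicator hS
  have hquad (t : ℝ) : 0 ≤ μ.real U * (t * t) + -2 * (∑ k ∈ F, μ.real (B k)) * t +
      ∑ k ∈ F, ∑ l ∈ F, μ.real (B k ∩ B l) := by
    have hBB k l := hint ((hB k).inter (hB l))
    have hsum := integrable_finsetSum F fun k _ => hint (hB k)
    have hsum₂ := integrable_finsetSum F fun k _ => integrable_finsetSum F fun l _ => hBB k l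
    have hlin : Integrable (fun x => t ^ 2 * U.indicator 1 x -
        2 * t * ∑ k ∈ F, (B k).indicator (1 : Ω → ℝ) x) μ :=
      ((hint hU).const_mul _).sub (hsum.const_mul _)
    refine (integral_nonneg (μ := μ) fun x =>
      sq_nonneg (t * U.indicator 1 x - ∑ k ∈ F, (B k).indicator (1 : Ω → ℝ) x)).trans_eq ?_
    simp only [U, sq_indicator_sub_sum_indicator]
    rw [integral_add hlin hsum₂,
      integral_sub ((hint hU).const_mul _) (hsum.const_mul _), integral_const_mul,
      integral_const_mul, integral_finsetSum _ fun k _ => hint (hB k),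
      integral_finsetSum _ fun k _ => integrable_finsetSum F fun l _ => hBB k l]
    simp only [integral_finsetSum _ fun l _ => hBB _ l, integral_indicator_one, hB, hU,
      MeasurableSet.inter]
    ring
  have hdiscrim := discrim_le_zero hquad
  rw [discrim] at hdiscrim
  linarith

lemma div_le_measureReal_biUnion {ι : Type*} (F : Finset ι) {B : ι → Set Ω}
    (hB : ∀ k, MeasurableSet (B k)) {c C W : ℝ} (hc : 0 < c) (hC : 0 < C) (hW : 0 < W)
    (hlow : c * W ≤ ∑ k ∈ F, μ.real (B k))
    (hpair : ∑ k ∈ F, ∑ l ∈ F, μ.real (B k ∩ B l) ≤ C * W ^ 2) :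
    c ^ 2 / C ≤ μ.real (⋃ k ∈ F, B k) := by
  rw [div_le_iff₀ hC]
  refine le_of_mul_le_mul_right ?_ (pow_pos hW 2)
  calc c ^ 2 * W ^ 2 = (c * W) ^ 2 := by ring
    _ ≤ (∑ k ∈ F, μ.real (B k)) ^ 2 := by gcongr
    _ ≤ μ.real (⋃ k ∈ F, B k) * ∑ k ∈ F, ∑ l ∈ F, μ.real (B k ∩ B l) :=
      sq_sum_measureReal_le μ F hB
    _ ≤ μ.real (⋃ k ∈ F, B k) * (C * W ^ 2) := by gcongr
    _ = _ := by ring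

theorem measure_limsup_ne_zero {B : ℕ → Set Ω} (hB : ∀ k, MeasurableSet (B k)) {w : ℕ → ℝ}
    (hw0 : ∀ k, 0 ≤ w k) (hw : ¬ Summable w) {c C : ℝ} (hc : 0 < c) (hC : 0 < C)
    (hlow : ∀ k, c * w k ≤ μ.real (B k))
    (hpair : ∀ F : Finset ℕ, ∑ k ∈ F, ∑ l ∈ F, μ.real (B k ∩ B l) ≤
      C * ((∑ k ∈ F, w k) ^ 2 + ∑ k ∈ F, w k)) :
    μ (limsup B atTop) ≠ 0 := by
  have htail (N : ℕ) : ENNReal.ofReal (c ^ 2 / (2 * C)) ≤ μ (⋃ k ≥ N, B k) := by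
    obtain ⟨M, hM, hNM⟩ :=
      ((((not_summable_iff_tendsto_nat_atTop_of_nonneg hw0).1 hw).eventually_ge_atTop
        (1 + ∑ k ∈ Finset.range N, w k)).and (eventually_ge_atTop N)).exists
    set W := ∑ k ∈ Finset.Ico N M, w k with hWdef
    have hW : 1 ≤ W := by
      rw [hWdef, Finset.sum_Ico_eq_sub _ hNM]
      linarith
    have hle := div_le_measureReal_biUnion μ (Finset.Ico N M) hB hc (mul_pos two_pos hC)
      (one_pos.trans_le hW)
      (by rw [hWdef, Finset.mul_sum]; exact Finset.sum_le_sum fun k _ => hlow k)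
      ((hpair _).trans (by rw [← hWdef]; nlinarith [mul_nonneg hC.le (zero_le_one.trans hW)]))
    rw [Measure.real, ← ENNReal.ofReal_le_iff_le_toReal (measure_ne_top _ _)] at hle
    exact hle.trans (measure_mono (biUnion_mono (fun k hk => (Finset.mem_Ico.1 hk).1)
      fun _ _ => Subset.rfl))
  have hlim : ENNReal.ofReal (c ^ 2 / (2 * C)) ≤ μ (limsup B atTop) := by
    have hanti : Antitone fun N => ⋃ k ≥ N, B k := fun N M hNM =>
      biUnion_mono (fun k hk => le_trans hNM hk) fun _ _ => Subset.rfl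
    rw [limsup_eq_iInf_iSup_of_nat]
    refine (le_iInf htail).trans_eq
      (hanti.measure_iInter (fun N => ?_) ⟨0, measure_ne_top _ _⟩).symm
    exact (MeasurableSet.biUnion (to_countable _) fun k _ => hB k).nullMeasurableSet
  exact ((ENNReal.ofReal_pos.2 (by positivity)).trans_le hlim).ne'

end SecondMoment

section Decay

variable {ι : Type*} [Fintype ι]

/-- The function `k ↦ ∏ i, 2 ^ (-|k i| / 2)` on `ℤ ^ ι`, which bounds the overlap of two boxes whose
sizes at the place `i` have quotient `p i ^ k i`. -/
noncomputable def decay (k : ι → ℤ) : ℝ := ∏ i, √(1 / 2) ^ (k i).natAbs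

lemma decay_nonneg (k : ι → ℤ) : 0 ≤ decay k := by
  unfold decay
  positivity

lemma decay_neg (k : ι → ℤ) : decay (-k) = decay k := by
  simp only [decay, Pi.neg_apply, Int.natAbs_neg]

lemma summable_decay : Summable (decay : (ι → ℤ) → ℝ) := by
  classical
  have hlt : √(1 / 2 : ℝ) < 1 := by
    rw [Real.sqrt_lt' one_pos]
    norm_num
  have hgeom : Summable fun k : ℤ => √(1 / 2 : ℝ) ^ k.natAbs := by
    apply Summable.of_nat_of_neg <;>
      simpa using summable_geometric_of_lt_one (Real.sqrt_nonneg _) hlt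
  refine summable_of_sum_le decay_nonneg
    (c := ∏ _i : ι, ∑' k : ℤ, √(1 / 2 : ℝ) ^ k.natAbs) fun F => ?_
  have hsub : F ⊆ Fintype.piFinset fun i => F.image fun k => k i := fun k hk =>
    Fintype.mem_piFinset.2 fun i => Finset.mem_image_of_mem _ hk
  calc ∑ k ∈ F, decay k ≤ ∑ k ∈ Fintype.piFinset fun i => F.image fun k => k i, decay k :=
        Finset.sum_le_sum_of_subset_of_nonneg hsub fun k _ _ => decay_nonneg k
    _ = ∏ i : ι, ∑ j ∈ F.image fun k => k i, √(1 / 2) ^ j.natAbs := by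
        rw [Finset.prod_univ_sum]
        rfl
    _ ≤ _ := Finset.prod_le_prod (fun _ _ => Finset.sum_nonneg fun _ _ => by positivity)
        fun _ _ => hgeom.sum_le_tsum _ fun _ _ => by positivity

lemma min_one_zpow_le {x : ℝ} (hx : 2 ≤ x) (k : ℤ) :
    min 1 (x ^ k) ≤ (√(1 / 2) ^ k.natAbs) ^ 2 * max 1 (x ^ k) := by
  have hsq : (√(1 / 2) ^ k.natAbs) ^ 2 = ((2 : ℝ) ^ k.natAbs)⁻¹ := by
    rw [← pow_mul, mul_comm, pow_mul, Real.sq_sqrt (by norm_num), one_div, inv_pow]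
  have hx1 : 1 ≤ x := one_le_two.trans hx
  have hpow : (2 : ℝ) ^ k.natAbs ≤ x ^ k.natAbs := by gcongr
  rw [hsq]
  rcases le_total 0 k with hk | hk
  · rw [← Int.natAbs_of_nonneg hk, zpow_natCast, Int.natAbs_natCast,
      min_eq_left (one_le_pow₀ hx1), max_eq_right (one_le_pow₀ hx1)]
    exact (one_le_inv_mul₀ (by positivity)).2 hpow
  · have hzpow : x ^ k = (x ^ k.natAbs)⁻¹ := by
      rw [← zpow_natCast, ← zpow_neg, Int.ofNat_natAbs_of_nonpos hk, neg_neg]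
    rw [hzpow, min_eq_right (inv_le_one_of_one_le₀ (one_le_pow₀ hx1)),
      max_eq_left (inv_le_one_of_one_le₀ (one_le_pow₀ hx1)), mul_one]
    gcongr

/- With `X` the left-hand side, `X ≤ ∏ min 1 (x i ^ k i)` and `X ≤ (∏ max 1 (x i ^ k i))⁻¹`;
multiply the two bounds. -/
lemma min_prod_mul_prod_min_le_decay {x : ι → ℝ} (hx : ∀ i, 2 ≤ x i) (k : ι → ℤ) :
    min 1 (∏ i, x i ^ (-k i)) * ∏ i, min 1 (x i ^ k i) ≤ decay k := by
  have hx0 (i) : 0 < x i := two_pos.trans_le (hx i)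
  have hz (i) : 0 < x i ^ k i := zpow_pos (hx0 i) _
  have ht : 0 < ∏ i, x i ^ (-k i) := Finset.prod_pos fun i _ => zpow_pos (hx0 i) _
  have hmin : 0 < ∏ i, min 1 (x i ^ k i) := Finset.prod_pos fun i _ => lt_min one_pos (hz i)
  set X := min 1 (∏ i, x i ^ (-k i)) * ∏ i, min 1 (x i ^ k i) with hX
  have hX0 : 0 < X := mul_pos (lt_min one_pos ht) hmin
  have hmax_le : X * ∏ i, max 1 (x i ^ k i) ≤ 1 :=
    calc X * ∏ i, max 1 (x i ^ k i)
        = min 1 (∏ i, x i ^ (-k i)) * ∏ i, x i ^ k i := by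
          simp only [hX, mul_assoc, ← Finset.prod_mul_distrib, min_mul_max, one_mul]
      _ ≤ (∏ i, x i ^ (-k i)) * ∏ i, x i ^ k i := by
          gcongr
          · exact Finset.prod_nonneg fun i _ => (hz i).le
          · exact min_le_right _ _
      _ = 1 := by
          rw [← Finset.prod_mul_distrib]
          exact Finset.prod_eq_one fun i _ => by rw [zpow_neg, inv_mul_cancel₀ (hz i).ne']
  have hmin_le : ∏ i, min 1 (x i ^ k i) ≤ decay k ^ 2 * ∏ i, max 1 (x i ^ k i) := by
    rw [decay, ← Finset.prod_pow, ← Finset.prod_mul_distrib]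
    exact Finset.prod_le_prod (fun i _ => (lt_min one_pos (hz i)).le)
      fun i _ => min_one_zpow_le (hx i) (k i)
  refine le_of_sq_le_sq ?_ (decay_nonneg k)
  calc X ^ 2 = X * X := sq X
    _ ≤ X * (decay k ^ 2 * ∏ i, max 1 (x i ^ k i)) := by
        gcongr
        exact (mul_le_of_le_one_left hmin.le (min_le_left _ _)).trans hmin_le
    _ = decay k ^ 2 * (X * ∏ i, max 1 (x i ^ k i)) := by ring
    _ ≤ decay k ^ 2 := mul_le_of_le_one_right (sq_nonneg _) hmax_le

lemma sum_sum_mul_decay_le {κ α : Type*} [DecidableEq α] {n : κ → α} {ν : κ → ι → ℤ}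
    (hinj : Function.Injective fun k => (n k, ν k)) {w : κ → ℝ} (hw : ∀ k, 0 ≤ w k)
    (F : Finset κ) :
    ∑ k ∈ F, ∑ l ∈ F, (if n k = n l then (w k + w l) * decay (ν l - ν k) else 0) ≤
      2 * (∑' d : ι → ℤ, decay d) * ∑ k ∈ F, w k := by
  classical
  have hrow (k) : ∑ l ∈ F, (if n k = n l then decay (ν l - ν k) else 0) ≤
      ∑' d : ι → ℤ, decay d := by
    rw [← Finset.sum_filter, ← Finset.sum_image (f := decay) (g := fun l => ν l - ν k)]
    · exact summable_decay.sum_le_tsum _ fun d _ => decay_nonneg d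
    · intro a ha b hb hab
      rw [Finset.mem_coe, Finset.mem_filter] at ha hb
      exact hinj (Prod.ext (ha.2.symm.trans hb.2) (sub_left_injective hab))
  have hsymm (k l) : (if n k = n l then decay (ν l - ν k) else 0) =
      if n l = n k then decay (ν k - ν l) else 0 := by
    rw [← neg_sub, decay_neg]
    simp only [eq_comm]
  calc ∑ k ∈ F, ∑ l ∈ F, (if n k = n l then (w k + w l) * decay (ν l - ν k) else 0)
      = ∑ k ∈ F, ∑ l ∈ F, w k * (if n k = n l then decay (ν l - ν k) else 0) +
          ∑ k ∈ F, ∑ l ∈ F, w l * (if n k = n l then decay (ν l - ν k) else 0) := by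
        simp only [← Finset.sum_add_distrib]
        exact Finset.sum_congr rfl fun k _ => Finset.sum_congr rfl fun l _ => by
          split_ifs <;> ring
    _ = ∑ k ∈ F, ∑ l ∈ F, w k * (if n k = n l then decay (ν l - ν k) else 0) +
          ∑ l ∈ F, ∑ k ∈ F, w l * (if n l = n k then decay (ν k - ν l) else 0) := by
        rw [Finset.sum_comm (s := F) (t := F) (f := fun k l =>
          w l * (if n k = n l then decay (ν l - ν k) else 0))]
        simp only [hsymm]
    _ = 2 * ∑ k ∈ F, w k * ∑ l ∈ F, (if n k = n l then decay (ν l - ν k) else 0) := by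
        simp only [← Finset.mul_sum, two_mul]
    _ ≤ 2 * ∑ k ∈ F, w k * ∑' d : ι → ℤ, decay d := by
        gcongr with k
        · exact hw k
        · exact hrow k
    _ = _ := by rw [← Finset.sum_mul]; ring

end Decay

section NormalForm

variable {r : ℕ} {p : Fin r → ℕ} [hp : ∀ i, Fact (p i).Prime]

lemma exists_eq_mul_prod_pow {m : ℤ} (hm : m ≠ 0) :
    ∃ (y : ℤ) (f : Fin r → ℕ), m = y * ∏ i, (p i : ℤ) ^ f i ∧ ∀ i, ¬ (p i : ℤ) ∣ y := by
  induction hk : m.natAbs using Nat.strong_induction_on generalizing m with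
  | _ k ih =>
    by_cases h : ∀ i, ¬ (p i : ℤ) ∣ m
    · exact ⟨m, 0, by simp, h⟩
    · push Not at h
      obtain ⟨i, m', rfl⟩ := h
      have hm' : m' ≠ 0 := right_ne_zero_of_mul hm
      obtain ⟨y, f, hf, hy⟩ := ih m'.natAbs (by
        rw [← hk, Int.natAbs_mul, Int.natAbs_natCast]
        exact lt_mul_of_one_lt_left (Int.natAbs_pos.2 hm') (hp i).out.one_lt) hm' rfl
      refine ⟨y, f + Pi.single i 1, ?_, hy⟩
      simp only [Pi.add_apply, pow_add, Finset.prod_mul_distrib, Pi.single_apply, pow_ite, pow_one,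
        pow_zero, Finset.prod_ite_eq', Finset.mem_univ, if_true]
      rw [← mul_assoc, ← hf, mul_comm]

lemma natCast_ne_zero (i : Fin r) : (p i : ℚ) ≠ 0 :=
  Nat.cast_ne_zero.2 (hp i).out.ne_zero

lemma prod_zpow_add (μ ν : Fin r → ℤ) :
    ∏ i, (p i : ℚ) ^ (μ + ν) i = (∏ i, (p i : ℚ) ^ μ i) * ∏ i, (p i : ℚ) ^ ν i := by
  simp only [Pi.add_apply, zpow_add₀ (natCast_ne_zero _), Finset.prod_mul_distrib]

lemma exists_eq_mul_prod_zpow {γ : ℚ} (hγ : γ ∈ PinvZ r p) (hγ0 : γ ≠ 0) :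
    ∃ (y : ℤ) (ν : Fin r → ℤ), γ = y * ∏ i, (p i : ℚ) ^ ν i ∧ ∀ i, ¬ (p i : ℤ) ∣ y := by
  obtain ⟨m, ν, rfl⟩ := hγ
  obtain ⟨y, f, rfl, hy⟩ := exists_eq_mul_prod_pow (p := p)
    (Int.cast_ne_zero.1 (left_ne_zero_of_mul hγ0))
  refine ⟨y, (fun i => (f i : ℤ)) + ν, ?_, hy⟩
  rw [prod_zpow_add]
  push_cast
  simp only [zpow_natCast, mul_assoc]

lemma factorization_mul_prod_pow (hinj : Function.Injective p) {a : ℕ} {i : Fin r}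
    (ha : ¬ p i ∣ a) (f : Fin r → ℕ) : (a * ∏ j, p j ^ f j).factorization (p i) = f i := by
  have ha0 : a ≠ 0 := by
    rintro rfl
    exact ha (dvd_zero _)
  have hpow (j : Fin r) : p j ^ f j ≠ 0 := pow_ne_zero _ (hp j).out.ne_zero
  rw [Nat.factorization_mul ha0 (Finset.prod_ne_zero_iff.2 fun j _ => hpow j),
    Nat.factorization_prod fun j _ => hpow j]
  simp only [(hp _).out.factorization_pow, Finsupp.add_apply, Finsupp.finsetSum_apply,
    Finsupp.single_apply, hinj.eq_iff, Finset.sum_ite_eq', Finset.mem_univ, if_true,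
    Nat.factorization_eq_zero_of_not_dvd ha, zero_add]

lemma natAbs_num_mul_den (hinj : Function.Injective p) {y : ℤ} (hy : ∀ i, ¬ (p i : ℤ) ∣ y)
    (ν : Fin r → ℤ) :
    (y * ∏ i, (p i : ℚ) ^ ν i).num.natAbs * (y * ∏ i, (p i : ℚ) ^ ν i).den =
      y.natAbs * ∏ i, p i ^ (ν i).natAbs := by
  set A := ∏ i, p i ^ (ν i).toNat
  set B := ∏ i, p i ^ (-ν i).toNat
  have hB : B ≠ 0 := Finset.prod_ne_zero_iff.2 fun i _ => pow_ne_zero _ (hp i).out.ne_zero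
  have hquot : (y * ∏ i, (p i : ℚ) ^ ν i : ℚ) = ((y * A : ℤ) : ℚ) / ((B : ℤ) : ℚ) := by
    push_cast [A, B]
    rw [mul_div_assoc, ← Finset.prod_div_distrib]
    congr! with i
    rw [← zpow_natCast, ← zpow_natCast, ← zpow_sub₀ (natCast_ne_zero i), Int.toNat_sub_toNat_neg]
  have hcop : (y * A).natAbs.Coprime (B : ℤ).natAbs := by
    rw [Int.natAbs_mul, Int.natAbs_natCast, Int.natAbs_natCast]
    refine Nat.Coprime.mul_left (Nat.Coprime.prod_right fun i _ => Nat.Coprime.pow_right _ ?_)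
      (Nat.Coprime.prod_left fun i _ => Nat.Coprime.prod_right fun j _ => ?_)
    · exact ((hp i).out.coprime_iff_not_dvd.2 fun h => hy i (Int.natCast_dvd.2 h)).symm
    · rcases eq_or_ne i j with rfl | hij
      · rcases le_total (ν i) 0 with h | h
        · simp [Int.toNat_of_nonpos h]
        · simp [Int.toNat_of_nonpos (neg_nonpos.2 h)]
      · exact Nat.Coprime.pow _ _ ((Nat.coprime_primes (hp i).out (hp j).out).2 (hinj.ne hij))
  have hBpos : (0 : ℤ) < B := Int.natCast_pos.2 (Nat.pos_of_ne_zero hB)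
  have hden : ((y * ∏ i, (p i : ℚ) ^ ν i : ℚ).den : ℤ) = B := by
    rw [hquot, Rat.den_div_eq_of_coprime hBpos hcop]
  rw [Int.natCast_inj.1 hden, hquot, Rat.num_div_eq_of_coprime hBpos hcop, Int.natAbs_mul,
    Int.natAbs_natCast, mul_assoc, ← Finset.prod_mul_distrib]
  simp only [← pow_add, Int.toNat_add_toNat_neg_eq_natAbs]

lemma unitPart_mul_prod_zpow (hinj : Function.Injective p) {y : ℤ} (hy : ∀ i, ¬ (p i : ℤ) ∣ y)
    (ν : Fin r → ℤ) : unitPart r p (y * ∏ i, (p i : ℚ) ^ ν i) = y.natAbs := by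
  have hy' (i) : ¬ p i ∣ y.natAbs := fun h => hy i (Int.natCast_dvd.2 h)
  rw [unitPart, natAbs_num_mul_den hinj hy]
  simp only [factorization_mul_prod_pow hinj (hy' _)]
  exact Nat.mul_div_cancel _ (Finset.prod_pos fun i _ => pow_pos (hp i).out.pos _)

lemma norm_mul_prod_zpow (hinj : Function.Injective p) {y : ℤ} {i : Fin r}
    (hy : ¬ (p i : ℤ) ∣ y) (ν : Fin r → ℤ) :
    ‖((y * ∏ j, (p j : ℚ) ^ ν j : ℚ) : ℚ_[p i])‖ = (p i : ℝ) ^ (-ν i) := by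
  have hy1 : ‖(y : ℚ_[p i])‖ = 1 :=
    le_antisymm (Padic.norm_int_le_one y) (not_lt.1 fun h => hy (Padic.norm_intCast_lt_one_iff.1 h))
  push_cast
  rw [norm_mul, hy1, one_mul, norm_prod, Finset.prod_eq_single_of_mem i (Finset.mem_univ i)]
  · rw [norm_zpow, Padic.norm_p, inv_zpow']
  · intro j _ hji
    rw [norm_zpow, norm_natCast_eq_one fun h =>
      hinj.ne hji ((Nat.prime_dvd_prime_iff_eq (hp i).out (hp j).out).1 h).symm, one_zpow]

variable {γ : ℚ}

lemma unitPart_eq_abs_mul_prod_norm (hinj : Function.Injective p) (hγ : γ ∈ PinvZ r p)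
    (hγ0 : γ ≠ 0) : (unitPart r p γ : ℝ) = |(γ : ℝ)| * ∏ i, ‖(γ : ℚ_[p i])‖ := by
  obtain ⟨y, ν, rfl, hy⟩ := exists_eq_mul_prod_zpow hγ hγ0
  rw [unitPart_mul_prod_zpow hinj hy]
  simp only [norm_mul_prod_zpow hinj (hy _)]
  push_cast
  rw [abs_mul, Finset.abs_prod, mul_assoc, ← Finset.prod_mul_distrib]
  simp only [abs_zpow, Nat.abs_cast, zpow_neg]
  rw [Finset.prod_eq_one fun i _ => mul_inv_cancel₀
    (zpow_ne_zero _ (Nat.cast_ne_zero.2 (hp i).out.ne_zero)), mul_one, Nat.cast_natAbs,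
    Int.cast_abs]

lemma not_dvd_unitPart (hinj : Function.Injective p) (hγ : γ ∈ PinvZ r p) (hγ0 : γ ≠ 0)
    (i : Fin r) : ¬ p i ∣ unitPart r p γ := by
  obtain ⟨y, ν, rfl, hy⟩ := exists_eq_mul_prod_zpow hγ hγ0
  rw [unitPart_mul_prod_zpow hinj hy]
  exact fun h => hy i (Int.natCast_dvd.2 h)

/-- The exponents `(ν_1, …, ν_r)` of a nonzero `γ = n p_1^{ν_1} ⋯ p_r^{ν_r} ∈ P⁻¹ℤ`. -/
def exponents (p : Fin r → ℕ) (γ : ℚ) (i : Fin r) : ℤ := padicValRat (p i) γ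

lemma norm_eq_zpow_exponents (hγ0 : γ ≠ 0) (i : Fin r) :
    ‖(γ : ℚ_[p i])‖ = (p i : ℝ) ^ (-exponents p γ i) := by
  rw [Padic.eq_padicNorm, padicNorm.eq_zpow_of_nonzero hγ0]
  push_cast
  rfl

lemma abs_eq_unitPart_mul (hinj : Function.Injective p) (hγ : γ ∈ PinvZ r p) (hγ0 : γ ≠ 0) :
    |(γ : ℝ)| = unitPart r p γ * ∏ i, (p i : ℝ) ^ exponents p γ i := by
  have hp0 (i) : (p i : ℝ) ≠ 0 := Nat.cast_ne_zero.2 (hp i).out.ne_zero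
  rw [unitPart_eq_abs_mul_prod_norm hinj hγ hγ0, mul_assoc, ← Finset.prod_mul_distrib,
    Finset.prod_eq_one fun i _ => ?_, mul_one]
  rw [norm_eq_zpow_exponents hγ0, ← zpow_add₀ (hp0 i), neg_add_cancel, zpow_zero]

lemma unitPart_ne_zero (hinj : Function.Injective p) (hγ : γ ∈ PinvZ r p) (hγ0 : γ ≠ 0) :
    unitPart r p γ ≠ 0 := by
  intro h
  have habs := abs_eq_unitPart_mul hinj hγ hγ0
  rw [h, Nat.cast_zero, zero_mul, abs_eq_zero, Rat.cast_eq_zero] at habs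
  exact hγ0 habs

lemma abs_eq_of_exponents_eq {γ' : ℚ} (hinj : Function.Injective p) (hγ : γ ∈ PinvZ r p)
    (hγ0 : γ ≠ 0) (hγ' : γ' ∈ PinvZ r p) (hγ0' : γ' ≠ 0) (hn : unitPart r p γ = unitPart r p γ')
    (hν : exponents p γ = exponents p γ') : |γ| = |γ'| := by
  refine Rat.cast_injective (α := ℝ) ?_
  rw [Rat.cast_abs, Rat.cast_abs, abs_eq_unitPart_mul hinj hγ hγ0,
    abs_eq_unitPart_mul hinj hγ' hγ0', hn, hν]

end NormalForm

section CoprimeApproximation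

variable {r : ℕ} {p : Fin r → ℕ} [hp : ∀ i, Fact (p i).Prime]

lemma exists_mul_eq_of_mem_reducedFractions {y : ℤ} (hy : ∀ i, ¬ (p i : ℤ) ∣ y) (hy0 : y ≠ 0)
    {b : ℚ} (hb : b ∈ reducedFractions r p y.natAbs) :
    ∃ (m : ℤ) (K : ℕ), IsCoprime m y ∧ y * b * (primeProd p : ℚ) ^ K = m := by
  obtain ⟨a, ha, hba⟩ := hb
  obtain ⟨l, K, hl⟩ := mem_PinvZ_iff.1 hba
  have hyQ : (y : ℚ) ≠ 0 := Int.cast_ne_zero.2 hy0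
  obtain ⟨a', ha', haa'⟩ : ∃ a' : ℤ, IsCoprime a' y ∧ (a / y.natAbs : ℚ) = a' / y := by
    rcases y.natAbs_eq with h | h
    · exact ⟨a, by rwa [h], by rw [← Int.cast_natCast, ← h]⟩
    · refine ⟨-a, by rwa [h, IsCoprime.neg_neg_iff], ?_⟩
      rw [← Int.cast_natCast, ← neg_eq_iff_eq_neg.2 h, Int.cast_neg, Int.cast_neg, div_neg, neg_div]
  have hD : IsCoprime ((primeProd p : ℤ) ^ K) y := by
    rw [primeProd, Nat.cast_prod]
    exact (IsCoprime.prod_left fun i _ =>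
      (Nat.prime_iff_prime_int.1 (hp i).out).coprime_iff_not_dvd.2 (hy i)).pow_left
  refine ⟨a' * primeProd p ^ K + y * l, K, (ha'.mul_left hD).add_mul_left_left l, ?_⟩
  rw [haa'] at hl
  push_cast
  rw [← hl]
  field_simp
  ring

lemma exists_mul_eq_mul_prod_zpow {y : ℤ} (hy : ∀ i, ¬ (p i : ℤ) ∣ y) (hy2 : 2 ≤ y.natAbs)
    {b : ℚ} (hb : b ∈ reducedFractions r p y.natAbs) :
    ∃ (z : ℤ) (μ : Fin r → ℤ), y * b = z * ∏ i, (p i : ℚ) ^ μ i ∧ (∀ i, ¬ (p i : ℤ) ∣ z) ∧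
      IsCoprime z y := by
  obtain ⟨m, K, hcop, hm⟩ := exists_mul_eq_of_mem_reducedFractions hy (by rintro rfl; omega) hb
  have hm0 : m ≠ 0 := by
    rintro rfl
    have := Int.isUnit_iff_natAbs_eq.1 (isCoprime_zero_left.1 hcop)
    omega
  obtain ⟨z, f, rfl, hz⟩ := exists_eq_mul_prod_pow (p := p) hm0
  refine ⟨z, (fun i => (f i : ℤ)) + fun _ => -(K : ℤ), ?_, hz, hcop.of_mul_left_left⟩
  rw [prod_zpow_add, ← mul_assoc]
  push_cast at hm
  simp only [zpow_natCast, zpow_neg, Finset.prod_inv_distrib, Finset.prod_pow]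
  rw [← hm, primeProd, Nat.cast_prod, mul_inv_cancel_right₀]
  exact pow_ne_zero _ (Finset.prod_ne_zero_iff.2 fun i _ => natCast_ne_zero i)

lemma coprimePair_mul_of_mem_reducedFractions (hinj : Function.Injective p) {γ b : ℚ}
    (hγ : γ ∈ PinvZ r p) (hγ0 : γ ≠ 0) (hn : 2 ≤ unitPart r p γ)
    (hb : b ∈ reducedFractions r p (unitPart r p γ)) : CoprimePair r p (γ * b) γ := by
  obtain ⟨y, ν, rfl, hy⟩ := exists_eq_mul_prod_zpow hγ hγ0
  rw [unitPart_mul_prod_zpow hinj hy] at hn hb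
  obtain ⟨z, μ, hμ, hz, hcop⟩ := exists_mul_eq_mul_prod_zpow hy hn hb
  refine ⟨z, y, μ + ν, ν, ?_, rfl, hz, hy, hcop⟩
  rw [prod_zpow_add, ← mul_assoc, ← hμ]
  ring

lemma dP_smulQ_iota_lt {γ b : ℚ} (hγ0 : γ ≠ 0) {ψ : ℝ} (hψ : 0 < ψ) {x : QP r p}
    (hx : x ∈ openBox (iota r p b) (ψ / |(γ : ℝ)|) fun i => ψ / ‖(γ : ℚ_[p i])‖) :
    dP r p (smulQ r p γ x) (iota r p (γ * b)) < ψ := by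
  obtain ⟨hreal, hpadic⟩ := mem_openBox.1 hx
  simp only [dP, smulQ, iota, Rat.cast_mul, ← mul_sub, abs_mul, norm_mul]
  refine max_lt ?_ ?_
  · rwa [lt_div_iff₀' (abs_pos.2 (Rat.cast_ne_zero.2 hγ0))] at hreal
  · have hlt (i) : ‖(γ : ℚ_[p i])‖ * ‖x.2 i - b‖ < ψ :=
      (lt_div_iff₀' (norm_pos_iff.2 (Rat.cast_ne_zero.2 hγ0))).1 (hpadic i)
    rcases isEmpty_or_nonempty (Fin r) with h | h
    · rwa [Real.iSup_of_isEmpty]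
    · obtain ⟨i, hi⟩ := exists_eq_ciSup_of_finite
        (f := fun i => ‖(γ : ℚ_[p i])‖ * ‖x.2 i - b‖)
      exact hi ▸ hlt i

end CoprimeApproximation

section ApproxSet

variable {r : ℕ} {p : Fin r → ℕ} [hp : ∀ i, Fact (p i).Prime] {ψ : ℚ → ℝ} {γ γ' : ℚ}

/-- The points `x ∈ ℚ_P` with `d(γ x, β) < ψ(γ)` for some `β ∈ P⁻¹ℤ` coprime to `γ`, written as a
union of boxes by dividing by `γ`. -/
def approxSet (p : Fin r → ℕ) [∀ i, Fact (p i).Prime] (ψ : ℚ → ℝ) (γ : ℚ) : Set (QP r p) :=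
  approxUnion p (unitPart r p γ) (ψ γ / |(γ : ℝ)|) fun i => ψ γ / ‖(γ : ℚ_[p i])‖

lemma measurableSet_approxSet : MeasurableSet (approxSet p ψ γ) :=
  measurableSet_approxUnion

lemma exists_coprimePair_of_mem_approxSet (hinj : Function.Injective p) (hγ : γ ∈ PinvZ r p)
    (hγ0 : γ ≠ 0) (hn : 2 ≤ unitPart r p γ) (hψ : 0 < ψ γ) {x : QP r p}
    (hx : x ∈ approxSet p ψ γ) :
    ∃ β, CoprimePair r p β γ ∧ dP r p (smulQ r p γ x) (iota r p β) < ψ γ := by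
  obtain ⟨b, hb, hxb⟩ := mem_approxUnion.1 hx
  exact ⟨γ * b, coprimePair_mul_of_mem_reducedFractions hinj hγ hγ0 hn hb,
    dP_smulQ_iota_lt hγ0 hψ hxb⟩

lemma le_abs_div_of_le_LP (hinj : Function.Injective p) (hγ : γ ∈ PinvZ r p) (hγ0 : γ ≠ 0)
    (hψ : ψ γ ≤ 1 / (2 * LP r p γ)) :
    ψ γ ≤ |(γ : ℝ)| / (2 * unitPart r p γ) ∧
      ∀ i, ψ γ ≤ ‖(γ : ℚ_[p i])‖ / (2 * unitPart r p γ) := by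
  have hn : (0 : ℝ) < unitPart r p γ :=
    Nat.cast_pos.2 (Nat.pos_of_ne_zero (unitPart_ne_zero hinj hγ hγ0))
  have hle {a : ℝ} (ha : 0 < a) (hL : unitPart r p γ / a ≤ LP r p γ) :
      ψ γ ≤ a / (2 * unitPart r p γ) :=
    calc ψ γ ≤ 1 / (2 * LP r p γ) := hψ
      _ ≤ 1 / (2 * (unitPart r p γ / a)) := by gcongr
      _ = a / (2 * unitPart r p γ) := by field_simp
  rw [LP, ← unitPart_eq_abs_mul_prod_norm hinj hγ hγ0] at hle
  exact ⟨hle (abs_pos.2 (Rat.cast_ne_zero.2 hγ0)) (le_max_left _ _),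
    fun i => hle (norm_pos_iff.2 (Rat.cast_ne_zero.2 hγ0))
      (le_max_of_le_right
        (le_ciSup (f := fun i => unitPart r p γ / ‖(γ : ℚ_[p i])‖) (Finite.bddAbove_range _) i))⟩

lemma isAdmissible_approxSet (hinj : Function.Injective p) (hγ : γ ∈ PinvZ r p) (hγ0 : γ ≠ 0)
    (hn : 2 ≤ unitPart r p γ) (hψ0 : 0 < ψ γ) (hψ : ψ γ ≤ 1 / (2 * LP r p γ)) :
    IsAdmissible p (unitPart r p γ) (ψ γ / |(γ : ℝ)|) fun i => ψ γ / ‖(γ : ℚ_[p i])‖ := by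
  obtain ⟨hreal, hpadic⟩ := le_abs_div_of_le_LP hinj hγ hγ0 hψ
  have hn1 : (1 : ℝ) ≤ 2 * unitPart r p γ := by
    have : (2 : ℝ) ≤ unitPart r p γ := Nat.ofNat_le_cast.2 hn
    linarith
  have habs : 0 < |(γ : ℝ)| := abs_pos.2 (Rat.cast_ne_zero.2 hγ0)
  have hnorm (i) : 0 < ‖(γ : ℚ_[p i])‖ := norm_pos_iff.2 (Rat.cast_ne_zero.2 hγ0)
  refine ⟨not_dvd_unitPart hinj hγ hγ0, hn, div_pos hψ0 habs, fun i => div_pos hψ0 (hnorm i), ?_,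
    fun i => (div_le_one (hnorm i)).2 ((hpadic i).trans (div_le_self (hnorm i).le hn1))⟩
  rw [div_le_iff₀ habs, one_div_mul_eq_div]
  exact hreal

lemma unitPart_mul_radius_mul_prod (hinj : Function.Injective p) (hγ : γ ∈ PinvZ r p)
    (hγ0 : γ ≠ 0) (t : ℝ) :
    unitPart r p γ * (t / |(γ : ℝ)| * ∏ i, t / ‖(γ : ℚ_[p i])‖) = t ^ (r + 1) := by
  have habs : |(γ : ℝ)| ≠ 0 := abs_ne_zero.2 (Rat.cast_ne_zero.2 hγ0)
  have hnorm : ∏ i, ‖(γ : ℚ_[p i])‖ ≠ 0 :=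
    Finset.prod_ne_zero_iff.2 fun i _ => norm_ne_zero_iff.2 (Rat.cast_ne_zero.2 hγ0)
  rw [unitPart_eq_abs_mul_prod_norm hinj hγ hγ0, Finset.prod_div_distrib, Finset.prod_const,
    Finset.card_univ, Fintype.card_fin]
  field_simp
  ring

lemma two_le_cast (i : Fin r) : (2 : ℝ) ≤ p i :=
  Nat.ofNat_le_cast.2 (hp i).out.two_le

lemma pow_le_decay_exponents (hinj : Function.Injective p) (hγ : γ ∈ PinvZ r p) (hγ0 : γ ≠ 0)
    (hψ0 : 0 ≤ ψ γ) (hψ : ψ γ ≤ 1 / (2 * LP r p γ)) :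
    ψ γ ^ (r + 1) ≤ decay (exponents p γ) := by
  obtain ⟨hreal, hpadic⟩ := le_abs_div_of_le_LP hinj hγ hγ0 hψ
  have hn : (1 : ℝ) ≤ unitPart r p γ :=
    Nat.one_le_cast.2 (Nat.one_le_iff_ne_zero.2 (unitPart_ne_zero hinj hγ hγ0))
  have hleReal : ψ γ ≤ ∏ i, (p i : ℝ) ^ (-(-exponents p γ) i) := by
    refine hreal.trans ((div_le_iff₀ (by positivity)).2 ?_)
    rw [abs_eq_unitPart_mul hinj hγ hγ0, mul_comm]
    simp only [Pi.neg_apply, neg_neg]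
    gcongr
    linarith
  have hlePadic (i) : ψ γ ≤ (p i : ℝ) ^ (-exponents p γ) i := by
    refine (hpadic i).trans ((div_le_self (norm_nonneg _) (by linarith)).trans_eq ?_)
    exact norm_eq_zpow_exponents hγ0 i
  have hsplit : ψ γ ^ (r + 1) = ψ γ * ∏ _i : Fin r, ψ γ := by
    rw [Finset.prod_const, Finset.card_univ, Fintype.card_fin, pow_succ']
  have hone : ψ γ ≤ 1 := by
    refine (pow_le_one_iff_of_nonneg hψ0 r.succ_ne_zero).1 ?_
    calc ψ γ ^ (r + 1) = ψ γ * ∏ _i : Fin r, ψ γ := hsplit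
      _ ≤ (∏ i, (p i : ℝ) ^ (-(-exponents p γ) i)) * ∏ i, (p i : ℝ) ^ (-exponents p γ) i := by
        gcongr
        exact hlePadic _
      _ = 1 := by
        rw [← Finset.prod_mul_distrib]
        refine Finset.prod_eq_one fun i _ => ?_
        rw [← zpow_add₀ (zero_lt_two.trans_le (two_le_cast i)).ne', neg_add_cancel, zpow_zero]
  calc ψ γ ^ (r + 1) = ψ γ * ∏ _i : Fin r, ψ γ := hsplit
    _ ≤ min 1 (∏ i, (p i : ℝ) ^ (-(-exponents p γ) i)) *
        ∏ i, min 1 ((p i : ℝ) ^ (-exponents p γ) i) := by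
      gcongr with i
      · exact le_min hone hleReal
      · exact le_min hone (hlePadic i)
    _ ≤ decay (-exponents p γ) := min_prod_mul_prod_min_le_decay two_le_cast _
    _ = decay (exponents p γ) := decay_neg _

lemma min_div_div {t a b : ℝ} (ht : 0 ≤ t) (ha : 0 < a) :
    min (t / a) (t / b) = t / a * min 1 (a / b) := by
  rw [mul_min_of_nonneg _ _ (by positivity), mul_one, div_mul_div_cancel₀ ha.ne']

lemma abs_div_abs_eq (hinj : Function.Injective p) (hγ : γ ∈ PinvZ r p) (hγ0 : γ ≠ 0)
    (hγ' : γ' ∈ PinvZ r p) (hγ0' : γ' ≠ 0) (hn : unitPart r p γ = unitPart r p γ') :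
    |(γ : ℝ)| / |(γ' : ℝ)| = ∏ i, (p i : ℝ) ^ (exponents p γ i - exponents p γ' i) := by
  rw [abs_eq_unitPart_mul hinj hγ hγ0, abs_eq_unitPart_mul hinj hγ' hγ0', hn,
    mul_div_mul_left _ _ (Nat.cast_ne_zero.2 (unitPart_ne_zero hinj hγ' hγ0')),
    ← Finset.prod_div_distrib]
  simp only [zpow_sub₀ (zero_lt_two.trans_le (two_le_cast _)).ne']

lemma norm_div_norm_eq (hγ0 : γ ≠ 0) (hγ0' : γ' ≠ 0) (i : Fin r) :
    ‖(γ : ℚ_[p i])‖ / ‖(γ' : ℚ_[p i])‖ = (p i : ℝ) ^ (exponents p γ' i - exponents p γ i) := by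
  rw [norm_eq_zpow_exponents hγ0, norm_eq_zpow_exponents hγ0',
    ← zpow_sub₀ (zero_lt_two.trans_le (two_le_cast i)).ne', neg_sub_neg]

lemma unitPart_mul_min_radius_le (hinj : Function.Injective p) (hγ : γ ∈ PinvZ r p) (hγ0 : γ ≠ 0)
    (hγ' : γ' ∈ PinvZ r p) (hγ0' : γ' ≠ 0) (hn : unitPart r p γ = unitPart r p γ')
    (hψ0 : 0 ≤ ψ γ) (hψ0' : 0 ≤ ψ γ') :
    unitPart r p γ * (min (ψ γ / |(γ : ℝ)|) (ψ γ' / |(γ' : ℝ)|) *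
      ∏ i, min (ψ γ / ‖(γ : ℚ_[p i])‖) (ψ γ' / ‖(γ' : ℚ_[p i])‖)) ≤
      (ψ γ ^ (r + 1) + ψ γ' ^ (r + 1)) * decay (exponents p γ' - exponents p γ) := by
  set M := max (ψ γ) (ψ γ')
  have hM0 : 0 ≤ M := le_max_of_le_left hψ0
  have habs {δ : ℚ} (hδ : δ ≠ 0) : 0 < |(δ : ℝ)| := abs_pos.2 (Rat.cast_ne_zero.2 hδ)
  have hnorm {δ : ℚ} (hδ : δ ≠ 0) (i) : 0 < ‖(δ : ℚ_[p i])‖ :=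
    norm_pos_iff.2 (Rat.cast_ne_zero.2 hδ)
  calc _ ≤ unitPart r p γ * (min (M / |(γ : ℝ)|) (M / |(γ' : ℝ)|) *
        ∏ i, min (M / ‖(γ : ℚ_[p i])‖) (M / ‖(γ' : ℚ_[p i])‖)) := by
        gcongr <;> first | exact le_max_left _ _ | exact le_max_right _ _
    _ = M ^ (r + 1) * (min 1 (∏ i, (p i : ℝ) ^ (-(exponents p γ' - exponents p γ) i)) *
        ∏ i, min 1 ((p i : ℝ) ^ (exponents p γ' - exponents p γ) i)) := by
        simp only [min_div_div hM0 (habs hγ0), min_div_div hM0 (hnorm hγ0 _),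
          abs_div_abs_eq hinj hγ hγ0 hγ' hγ0' hn, norm_div_norm_eq hγ0 hγ0',
          Finset.prod_mul_distrib, Pi.sub_apply, neg_sub]
        rw [← unitPart_mul_radius_mul_prod hinj hγ hγ0 M]
        ring
    _ ≤ M ^ (r + 1) * decay (exponents p γ' - exponents p γ) := by
        gcongr
        exact min_prod_mul_prod_min_le_decay two_le_cast _
    _ ≤ _ := by
        gcongr
        · exact decay_nonneg _
        · rcases max_choice (ψ γ) (ψ γ') with h | h
          · exact (congrArg (· ^ (r + 1)) h).trans_le (le_add_of_nonneg_right (pow_nonneg hψ0' _))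
          · exact (congrArg (· ^ (r + 1)) h).trans_le (le_add_of_nonneg_left (pow_nonneg hψ0 _))

end ApproxSet

section GoodSequence

variable {r : ℕ} {p : Fin r → ℕ}

lemma unitPart_zero : unitPart r p 0 = 0 := by
  simp [unitPart]

variable [hp : ∀ i, Fact (p i).Prime] {ψ : ℚ → ℝ} {c : ℝ} {q : ℕ} {γ : ℕ → ℚ}

/-- A sequence of denominators along which the divergence hypothesis still holds, the overlaps of
the sets `approxSet p ψ (γ k)` can be estimated, and the zero-one law for multiplication by the
prime `q` applies. The elements are distinct up to sign. -/
structure IsGoodSequence (p : Fin r → ℕ) [∀ i, Fact (p i).Prime] (ψ : ℚ → ℝ) (c : ℝ) (q : ℕ)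
    (γ : ℕ → ℚ) : Prop where
  mem_PinvZ : ∀ k, γ k ∈ PinvZ r p
  abs_injective : Function.Injective fun k => |γ k|
  pos : ∀ k, 0 < ψ (γ k)
  le_LP : ∀ k, ψ (γ k) ≤ 1 / (2 * LP r p (γ k))
  two_le : ∀ k, 2 ≤ unitPart r p (γ k)
  le_totient : ∀ k, c * unitPart r p (γ k) ≤ (unitPart r p (γ k)).totient
  not_dvd : ∀ k, ¬ q ∣ unitPart r p (γ k)
  tendsto_unitPart : Tendsto (fun k => unitPart r p (γ k)) atTop atTop
  not_summable : ¬ Summable fun k => ψ (γ k) ^ (r + 1)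

namespace IsGoodSequence

lemma ne_zero (h : IsGoodSequence p ψ c q γ) (k : ℕ) : γ k ≠ 0 := by
  intro h0
  have := h.two_le k
  rw [h0, unitPart_zero] at this
  omega

lemma isAdmissible (h : IsGoodSequence p ψ c q γ) (hinj : Function.Injective p) (k : ℕ) :
    IsAdmissible p (unitPart r p (γ k)) (ψ (γ k) / |(γ k : ℝ)|)
      fun i => ψ (γ k) / ‖(γ k : ℚ_[p i])‖ :=
  isAdmissible_approxSet hinj (h.mem_PinvZ k) (h.ne_zero k) (h.two_le k) (h.pos k) (h.le_LP k)

lemma unitPart_exponents_injective (h : IsGoodSequence p ψ c q γ) (hinj : Function.Injective p) :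
    Function.Injective fun k => (unitPart r p (γ k), exponents p (γ k)) := by
  intro k l hkl
  obtain ⟨hn, hν⟩ := Prod.mk.inj hkl
  exact h.abs_injective (abs_eq_of_exponents_eq hinj (h.mem_PinvZ k) (h.ne_zero k)
    (h.mem_PinvZ l) (h.ne_zero l) hn hν)

lemma le_measureReal_approxSet (h : IsGoodSequence p ψ c q γ) (hinj : Function.Injective p)
    (k : ℕ) : 2 * c / (∏ i, (p i : ℝ)) * ψ (γ k) ^ (r + 1) ≤
      ((lamP r p).restrict (ZP r p)).real (approxSet p ψ (γ k)) := by
  have hadm := h.isAdmissible hinj k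
  rw [measureReal_restrict_apply measurableSet_approxSet, inter_comm, Measure.real,
    ← ENNReal.ofReal_le_iff_le_toReal (measure_ne_top_of_subset inter_subset_left
      (lamP_ZP.trans_ne ENNReal.one_ne_top))]
  refine (ENNReal.ofReal_le_ofReal ?_).trans hadm.le_lamP_ZP_inter_approxUnion
  rw [← unitPart_mul_radius_mul_prod hinj (h.mem_PinvZ k) (h.ne_zero k)]
  set δ := ψ (γ k) / |(γ k : ℝ)|
  set η := ∏ i, ψ (γ k) / ‖(γ k : ℚ_[p i])‖
  have hη : 0 ≤ η := Finset.prod_nonneg fun i _ => (hadm.padicRadius_pos i).le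
  have hδ : 0 ≤ δ := hadm.radius_pos.le
  calc 2 * c / (∏ i, (p i : ℝ)) * (unitPart r p (γ k) * (δ * η)) =
        (c * unitPart r p (γ k)) * ((2 * δ * η) / ∏ i, (p i : ℝ)) := by ring
    _ ≤ _ := by
        gcongr
        exact h.le_totient k

lemma measureReal_inter_le (h : IsGoodSequence p ψ c q γ) (hinj : Function.Injective p)
    (k l : ℕ) :
    ((lamP r p).restrict (ZP r p)).real (approxSet p ψ (γ k) ∩ approxSet p ψ (γ l)) ≤
      8 * (ψ (γ k) ^ (r + 1) * ψ (γ l) ^ (r + 1)) +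
        2 * if unitPart r p (γ k) = unitPart r p (γ l) then
          (ψ (γ k) ^ (r + 1) + ψ (γ l) ^ (r + 1)) * decay (exponents p (γ l) - exponents p (γ k))
        else 0 := by
  have hk := h.pos k
  have hl := h.pos l
  have hdecay := decay_nonneg (exponents p (γ l) - exponents p (γ k))
  have hle := (h.isAdmissible hinj k).lamP_inter_le hinj (h.isAdmissible hinj l)
  rw [unitPart_mul_radius_mul_prod hinj (h.mem_PinvZ k) (h.ne_zero k),
    unitPart_mul_radius_mul_prod hinj (h.mem_PinvZ l) (h.ne_zero l)] at hle
  rw [measureReal_restrict_apply (measurableSet_approxSet.inter measurableSet_approxSet),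
    inter_comm, inter_inter_distrib_left]
  refine ENNReal.toReal_le_of_le_ofReal (by positivity) (hle.trans (ENNReal.ofReal_le_ofReal ?_))
  rw [add_le_add_iff_left]
  split_ifs with hn
  · exact mul_le_mul_of_nonneg_left (unitPart_mul_min_radius_le hinj (h.mem_PinvZ k) (h.ne_zero k)
      (h.mem_PinvZ l) (h.ne_zero l) hn hk.le hl.le) zero_le_two
  · rw [mul_zero]

lemma lamP_ZP_inter_limsup_ne_zero (h : IsGoodSequence p ψ c q γ) (hinj : Function.Injective p)
    (hc : 0 < c) : lamP r p (ZP r p ∩ limsup (fun k => approxSet p ψ (γ k)) atTop) ≠ 0 := by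
  have : IsFiniteMeasure ((lamP r p).restrict (ZP r p)) :=
    ⟨by rw [Measure.restrict_apply_univ, lamP_ZP]; exact ENNReal.one_lt_top⟩
  have hmeas (k) : MeasurableSet (approxSet p ψ (γ k)) := measurableSet_approxSet
  have hw (k) : 0 ≤ ψ (γ k) ^ (r + 1) := pow_nonneg (h.pos k).le _
  have hP : 0 < ∏ i, (p i : ℝ) := Finset.prod_pos fun i _ => Nat.cast_pos.2 (hp i).out.pos
  set S := ∑' d : Fin r → ℤ, decay d
  have hS : 0 ≤ S := tsum_nonneg decay_nonneg
  rw [inter_comm, ← Measure.restrict_apply (MeasurableSet.measurableSet_limsup hmeas)]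
  refine measure_limsup_ne_zero (C := 8 + 4 * S) _ hmeas hw h.not_summable
    (div_pos (mul_pos two_pos hc) hP) (by positivity) (h.le_measureReal_approxSet hinj) fun F => ?_
  set W := ∑ k ∈ F, ψ (γ k) ^ (r + 1)
  have hW0 : 0 ≤ W := Finset.sum_nonneg fun k _ => hw k
  have hdiag := sum_sum_mul_decay_le (h.unitPart_exponents_injective hinj) hw F
  calc _ ≤ ∑ k ∈ F, ∑ l ∈ F, (8 * (ψ (γ k) ^ (r + 1) * ψ (γ l) ^ (r + 1)) +
        2 * if unitPart r p (γ k) = unitPart r p (γ l) then (ψ (γ k) ^ (r + 1) +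
          ψ (γ l) ^ (r + 1)) * decay (exponents p (γ l) - exponents p (γ k)) else 0) :=
        Finset.sum_le_sum fun k _ => Finset.sum_le_sum fun l _ => h.measureReal_inter_le hinj k l
    _ ≤ 8 * W ^ 2 + 2 * (2 * S * W) := by
        simp only [Finset.sum_add_distrib, ← Finset.mul_sum]
        rw [← Finset.sum_mul, ← sq]
        gcongr
    _ ≤ (8 + 4 * S) * (W ^ 2 + W) := by nlinarith [mul_nonneg hS (sq_nonneg W)]

lemma tendsto_radius (h : IsGoodSequence p ψ c q γ) (hinj : Function.Injective p) :
    Tendsto (fun k => ψ (γ k) / |(γ k : ℝ)|) atTop (𝓝 0) := by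
  have hlim : Tendsto (fun k => 1 / (2 * (unitPart r p (γ k) : ℝ))) atTop (𝓝 0) :=
    ((tendsto_natCast_atTop_atTop.comp h.tendsto_unitPart).const_mul_atTop
      two_pos).const_div_atTop 1
  exact squeeze_zero (fun k => (h.isAdmissible hinj k).radius_pos.le)
    (fun k => (h.isAdmissible hinj k).radius_le) hlim

lemma ZP_inter_limsup_subset_Apsi (h : IsGoodSequence p ψ c q γ) (hinj : Function.Injective p) :
    ZP r p ∩ limsup (fun k => approxSet p ψ (γ k)) atTop ⊆ Apsi r p ψ := by
  rintro x ⟨hx, hlim⟩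
  refine ⟨hx, fun hfin => ?_⟩
  have hinf : {k | x ∈ approxSet p ψ (γ k)}.Infinite :=
    Nat.frequently_atTop_iff_infinite.1 (mem_limsup_iff_frequently_mem.1 hlim)
  refine (hinf.image fun k _ l _ hkl => h.abs_injective (congrArg abs hkl))
    ((hfin.image Prod.snd).subset ?_)
  rintro _ ⟨k, hk, rfl⟩
  obtain ⟨β, hβγ, hlt⟩ := exists_coprimePair_of_mem_approxSet hinj (h.mem_PinvZ k) (h.ne_zero k)
    (h.two_le k) (h.pos k) hk
  obtain ⟨m, _, μ, _, hβ, -⟩ := id hβγ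
  exact ⟨(β, γ k), ⟨⟨m, μ, hβ⟩, h.mem_PinvZ k, hβγ, hlt⟩, rfl⟩

theorem one_le_lamP_Apsi (h : IsGoodSequence p ψ c q γ) (hinj : Function.Injective p)
    (hc : 0 < c) (hq : q.Prime) (hqp : ∀ i, q ≠ p i) : 1 ≤ lamP r p (Apsi r p ψ) :=
  calc 1 = lamP r p (ZP r p ∩ limsup (fun k => approxSet p ψ (γ k)) atTop) :=
        (lamP_ZP_inter_approxLimsup_eq_one hinj (h.tendsto_radius hinj) hq hqp h.not_dvd
          (h.lamP_ZP_inter_limsup_ne_zero hinj hc)).symm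
    _ ≤ _ := measure_mono (h.ZP_inter_limsup_subset_Apsi hinj)

end IsGoodSequence

end GoodSequence

section Divergence

variable {α : Type*} {S T : Set α}

lemma tsum_ofReal_le_add {a w : α → ℝ} {c : ℝ} (hc : 0 ≤ c) (hw : ∀ x, 0 ≤ w x)
    (haw : ∀ x, a x ≤ w x) (hTS : T ⊆ S) :
    ∑' x : T, ENNReal.ofReal (a x) ≤
      (∑' x : {x ∈ S | c * w x ≤ a x ∧ 0 < a x}, ENNReal.ofReal (w x)) +
        ENNReal.ofReal c * ∑' x : T, ENNReal.ofReal (w x) := by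
  rw [tsum_subtype T fun x => ENNReal.ofReal (a x), tsum_subtype T fun x => ENNReal.ofReal (w x),
    tsum_subtype {x ∈ S | c * w x ≤ a x ∧ 0 < a x} fun x => ENNReal.ofReal (w x),
    ← ENNReal.tsum_mul_left, ← ENNReal.tsum_add]
  refine ENNReal.tsum_le_tsum fun x => indicator_apply_le' (fun hx => ?_) fun _ => zero_le
  by_cases hxS : c * w x ≤ a x ∧ 0 < a x
  · rw [indicator_of_mem (show x ∈ {x ∈ S | c * w x ≤ a x ∧ 0 < a x} from ⟨hTS hx, hxS⟩)]
    exact le_add_right (ENNReal.ofReal_le_ofReal (haw x))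
  · rw [indicator_of_mem hx, ← ENNReal.ofReal_mul hc]
    refine le_add_left (ENNReal.ofReal_le_ofReal (not_lt.1 fun hlt => hxS ⟨hlt.le, ?_⟩))
    exact (mul_nonneg hc (hw x)).trans_lt hlt

lemma tsum_ofReal_le_two_mul {a w : α → ℝ} {c : ℝ} (hc : 0 ≤ c) (ha : ∀ x, 0 ≤ a x)
    (haw : ∀ x, a x ≤ w x) (hTS : T ⊆ S) (hlt : 2 * c < (∑' x : T, a x) / ∑' x : T, w x) :
    ∑' x : T, ENNReal.ofReal (a x) ≤
      2 * ∑' x : {x ∈ S | c * w x ≤ a x ∧ 0 < a x}, ENNReal.ofReal (w x) := by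
  have hw (x) : 0 ≤ w x := (ha x).trans (haw x)
  have hle := tsum_ofReal_le_add hc hw haw hTS
  have hquot : (∑' x : T, a x) / ∑' x : T, w x ≠ 0 := by linarith
  obtain ⟨ha0, hw0⟩ := div_ne_zero_iff.1 hquot
  have hwpos : 0 < ∑' x : T, w x := (tsum_nonneg fun x : T => hw x).lt_of_ne' hw0
  have hhalf : ENNReal.ofReal c * ENNReal.ofReal (∑' x : T, w x) ≤
      ENNReal.ofReal (∑' x : T, a x) / 2 := by
    rw [← ENNReal.ofReal_mul hc, ← ENNReal.ofReal_ofNat 2, ← ENNReal.ofReal_div_of_pos two_pos]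
    refine ENNReal.ofReal_le_ofReal ?_
    linarith [(lt_div_iff₀ hwpos).1 hlt]
  have hsummable {f : α → ℝ} (hf : ∑' x : T, f x ≠ 0) : Summable fun x : T => f x :=
    by_contra fun h => hf (tsum_eq_zero_of_not_summable h)
  rw [← ENNReal.ofReal_tsum_of_nonneg (fun x : T => ha x) (hsummable ha0)] at hle ⊢
  rw [← ENNReal.ofReal_tsum_of_nonneg (fun x : T => hw x) (hsummable hw0)] at hle
  have hhalf_le := tsub_le_iff_right.2 (hle.trans (add_le_add_right hhalf _))
  rw [ENNReal.sub_half ENNReal.ofReal_ne_top] at hhalf_le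
  rwa [mul_comm, ← ENNReal.div_le_iff two_ne_zero ENNReal.ofNat_ne_top]

lemma tsum_le_of_frequently {lv : α → ℝ} {W : α → ℝ≥0∞} {B : ℝ≥0∞}
    (h : ∃ᶠ N : ℕ in atTop, ∑' x : {x | x ∈ S ∧ lv x ≤ N}, W x ≤ B) : ∑' x : S, W x ≤ B := by
  rw [tsum_subtype S W]
  refine ENNReal.summable.tsum_le_of_sum_le fun s => ?_
  obtain ⟨M, hM⟩ := (s.finite_toSet.image lv).bddAbove
  obtain ⟨N, hN, hMN⟩ := (h.and_eventually (eventually_ge_atTop ⌈M⌉₊)).exists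
  have hlv {x} (hx : x ∈ s) : lv x ≤ N :=
    (hM (mem_image_of_mem lv hx)).trans (Nat.ceil_le.1 hMN)
  rw [tsum_subtype {x | x ∈ S ∧ lv x ≤ N} W] at hN
  calc ∑ x ∈ s, S.indicator W x ≤ ∑ x ∈ s, {x | x ∈ S ∧ lv x ≤ N}.indicator W x :=
        Finset.sum_le_sum fun x hx => indicator_apply_le' (fun hxS =>
          (indicator_of_mem (show x ∈ {x | x ∈ S ∧ lv x ≤ N} from ⟨hxS, hlv hx⟩) W).ge)
          fun _ => zero_le
    _ ≤ ∑' x, {x | x ∈ S ∧ lv x ≤ N}.indicator W x := ENNReal.sum_le_tsum s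
    _ ≤ B := hN

lemma exists_tsum_ofReal_eq_top {a w lv : α → ℝ} (ha : ∀ x, 0 ≤ a x) (haw : ∀ x, a x ≤ w x)
    (hdiv : ∑' x : S, ENNReal.ofReal (a x) = ⊤)
    (hlimsup : 0 < limsup (fun N : ℕ => (∑' x : {x // x ∈ S ∧ lv x ≤ N}, a x) /
      ∑' x : {x // x ∈ S ∧ lv x ≤ N}, w x) atTop) :
    ∃ c > 0, ∑' x : {x ∈ S | c * w x ≤ a x ∧ 0 < a x}, ENNReal.ofReal (w x) = ⊤ := by
  have hw (x) : 0 ≤ w x := (ha x).trans (haw x)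
  obtain ⟨L, hL0, hL⟩ := exists_between hlimsup
  have hfreq := frequently_lt_of_lt_limsup (isCoboundedUnder_le_of_le atTop (x := 0) fun N =>
    div_nonneg (tsum_nonneg fun x => ha _) (tsum_nonneg fun x => hw _)) hL
  refine ⟨L / 2, half_pos hL0, ?_⟩
  have hle := tsum_le_of_frequently (W := fun x => ENNReal.ofReal (a x)) (hfreq.mono fun N hN =>
    tsum_ofReal_le_two_mul (T := {x | x ∈ S ∧ lv x ≤ N}) (half_pos hL0).le ha haw
      (fun x hx => hx.1) (by rwa [mul_div_cancel₀ L two_ne_zero]))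
  rw [hdiv, top_le_iff] at hle
  by_contra hne
  exact ENNReal.mul_ne_top ENNReal.ofNat_ne_top hne hle

lemma exists_tsum_eq_top_of_subset_biUnion {ι : Type*} {W : α → ℝ≥0∞} {Q : Finset ι}
    {T : ι → Set α} (hS : S ⊆ ⋃ i ∈ Q, T i) (htop : ∑' x : S, W x = ⊤) :
    ∃ i ∈ Q, ∑' x : T i, W x = ⊤ := by
  by_contra! hne
  refine ENNReal.sum_ne_top.2 hne (top_le_iff.1 ?_)
  calc ⊤ = ∑' x : S, W x := htop.symm
    _ ≤ ∑' x : ⋃ i ∈ Q, T i, W x := ENNReal.tsum_mono_subtype W hS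
    _ ≤ _ := ENNReal.tsum_biUnion_le W Q T

lemma exists_finset_tsum_sdiff_le {W : α → ℝ≥0∞} (hS : ∑' x : S, W x ≠ ⊤) {ε : ℝ≥0∞}
    (hε : 0 < ε) : ∃ s : Finset α, ∑' x : ↑(S \ s), W x ≤ ε := by
  rw [tsum_subtype S W] at hS
  obtain ⟨s, hs⟩ := ((ENNReal.tendsto_tsum_compl_atTop_zero hS).eventually (gt_mem_nhds hε)).exists
  refine ⟨s, le_of_eq_of_le ?_ hs.le⟩
  rw [tsum_subtype (S \ s) W, sdiff_eq, inter_comm, ← indicator_indicator]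
  exact (tsum_subtype (s : Set α)ᶜ (S.indicator W)).symm

-- Keep finitely many elements of the fibre over `n`, discarding only a mass of `2⁻ⁿ`.
lemma exists_subset_tsum_eq_top_of_fibers {W : α → ℝ≥0∞} (htop : ∑' x : S, W x = ⊤) {u : α → ℕ}
    (hfib : ∀ n, ∑' x : {x ∈ S | u x = n}, W x ≠ ⊤) (m : ℕ) :
    ∃ J ⊆ {x ∈ S | m ≤ u x}, ∑' x : J, W x = ⊤ ∧ ∀ n, {x ∈ J | u x = n}.Finite := by
  have hpos (n : ℕ) : (0 : ℝ≥0∞) < 2⁻¹ ^ n := ENNReal.pow_pos (by simp) n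
  choose s hs using fun n => exists_finset_tsum_sdiff_le (hfib n) (hpos n)
  set J := {x ∈ S | m ≤ u x ∧ x ∈ s (u x)}
  refine ⟨J, fun x hx => ⟨hx.1, hx.2.1⟩, ?_, fun n => (s n).finite_toSet.subset ?_⟩
  · have hcover : S ⊆ (J ∪ ⋃ n ∈ Finset.range m, {x ∈ S | u x = n}) ∪
        ⋃ n, {x ∈ S | u x = n} \ s n := by
      intro x hx
      by_cases hxs : x ∈ s (u x)
      · rcases le_or_gt m (u x) with hm | hm
        · exact Or.inl (Or.inl ⟨hx, hm, hxs⟩)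
        · exact Or.inl (Or.inr (mem_biUnion (Finset.mem_range.2 hm) ⟨hx, rfl⟩))
      · exact Or.inr (mem_iUnion.2 ⟨u x, ⟨hx, rfl⟩, hxs⟩)
    by_contra hJ
    have hgeom : ∑' n : ℕ, (2⁻¹ : ℝ≥0∞) ^ n ≠ ⊤ := by
      simp [ENNReal.tsum_geometric]
    refine ENNReal.add_ne_top.2 ⟨ENNReal.add_ne_top.2
      ⟨hJ, ENNReal.sum_ne_top.2 fun n (_ : n ∈ Finset.range m) => hfib n⟩, hgeom⟩ (top_le_iff.1 ?_)
    calc ⊤ = ∑' x : S, W x := htop.symm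
      _ ≤ _ := ENNReal.tsum_mono_subtype W hcover
      _ ≤ _ := ENNReal.tsum_union_le W _ _
      _ ≤ _ := by
        gcongr
        · refine (ENNReal.tsum_union_le W _ _).trans ?_
          gcongr
          exact ENNReal.tsum_biUnion_le W _ _
        · exact (ENNReal.tsum_iUnion_le_tsum W _).trans (ENNReal.tsum_le_tsum hs)
  · rintro x ⟨hx, rfl⟩
    exact hx.2.2

lemma nonempty_nat_equiv_of_tsum_eq_top [Countable α] {W : α → ℝ≥0∞} (hW : ∀ x, W x ≠ ⊤)
    (htop : ∑' x : S, W x = ⊤) : Nonempty (ℕ ≃ S) := by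
  have : Infinite S := by
    by_contra hfin
    rw [not_infinite_iff_finite] at hfin
    have := Fintype.ofFinite S
    rw [tsum_fintype] at htop
    exact ENNReal.sum_ne_top.2 (fun (x : S) _ => hW x) htop
  exact nonempty_equiv_of_countable

end Divergence

section Totient

lemma exists_finset_primes_lt_sum_inv (s : Finset ℕ) (M : ℝ) :
    ∃ Q : Finset ℕ, (∀ q ∈ Q, q.Prime ∧ q ∉ s) ∧ M < ∑ q ∈ Q, (q : ℝ)⁻¹ := by
  have hdiv := not_summable_one_div_on_primes
  rw [not_summable_iff_tendsto_nat_atTop_of_nonneg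
    fun n => indicator_nonneg (fun _ _ => by positivity) n] at hdiv
  obtain ⟨N, hN⟩ := (hdiv.eventually_gt_atTop (M + ∑ q ∈ s, (q : ℝ)⁻¹)).exists
  refine ⟨{q ∈ Finset.range N | q.Prime} \ s, fun q hq => ?_, ?_⟩
  · simp only [Finset.mem_sdiff, Finset.mem_filter] at hq
    exact ⟨hq.1.2, hq.2⟩
  · have hsum : ∑ n ∈ Finset.range N, {q : ℕ | q.Prime}.indicator (fun n => 1 / (n : ℝ)) n =
        ∑ q ∈ Finset.range N with q.Prime, (q : ℝ)⁻¹ := by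
      simp only [Finset.sum_filter, indicator_apply, mem_ofPred_eq, one_div]
    have hsplit := Finset.sum_le_sum_of_subset_of_nonneg (f := fun q : ℕ => (q : ℝ)⁻¹)
      (Finset.subset_union_left (s₁ := {q ∈ Finset.range N | q.Prime}) (s₂ := s))
      fun q _ _ => by positivity
    rw [← Finset.sdiff_union_self_eq_union, Finset.sum_union Finset.sdiff_disjoint] at hsplit
    linarith

lemma totient_le_mul_exp_neg_sum_inv {n : ℕ} {Q : Finset ℕ} (hQ : Q ⊆ n.primeFactors) :
    (n.totient : ℝ) ≤ n * Real.exp (-∑ q ∈ Q, (q : ℝ)⁻¹) := by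
  have htotient : (n.totient : ℝ) = n * ∏ q ∈ n.primeFactors, (1 - (q : ℝ)⁻¹) := by
    simpa using congrArg (Rat.cast (K := ℝ)) (Nat.totient_eq_mul_prod_factors n)
  have hnonneg (q) (_ : q ∈ n.primeFactors) : 0 ≤ 1 - (q : ℝ)⁻¹ :=
    sub_nonneg.2 (Nat.cast_inv_le_one q)
  rw [htotient, ← Finset.sum_neg_distrib, Real.exp_sum]
  gcongr
  calc ∏ q ∈ n.primeFactors, (1 - (q : ℝ)⁻¹) ≤ ∏ q ∈ Q, (1 - (q : ℝ)⁻¹) :=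
        Finset.prod_le_prod_of_subset_of_le_one hQ hnonneg fun q _ _ =>
          sub_le_self 1 (by positivity)
    _ ≤ ∏ q ∈ Q, Real.exp (-(q : ℝ)⁻¹) :=
        Finset.prod_le_prod (fun q hq => hnonneg q (hQ hq)) fun q _ => Real.one_sub_le_exp_neg _

-- If every prime of `Q` divides `n`, then `φ(n) / n` is at most `exp (-∑ q ∈ Q, 1 / q)`.
lemma exists_finset_primes_not_dvd {c : ℝ} (hc : 0 < c) (s : Finset ℕ) :
    ∃ Q : Finset ℕ, (∀ q ∈ Q, q.Prime ∧ q ∉ s) ∧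
      ∀ n : ℕ, n ≠ 0 → c * n ≤ n.totient → ∃ q ∈ Q, ¬ q ∣ n := by
  obtain ⟨Q, hQ, hlt⟩ := exists_finset_primes_lt_sum_inv s (-Real.log c)
  refine ⟨Q, hQ, fun n hn hcn => ?_⟩
  by_contra! hdvd
  have hle := totient_le_mul_exp_neg_sum_inv fun q hq =>
    Nat.mem_primeFactors.2 ⟨(hQ q hq).1, hdvd q hq, hn⟩
  have hexp : Real.exp (-∑ q ∈ Q, (q : ℝ)⁻¹) < c := (Real.lt_log_iff_exp_lt hc).1 (by linarith)
  have hn0 : (0 : ℝ) < n := Nat.cast_pos.2 (Nat.pos_of_ne_zero hn)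
  nlinarith

end Totient

section Selection

variable {r : ℕ} {p : Fin r → ℕ} {ψ : ℚ → ℝ} {γ : ℚ} {c : ℝ} {q : ℕ} {J : Set ℚ}

lemma dsWeight_nonneg (hψ : 0 ≤ ψ γ) : 0 ≤ dsWeight r p ψ γ := by
  unfold dsWeight
  positivity

lemma dsWeight_le (hψ : 0 ≤ ψ γ) : dsWeight r p ψ γ ≤ ψ γ ^ (r + 1) := by
  refine div_le_of_le_mul₀ (Nat.cast_nonneg _) (pow_nonneg hψ _) ?_
  rw [mul_comm]
  gcongr
  exact Nat.totient_le _

lemma unitPart_ne_zero_of_dsWeight_pos (h : 0 < dsWeight r p ψ γ) : unitPart r p γ ≠ 0 := by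
  rintro h0
  simp [dsWeight, h0] at h

lemma ne_zero_of_dsWeight_pos (h : 0 < dsWeight r p ψ γ) : γ ≠ 0 := by
  rintro rfl
  exact unitPart_ne_zero_of_dsWeight_pos h unitPart_zero

lemma pos_of_dsWeight_pos (hψ : 0 ≤ ψ γ) (h : 0 < dsWeight r p ψ γ) : 0 < ψ γ :=
  hψ.lt_of_ne' fun h0 => h.not_ge (by simpa [h0] using dsWeight_le (r := r) (p := p) hψ)

lemma mul_unitPart_le_totient (hψ : 0 ≤ ψ γ) (h : 0 < dsWeight r p ψ γ)
    (hc : c * ψ γ ^ (r + 1) ≤ dsWeight r p ψ γ) :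
    c * unitPart r p γ ≤ (unitPart r p γ).totient := by
  have hn : (0 : ℝ) < unitPart r p γ :=
    Nat.cast_pos.2 (Nat.pos_of_ne_zero (unitPart_ne_zero_of_dsWeight_pos h))
  rw [dsWeight, le_div_iff₀ hn, mul_right_comm] at hc
  exact le_of_mul_le_mul_right hc (pow_pos (pos_of_dsWeight_pos hψ h) _)

lemma exists_injOn_abs_not_dvd_tsum_eq_top {S : Set ℚ} {W : ℚ → ℝ≥0∞} (hc : 0 < c)
    (hS : ∀ γ ∈ S, unitPart r p γ ≠ 0 ∧ c * unitPart r p γ ≤ (unitPart r p γ).totient)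
    (htop : ∑' γ : S, W γ = ⊤) :
    ∃ q : ℕ, q.Prime ∧ (∀ i, q ≠ p i) ∧ ∃ J ⊆ S, InjOn abs J ∧
      (∀ γ ∈ J, ¬ q ∣ unitPart r p γ) ∧ ∑' γ : J, W γ = ⊤ := by
  obtain ⟨Q, hQ, hQn⟩ := exists_finset_primes_not_dvd hc (Finset.univ.image p)
  have hcover : S ⊆ ⋃ t ∈ Q ×ˢ (Finset.univ : Finset SignType),
      {γ ∈ S | ¬ t.1 ∣ unitPart r p γ ∧ SignType.sign γ = t.2} := by
    intro γ hγ
    obtain ⟨q, hq, hqn⟩ := hQn _ (hS γ hγ).1 (hS γ hγ).2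
    exact mem_biUnion (Finset.mk_mem_product hq (Finset.mem_univ (SignType.sign γ)))
      ⟨hγ, hqn, rfl⟩
  obtain ⟨⟨q, σ⟩, hqσ, htopJ⟩ := exists_tsum_eq_top_of_subset_biUnion hcover htop
  obtain ⟨hq, hqp⟩ := hQ q (Finset.mem_product.1 hqσ).1
  refine ⟨q, hq, fun i hi => hqp (hi ▸ Finset.mem_image_of_mem p (Finset.mem_univ i)), _,
    fun γ hγ => hγ.1, fun γ hγ γ' hγ' habs => ?_, fun γ hγ => hγ.2.1, htopJ⟩
  rw [← sign_mul_abs γ, ← sign_mul_abs γ', habs, hγ.2.2, hγ'.2.2]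

variable [hp : ∀ i, Fact (p i).Prime]

lemma tsum_fiber_unitPart_ne_top (hinj : Function.Injective p) (hψ0 : ∀ γ ∈ J, 0 ≤ ψ γ)
    (hψL : ∀ γ ∈ J, ψ γ ≤ 1 / (2 * LP r p γ)) (hJ : J ⊆ PinvZ r p) (hJ0 : ∀ γ ∈ J, γ ≠ 0)
    (habs : InjOn abs J) (n : ℕ) :
    ∑' γ : {γ ∈ J | unitPart r p γ = n}, ENNReal.ofReal (ψ γ ^ (r + 1)) ≠ ⊤ := by
  have hinjective : Function.Injective
      fun γ : {γ ∈ J | unitPart r p γ = n} => exponents p (γ : ℚ) := by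
    rintro ⟨γ, hγ, hn⟩ ⟨γ', hγ', hn'⟩ hν
    exact Subtype.ext (habs hγ hγ' (abs_eq_of_exponents_eq hinj (hJ hγ) (hJ0 γ hγ) (hJ hγ')
      (hJ0 γ' hγ') (hn.trans hn'.symm) hν))
  refine ne_top_of_le_ne_top (summable_decay (ι := Fin r)).tsum_ofReal_ne_top ?_
  calc ∑' γ : {γ ∈ J | unitPart r p γ = n}, ENNReal.ofReal (ψ γ ^ (r + 1)) ≤
        ∑' γ : {γ ∈ J | unitPart r p γ = n}, ENNReal.ofReal (decay (exponents p (γ : ℚ))) :=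
        ENNReal.tsum_le_tsum fun γ => ENNReal.ofReal_le_ofReal <|
          pow_le_decay_exponents hinj (hJ γ.2.1) (hJ0 γ γ.2.1) (hψ0 γ γ.2.1) (hψL γ γ.2.1)
    _ ≤ ∑' d, ENNReal.ofReal (decay d) :=
        ENNReal.tsum_comp_le_tsum_of_injective hinjective fun d => ENNReal.ofReal (decay d)

lemma exists_isGoodSequence_of_tsum_eq_top (hJ : J ⊆ PinvZ r p) (habs : InjOn abs J)
    (hψ : ∀ γ ∈ J, 0 < ψ γ) (hψL : ∀ γ ∈ J, ψ γ ≤ 1 / (2 * LP r p γ))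
    (htwo : ∀ γ ∈ J, 2 ≤ unitPart r p γ)
    (hφ : ∀ γ ∈ J, c * unitPart r p γ ≤ (unitPart r p γ).totient)
    (hq : ∀ γ ∈ J, ¬ q ∣ unitPart r p γ) (hfin : ∀ n, {γ ∈ J | unitPart r p γ = n}.Finite)
    (htop : ∑' γ : J, ENNReal.ofReal (ψ γ ^ (r + 1)) = ⊤) :
    ∃ γ, IsGoodSequence p ψ c q γ := by
  obtain ⟨e⟩ := nonempty_nat_equiv_of_tsum_eq_top
    (W := fun γ => ENNReal.ofReal (ψ γ ^ (r + 1))) (fun _ => ENNReal.ofReal_ne_top) htop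
  have hinj : Function.Injective fun k => (e k : ℚ) := Subtype.val_injective.comp e.injective
  refine ⟨fun k => e k, fun k => hJ (e k).2, ?_, fun k => hψ _ (e k).2, fun k => hψL _ (e k).2,
    fun k => htwo _ (e k).2, fun k => hφ _ (e k).2, fun k => hq _ (e k).2, ?_, fun hsum => ?_⟩
  · exact fun k l hkl => hinj (habs (e k).2 (e l).2 hkl)
  · rw [← Nat.cofinite_eq_atTop]
    refine Tendsto.cofinite_of_finite_preimage_singleton fun n => ?_
    exact ((hfin n).preimage hinj.injOn).subset fun k hk => ⟨(e k).2, hk⟩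
  · refine hsum.tsum_ofReal_ne_top ?_
    rw [e.tsum_eq fun γ : J => ENNReal.ofReal (ψ γ ^ (r + 1)), htop]

theorem exists_isGoodSequence (hinj : Function.Injective p) (hψ0 : ∀ γ, 0 ≤ ψ γ)
    (hψL : ∀ γ, ψ γ ≤ 1 / (2 * LP r p γ))
    (hdiv : ∑' γ : PinvZ r p, ENNReal.ofReal (dsWeight r p ψ γ) = ⊤)
    (hlimsup : 0 < limsup (fun N : ℕ =>
      (∑' γ : {γ : ℚ // γ ∈ PinvZ r p ∧ lev r p γ ≤ N}, dsWeight r p ψ γ) /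
        ∑' γ : {γ : ℚ // γ ∈ PinvZ r p ∧ lev r p γ ≤ N}, ψ γ ^ (r + 1)) atTop) :
    ∃ c > 0, ∃ q : ℕ, q.Prime ∧ (∀ i, q ≠ p i) ∧ ∃ γ, IsGoodSequence p ψ c q γ := by
  obtain ⟨c, hc, htop⟩ := exists_tsum_ofReal_eq_top (fun γ => dsWeight_nonneg (hψ0 γ))
    (fun γ => dsWeight_le (hψ0 γ)) hdiv hlimsup
  obtain ⟨q, hq, hqp, S, hS, habs, hqS, htopS⟩ := exists_injOn_abs_not_dvd_tsum_eq_top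
    (W := fun γ => ENNReal.ofReal (ψ γ ^ (r + 1))) hc
    (fun γ hγ => ⟨unitPart_ne_zero_of_dsWeight_pos hγ.2.2,
      mul_unitPart_le_totient (hψ0 γ) hγ.2.2 hγ.2.1⟩) htop
  obtain ⟨J, hJ, htopJ, hfin⟩ := exists_subset_tsum_eq_top_of_fibers
    (W := fun γ => ENNReal.ofReal (ψ γ ^ (r + 1))) htopS
    (tsum_fiber_unitPart_ne_top hinj (fun γ _ => hψ0 γ) (fun γ _ => hψL γ)
      (fun γ hγ => (hS hγ).1) (fun γ hγ => ne_zero_of_dsWeight_pos (hS hγ).2.2) habs) 2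
  have hJS : J ⊆ S := fun γ hγ => (hJ hγ).1
  exact ⟨c, hc, q, hq, hqp, exists_isGoodSequence_of_tsum_eq_top (fun γ hγ => (hS (hJS hγ)).1)
    (habs.mono hJS) (fun γ hγ => pos_of_dsWeight_pos (hψ0 γ) (hS (hJS hγ)).2.2)
    (fun γ _ => hψL γ) (fun γ hγ => (hJ hγ).2)
    (fun γ hγ => mul_unitPart_le_totient (hψ0 γ) (hS (hJS hγ)).2.2 (hS (hJS hγ)).2.1)
    (fun γ hγ => hqS γ (hJS hγ)) hfin htopJ⟩

end Selection

end DuffinSchaeffer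

/-- **The diagonal Duffin–Schaeffer theorem.** If `ψ : P⁻¹ℤ → ℝ_{≥0}` satisfies
`ψ(γ) ≤ 1/(2L(γ))`, the series `Σ_γ φ(n)ψ(γ)^{r+1}/n` diverges, and
`limsup_N (Σ_{ℓ(γ)≤N} φ(n)ψ(γ)^{r+1}/n) / (Σ_{ℓ(γ)≤N} ψ(γ)^{r+1}) > 0`,
then `λ(𝒜(ψ)) = 1`. -/
theorem diagonal_duffin_schaeffer (r : ℕ) (p : Fin r → ℕ)
    [∀ i, Fact (p i).Prime] (hinj : Function.Injective p)
    (ψ : ℚ → ℝ) (hψ0 : ∀ γ, 0 ≤ ψ γ) (hψL : ∀ γ, ψ γ ≤ 1 / (2 * LP r p γ))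
    (hdiv : ∑' γ : (PinvZ r p), ENNReal.ofReal (dsWeight r p ψ γ) = ⊤)
    (hlimsup : 0 < Filter.limsup (fun N : ℕ =>
        (∑' γ : {q : ℚ // q ∈ PinvZ r p ∧ lev r p q ≤ (N : ℝ)}, dsWeight r p ψ γ) /
        (∑' γ : {q : ℚ // q ∈ PinvZ r p ∧ lev r p q ≤ (N : ℝ)}, ψ γ ^ (r + 1)))
      Filter.atTop) :
    lamP r p (Apsi r p ψ) = 1 := by
  obtain ⟨c, hc, q, hq, hqp, γ, hγ⟩ :=
    DuffinSchaeffer.exists_isGoodSequence hinj hψ0 hψL hdiv hlimsup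
  refine le_antisymm ?_ (hγ.one_le_lamP_Apsi hinj hc hq hqp)
  calc lamP r p (Apsi r p ψ) ≤ lamP r p (ZP r p) := measure_mono fun x hx => hx.1
    _ = 1 := DuffinSchaeffer.lamP_ZP
end
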